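/- arXiv:1607.05595 — 5 statements merged into one kernel-verified Lean document; each statement's English description precedes it below -/
import Mathlib

section
/- Let q be a prime and a an integer coprime to q. Then (1/φ(q)) Σ*_{χ mod q} L(0,χ)·L(0, conj χ)·χ(a mod q) = s(a/q), and also (1/π²)·(q/φ(q)) Σ*_{χ mod q, χ(−1)=−1} |L(1,χ)|²·χ(a mod q) = s(a/q), where Σ* runs over the primitive (equivalently, nontrivial) Dirichlet characters modulo q. -/
open Complex Real Finset

open scoped Classical in
/-- The sawtooth function `((x))`. -/
noncomputable def sawtooth (x : ℝ) : ℝ :=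
  if ∃ n : ℤ, x = (n : ℝ) then 0 else x - ⌊x⌋ - 1/2

/-- The Dedekind sum `s(h/k)`. -/
noncomputable def dedekindSum (h : ℤ) (k : ℕ) : ℝ :=
  ∑ m ∈ Finset.Icc 1 (k-1), sawtooth ((m : ℝ) * h / k) * sawtooth ((m : ℝ) / k)

/-!
For `0 < x < 1`, the function `sinh ((1/2 - x) t) / (2 sinh (t/2))` has Mellin transform
`Γ(s) ζ_odd(x, s)`, where `ζ_odd(x, ·)` is the odd Hurwitz zeta function. The residue of the
Mellin transform at `s = 0` is the limit of the kernel at `t = 0`, and that of `Γ` is `1`, so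
`ζ_odd(x, 0) = 1/2 - x = -((x))`. Summing over residue classes, `L(0, χ) = -∑ χ(j) ((j/q))`, and
orthogonality of characters turns the twisted second moment of `L(0, χ)` into a Dedekind sum. Even
`χ` contribute nothing, since `L(0, χ) = 0`. For odd primitive `χ` the root number has absolute
value `1`, so the functional equation gives `|L(1, χ)|² = (π² / q) |L(0, χ)|²` and the second
formula follows from the first.
-/

section HurwitzAtZero

open Asymptotics Filter MeasureTheory Set Topology HurwitzZeta

theorem exists_differentiableOn_mellin_eq_add_div {f : ℝ → ℂ} {c : ℂ} {a b : ℝ}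
    (ha : 0 < a) (hb : 0 < b) (hf : LocallyIntegrableOn f (Ioi 0))
    (hf_top : f =O[atTop] fun t ↦ Real.exp (-a * t))
    (hf_bot : (fun t ↦ f t - c) =O[𝓝[>] 0] fun t ↦ t ^ b) :
    ∃ M : ℂ → ℂ, DifferentiableOn ℂ M {s | -b < s.re} ∧
      ∀ s : ℂ, 0 < s.re → mellin f s = M s + c / s := by
  -- Subtracting `c` on `(0, 1]` leaves a function that is `O(t ^ b)` at `0`; the indicator of
  -- `(0, 1]` accounts for the pole, since its Mellin transform is `1 / s`.
  set u : ℝ → ℂ := indicator (Ioc 0 1) fun _ ↦ 1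
  set g : ℝ → ℂ := fun t ↦ f t - c * u t
  have hu : LocallyIntegrableOn u (Ioi 0) :=
    ((integrable_indicator_iff measurableSet_Ioc).2
      (integrableOn_const (by simp))).locallyIntegrable.locallyIntegrableOn _
  have hg : LocallyIntegrableOn g (Ioi 0) := hf.sub (hu.smul c)
  have hg_top : g =O[atTop] fun t ↦ Real.exp (-a * t) := by
    refine hf_top.congr' ?_ .rfl
    filter_upwards [eventually_gt_atTop 1] with t ht
    simp [g, u, ht.not_ge]
  have hg_bot : g =O[𝓝[>] 0] fun t ↦ t ^ (-(-b)) := by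
    rw [neg_neg]
    refine hf_bot.congr' ?_ .rfl
    filter_upwards [Ioc_mem_nhdsGT one_pos] with t ht
    simp [g, u, ht.1, ht.2]
  refine ⟨mellin g, fun s hs ↦ (mellin_differentiableAt_of_isBigO_rpow_exp ha hg hg_top hg_bot
    hs).differentiableWithinAt, fun s hs ↦ ?_⟩
  have hg_conv := mellinConvergent_of_isBigO_rpow_exp ha hg hg_top hg_bot
    ((neg_lt_zero.2 hb).trans hs)
  obtain ⟨hu_conv, hu_mellin⟩ := hasMellin_one_Ioc hs
  have hcu := hasMellin_const_smul hu_conv c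
  calc mellin f s = mellin (fun t ↦ g t + c • u t) s := by simp [g]
    _ = mellin g s + c / s := by
      rw [(hasMellin_add hg_conv hcu.1).2, hcu.2, hu_mellin, smul_eq_mul, mul_one_div]

theorem apply_zero_eq_of_mellin_eq_Gamma_mul {f : ℝ → ℂ} {L : ℂ → ℂ} {c : ℂ} {a b σ : ℝ}
    (ha : 0 < a) (hb : 0 < b) (hf : LocallyIntegrableOn f (Ioi 0))
    (hf_top : f =O[atTop] fun t ↦ Real.exp (-a * t))
    (hf_bot : (fun t ↦ f t - c) =O[𝓝[>] 0] fun t ↦ t ^ b)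
    (hL : DifferentiableOn ℂ L {s | -b < s.re})
    (hfL : ∀ s : ℂ, σ < s.re → mellin f s = Complex.Gamma s * L s) : L 0 = c := by
  obtain ⟨M, hM, hfM⟩ := exists_differentiableOn_mellin_eq_add_div ha hb hf hf_top hf_bot
  let U : Set ℂ := {s | -b < s.re}
  have hU : IsOpen U := isOpen_lt continuous_const continuous_re
  let G : ℂ → ℂ := fun s ↦ M s * (Complex.Gamma s)⁻¹ + c * (Complex.Gamma (s + 1))⁻¹
  have hG : DifferentiableOn ℂ G U := by
    have hΓ := differentiable_one_div_Gamma
    have hΓ' : Differentiable ℂ fun s ↦ (Complex.Gamma (s + 1))⁻¹ :=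
      hΓ.comp (differentiable_id.add_const 1)
    exact (hM.mul hΓ.differentiableOn).add (hΓ'.const_mul c).differentiableOn
  have hLG {s : ℂ} (hσ : σ < s.re) (hs : 0 < s.re) : L s = G s := by
    have hs₀ : s ≠ 0 := by rintro rfl; simp at hs
    have hΓ := Complex.Gamma_ne_zero_of_re_pos hs
    have h := (hfL s hσ).symm.trans (hfM s hs)
    simp only [G, Complex.Gamma_add_one s hs₀]
    field_simp at h ⊢
    linear_combination h
  let z : ℂ := (max σ 0 + 1 : ℝ)
  have hz : max σ 0 < z.re := by simp [z]
  have hLG_near : L =ᶠ[𝓝 z] G := by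
    filter_upwards [(isOpen_lt continuous_const continuous_re).mem_nhds hz] with s hs
    exact hLG ((le_max_left ..).trans_lt hs) ((le_max_right ..).trans_lt hs)
  have hzU : z ∈ U := (neg_lt_zero.2 hb).trans ((le_max_right ..).trans_lt hz)
  have h0 := (hL.analyticOnNhd hU).eqOn_of_preconnected_of_eventuallyEq (hG.analyticOnNhd hU)
    (convex_halfSpace_re_gt (-b)).isPreconnected hzU hLG_near (show (0 : ℂ) ∈ U by simpa [U])
  simpa [G] using h0

theorem isBigO_div_sub_deriv_div_deriv {𝕜 : Type*} [NontriviallyNormedField 𝕜]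
    {u v : 𝕜 → 𝕜} {x : 𝕜} (hu : AnalyticAt 𝕜 u x) (hv : AnalyticAt 𝕜 v x)
    (hux : u x = 0) (hvx : v x = 0) (hv' : deriv v x ≠ 0) :
    (fun t ↦ u t / v t - deriv u x / deriv v x) =O[𝓝[≠] x] fun t ↦ t - x := by
  have hdslope {w : 𝕜 → 𝕜} (hw : AnalyticAt 𝕜 w x) : DifferentiableAt 𝕜 (dslope w x) x :=
    let ⟨_, hp⟩ := hw
    hp.has_fpower_series_dslope_fslope.differentiableAt
  have hquot := ((hdslope hu).div (hdslope hv) (by simpa using hv')).isBigO_sub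
  refine (hquot.mono nhdsWithin_le_nhds).congr' ?_ .rfl
  filter_upwards [self_mem_nhdsWithin] with t ht
  have htx : t - x ≠ 0 := sub_ne_zero.2 ht
  simp only [Pi.div_apply, dslope_same, dslope_of_ne _ ht, slope_def_field, hux, hvx, sub_zero]
  rw [div_div_div_cancel_right₀ htx]

/-- The kernel `sinh (α t) / (2 sinh (t / 2))`, whose Mellin transform at `α = 1 / 2 - x` with
`0 < x < 1` is `Γ(s)` times the odd Hurwitz zeta function of `x`. At `t = 0`, where it extends
continuously by `α`, division by zero gives it the value `0`. -/
noncomputable def sinhRatio (α t : ℝ) : ℝ := Real.sinh (α * t) / (2 * Real.sinh (t / 2))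

lemma continuousOn_sinhRatio (α : ℝ) : ContinuousOn (sinhRatio α) (Ioi 0) := by
  unfold sinhRatio
  refine ContinuousOn.div (by fun_prop) (by fun_prop) fun t ht ↦ ?_
  have := Real.sinh_pos_iff.2 (half_pos (mem_Ioi.1 ht))
  positivity

lemma isBigO_sinhRatio_sub (α : ℝ) : (fun t ↦ sinhRatio α t - α) =O[𝓝[>] 0] fun t ↦ t := by
  have hu : HasDerivAt (fun t ↦ Real.sinh (α * t)) α 0 := by
    simpa using ((hasDerivAt_id (0 : ℝ)).const_mul α).sinh
  have hv : HasDerivAt (fun t ↦ 2 * Real.sinh (t / 2)) 1 0 := by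
    simpa using (((hasDerivAt_id (0 : ℝ)).div_const 2).sinh).const_mul 2
  have h := isBigO_div_sub_deriv_div_deriv (u := fun t ↦ Real.sinh (α * t)) (by fun_prop)
    (by fun_prop) (by simp) (by simp) (hv.deriv.trans_ne one_ne_zero)
  rw [hu.deriv, hv.deriv, div_one] at h
  simpa only [sinhRatio, sub_zero] using h.mono (nhdsGT_le_nhdsNE 0)

lemma sinhRatio_eq_exp (α t : ℝ) :
    sinhRatio α t =
      (Real.exp (-(1 / 2 - α) * t) - Real.exp (-(1 / 2 + α) * t)) / 2 * (1 - Real.exp (-t))⁻¹ := by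
  have h₁ : Real.exp (-(1 / 2 - α) * t) = Real.exp (α * t) * Real.exp (-(t / 2)) := by
    rw [← Real.exp_add]; ring_nf
  have h₂ : Real.exp (-(1 / 2 + α) * t) = Real.exp (-(α * t)) * Real.exp (-(t / 2)) := by
    rw [← Real.exp_add]; ring_nf
  have h₃ : 1 - Real.exp (-t) = (Real.exp (t / 2) - Real.exp (-(t / 2))) * Real.exp (-(t / 2)) := by
    rw [sub_mul, ← Real.exp_add, ← Real.exp_add, add_neg_cancel, Real.exp_zero]; ring_nf
  rw [sinhRatio, h₁, h₂, h₃, Real.sinh_eq, Real.sinh_eq, ← sub_mul, mul_div_right_comm, mul_inv]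
  field_simp

lemma isBigO_sinhRatio_atTop (α : ℝ) :
    sinhRatio α =O[atTop] fun t ↦ Real.exp (-(1 / 2 - |α|) * t) := by
  have hexp {β : ℝ} (hβ : β ≤ |α|) :
      (fun t ↦ Real.exp (-(1 / 2 - β) * t)) =O[atTop] fun t ↦ Real.exp (-(1 / 2 - |α|) * t) := by
    refine .of_norm_eventuallyLE ?_
    filter_upwards [eventually_ge_atTop 0] with t ht
    rw [Real.norm_of_nonneg (Real.exp_nonneg _)]
    gcongr
  have hgeom : (fun t ↦ (1 - Real.exp (-t))⁻¹) =O[atTop] fun _ ↦ (1 : ℝ) := by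
    refine Tendsto.isBigO_one ℝ (c := (1 - 0 : ℝ)⁻¹) ?_
    exact (tendsto_exp_neg_atTop_nhds_zero.const_sub 1).inv₀ (by norm_num)
  have hneg := hexp (neg_le_abs α)
  rw [sub_neg_eq_add] at hneg
  refine ((((hexp (le_abs_self α)).sub hneg).const_mul_left 2⁻¹).mul hgeom).congr (fun t ↦ ?_)
    fun t ↦ mul_one _
  rw [sinhRatio_eq_exp]; ring

lemma hasSum_sign_mul_exp_neg_abs {x t : ℝ} (hx : x ∈ Set.Ioo 0 1) (ht : 0 < t) :
    HasSum (fun n : ℤ ↦ (SignType.sign (n + x) : ℝ) / 2 * Real.exp (-|n + x| * t))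
      (sinhRatio (1 / 2 - x) t) := by
  have hgeom := hasSum_geometric_of_lt_one (Real.exp_nonneg (-t))
    (Real.exp_lt_one_iff.2 (neg_lt_zero.2 ht))
  have hpow (y : ℝ) (n : ℕ) : Real.exp (-(n + y) * t) = Real.exp (-y * t) * Real.exp (-t) ^ n := by
    rw [← Real.exp_nat_mul, ← Real.exp_add]; ring_nf
  let f : ℤ → ℝ := fun n ↦ (SignType.sign (n + x) : ℝ) / 2 * Real.exp (-|n + x| * t)
  have hnonneg : HasSum (fun n : ℕ ↦ f n) (Real.exp (-x * t) / 2 * (1 - Real.exp (-t))⁻¹) := by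
    refine (hgeom.mul_left _).congr_fun fun n ↦ ?_
    have hn : 0 < (n : ℝ) + x := by linarith [hx.1, n.cast_nonneg (α := ℝ)]
    simp only [f, Int.cast_natCast, sign_pos hn, abs_of_pos hn, hpow, SignType.coe_one]
    ring
  have hneg : HasSum (fun n : ℕ ↦ f (-(n + 1)))
      (-Real.exp (-(1 - x) * t) / 2 * (1 - Real.exp (-t))⁻¹) := by
    refine (hgeom.mul_left _).congr_fun fun n ↦ ?_
    have hn : ((-(n + 1) : ℤ) : ℝ) + x = -(n + (1 - x)) := by push_cast; ring
    have hpos : 0 < (n : ℝ) + (1 - x) := by linarith [hx.2, n.cast_nonneg (α := ℝ)]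
    simp only [f, hn, Left.sign_neg, sign_pos hpos, abs_neg, abs_of_pos hpos, hpow,
      SignType.coe_neg, SignType.coe_one]
    ring
  convert hnonneg.of_nat_of_neg_add_one hneg using 1
  rw [sinhRatio_eq_exp]
  ring_nf

lemma mellin_sinhRatio {x : ℝ} (hx : x ∈ Set.Ioo 0 1) {s : ℂ} (hs : 1 < s.re) :
    mellin (fun t ↦ (sinhRatio (1 / 2 - x) t : ℂ)) s = Complex.Gamma s * hurwitzZetaOdd x s := by
  have hne (n : ℤ) : (n : ℝ) + x ≠ 0 := fun h ↦ by
    have h₁ : (-1 : ℝ) < n := by linarith [hx.2]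
    have h₂ : (n : ℝ) < 0 := by linarith [hx.1]
    norm_cast at h₁ h₂
    lia
  have hodd := hasSum_int_hurwitzZetaOdd x hs
  refine (hasSum_mellin (a := fun n : ℤ ↦ (SignType.sign (n + x) : ℂ) / 2) (p := fun n ↦ |n + x|)
    (fun n ↦ .inr (abs_pos.2 (hne n))) (by linarith) (fun t ht ↦ ?_) ?_).unique
    ((hodd.mul_left (Complex.Gamma s)).congr_fun fun n ↦ ?_)
  · have h := Complex.hasSum_ofReal.2 (hasSum_sign_mul_exp_neg_abs hx ht)
    convert h using 2 with n
    have hsign (σ : SignType) : ((σ : ℝ) : ℂ) = σ := SignType.map_cast Complex.ofRealHom σ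
    rw [← hsign]
    push_cast
    rfl
  · refine hodd.summable.norm.congr fun n ↦ ?_
    rw [norm_div, norm_div, norm_div, norm_cpow_eq_rpow_re_of_pos (abs_pos.2 (hne n)),
      div_right_comm]
  · ring

lemma hurwitzZetaOdd_zero_of_mem_Ioo {x : ℝ} (hx : x ∈ Set.Ioo 0 1) :
    hurwitzZetaOdd x 0 = ((1 / 2 - x : ℝ) : ℂ) := by
  have hα : |1 / 2 - x| < 1 / 2 := abs_lt.2 ⟨by linarith [hx.2], by linarith [hx.1]⟩
  refine apply_zero_eq_of_mellin_eq_Gamma_mul (sub_pos.2 hα) one_pos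
    (f := fun t ↦ (sinhRatio (1 / 2 - x) t : ℂ))
    ((Complex.continuous_ofReal.comp_continuousOn (continuousOn_sinhRatio _)).locallyIntegrableOn
      measurableSet_Ioi) ?_ ?_
    (differentiable_hurwitzZetaOdd x).differentiableOn fun s ↦ mellin_sinhRatio hx
  · exact Complex.isBigO_ofReal_left.2 (isBigO_sinhRatio_atTop _)
  · simpa only [Real.rpow_one, Complex.ofReal_sub] using
      Complex.isBigO_ofReal_left.2 (isBigO_sinhRatio_sub (1 / 2 - x))

lemma sawtooth_intCast (n : ℤ) : sawtooth n = 0 := by simp [sawtooth]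

lemma sawtooth_of_forall_ne {x : ℝ} (hx : ∀ n : ℤ, x ≠ n) : sawtooth x = Int.fract x - 1 / 2 := by
  rw [sawtooth, if_neg (not_exists.2 hx), Int.fract]

theorem hurwitzZetaOdd_zero (x : ℝ) : hurwitzZetaOdd x 0 = -(sawtooth x : ℂ) := by
  by_cases hx : ∃ n : ℤ, x = n
  · obtain ⟨n, rfl⟩ := hx
    have hodd : hurwitzZetaOdd 0 0 = 0 := self_eq_neg.1 (by simpa using hurwitzZetaOdd_neg 0 0)
    have hn : ((n : ℝ) : UnitAddCircle) = 0 := AddCircle.coe_eq_zero_iff 1 |>.2 ⟨n, by simp⟩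
    rw [hn, hodd, sawtooth_intCast, Complex.ofReal_zero, neg_zero]
  · have hx' : ∀ n : ℤ, x ≠ n := not_exists.1 hx
    have hfract : Int.fract x ∈ Set.Ioo 0 1 :=
      ⟨Int.fract_pos.2 (hx' _), Int.fract_lt_one x⟩
    rw [← AddCircle.coe_fract, hurwitzZetaOdd_zero_of_mem_Ioo hfract, sawtooth_of_forall_ne hx']
    push_cast
    ring

end HurwitzAtZero

section ResidueSawtooth

open HurwitzZeta

lemma sawtooth_fract (x : ℝ) : sawtooth (Int.fract x) = sawtooth x := by
  by_cases hx : ∃ n : ℤ, x = n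
  · obtain ⟨n, rfl⟩ := hx
    rw [Int.fract_intCast, ← Int.cast_zero, sawtooth_intCast, sawtooth_intCast]
  · have hfract : ∀ n : ℤ, Int.fract x ≠ n := fun n hn ↦
      hx ⟨⌊x⌋ + n, by rw [Int.cast_add, ← hn, Int.floor_add_fract]⟩
    rw [sawtooth_of_forall_ne hfract, sawtooth_of_forall_ne (not_exists.1 hx), Int.fract_fract]

variable {N : ℕ}

/-- The sawtooth `((j/N))` as a function of the residue class `j` modulo `N`, encoded through the
representative `j.val`. At `N = 0` division by zero makes it identically `0`. -/
noncomputable def residueSawtooth (j : ZMod N) : ℝ := sawtooth (j.val / N)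

lemma residueSawtooth_zero : residueSawtooth (0 : ZMod N) = 0 := by
  simpa [residueSawtooth] using sawtooth_intCast 0

variable [NeZero N]

lemma residueSawtooth_intCast (m : ℤ) : residueSawtooth (m : ZMod N) = sawtooth (m / N) := by
  rw [residueSawtooth, ← Int.cast_natCast (ZMod.val _), ZMod.val_intCast, ← sawtooth_fract (m / N),
    Int.fract_div_intCast_eq_div_intCast_mod]

lemma residueSawtooth_natCast (m : ℕ) : residueSawtooth (m : ZMod N) = sawtooth (m / N) := by
  simpa using residueSawtooth_intCast (N := N) m

theorem dedekindSum_eq_sum_residueSawtooth (a : ℤ) :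
    dedekindSum a N = ∑ j : ZMod N, residueSawtooth j * residueSawtooth ((a : ZMod N) * j) := by
  let f (j : ZMod N) : ℝ := residueSawtooth j * residueSawtooth ((a : ZMod N) * j)
  have hsub : Icc 1 (N - 1) ⊆ range N := fun m hm ↦ by
    have := NeZero.pos N
    simp only [mem_Icc, Finset.mem_range] at hm ⊢
    lia
  calc dedekindSum a N = ∑ m ∈ Icc 1 (N - 1), f (m : ℕ) := by
        refine sum_congr rfl fun m _ ↦ ?_
        have h := residueSawtooth_intCast (N := N) (a * m)
        push_cast at h
        simp only [f, h, residueSawtooth_natCast, mul_comm (a : ℝ), mul_comm (sawtooth (m / N))]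
    _ = ∑ m ∈ range N, f (m : ℕ) := by
        refine sum_subset hsub fun m hm hm' ↦ ?_
        obtain rfl : m = 0 := by
          simp only [mem_Icc, Finset.mem_range] at hm hm'
          lia
        simp [f, residueSawtooth_zero]
    _ = ∑ j : ZMod N, f j :=
        sum_bij' (fun m _ ↦ (m : ZMod N)) (fun j _ ↦ j.val) (by simp) (by simp [ZMod.val_lt])
          (fun m hm ↦ ZMod.val_cast_of_lt (Finset.mem_range.1 hm)) (by simp) (by simp)

theorem zmodLFunction_zero (Φ : ZMod N → ℂ) :
    ZMod.LFunction Φ 0 = -(∑ j, Φ j * residueSawtooth j) - Φ 0 / 2 := by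
  have hhurwitz (j : ZMod N) : hurwitzZeta (ZMod.toAddCircle j) 0 =
      (if j = 0 then -1 / 2 else 0) - residueSawtooth j := by
    simp only [hurwitzZeta, hurwitzZetaEven_apply_zero, ZMod.toAddCircle_eq_zero]
    rw [ZMod.toAddCircle_apply, hurwitzZetaOdd_zero, residueSawtooth, sub_eq_add_neg]
  simp only [ZMod.LFunction, neg_zero, cpow_zero, one_mul, hhurwitz, mul_sub, sum_sub_distrib,
    mul_ite, mul_zero, sum_ite_eq', mem_univ, if_true]
  ring

end ResidueSawtooth

section DirichletCharacters

open DirichletCharacter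

variable {N : ℕ}

lemma ne_one_of_odd {R : Type*} [CommRing R] [NeZero (2 : R)] {χ : DirichletCharacter R N}
    (hodd : χ.Odd) : χ ≠ 1 := by
  rintro rfl
  exact hodd.not_even 1 (MulChar.one_apply isUnit_one.neg)

lemma isPrimitive_of_prime_of_ne_one {R : Type*} [CommMonoidWithZero R] {p : ℕ} (hp : p.Prime)
    {χ : DirichletCharacter R p} (hχ : χ ≠ 1) : χ.IsPrimitive :=
  have : NeZero p := ⟨hp.ne_zero⟩
  ((Nat.dvd_prime hp).1 χ.conductor_dvd_level).resolve_left (mt eq_one_iff_conductor_eq_one.2 hχ)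

lemma level_ne_one_of_odd {R : Type*} [CommRing R] [NeZero (2 : R)] {χ : DirichletCharacter R N}
    (hodd : χ.Odd) : N ≠ 1 := by
  rintro rfl
  exact ne_one_of_odd hodd χ.level_one

variable [NeZero N]

section Orthogonality

variable {R : Type*} [CommRing R] [IsDomain R]
  [HasEnoughRootsOfUnity R (Monoid.exponent (ZMod N)ˣ)]

lemma sum_dirichletCharacter_inv_apply_mul_apply {n : ZMod N} (hn : IsUnit n) (m : ZMod N) :
    ∑ χ : DirichletCharacter R N, χ⁻¹ n * χ m = if n = m then (N.totient : R) else 0 := by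
  have hinv (χ : DirichletCharacter R N) : χ⁻¹ n = χ n⁻¹ := by
    obtain ⟨u, rfl⟩ := hn
    rw [MulChar.inv_apply, Ring.inverse_unit, ZMod.inv_coe_unit]
  simp_rw [hinv, sum_char_inv_mul_char_eq R hn]

theorem sum_dirichletCharacter_sum_mul_sum_inv_mul_apply (f : ZMod N → R) {g : ZMod N → R}
    (hg : ∀ n, ¬IsUnit n → g n = 0) (a : ZMod N) :
    ∑ χ : DirichletCharacter R N, (∑ m, χ m * f m) * (∑ n, χ⁻¹ n * g n) * χ a =
      N.totient * ∑ m, f m * g (a * m) := by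
  have horth (m n : ZMod N) : ∑ χ : DirichletCharacter R N, χ⁻¹ n * χ (a * m) * (f m * g n) =
      if n = a * m then N.totient * (f m * g n) else 0 := by
    by_cases hn : IsUnit n
    · rw [← sum_mul, sum_dirichletCharacter_inv_apply_mul_apply hn, ite_mul, zero_mul]
    · simp [hg n hn]
  calc ∑ χ : DirichletCharacter R N, (∑ m, χ m * f m) * (∑ n, χ⁻¹ n * g n) * χ a
      = ∑ χ : DirichletCharacter R N, ∑ m, ∑ n, χ⁻¹ n * χ (a * m) * (f m * g n) := by
        refine sum_congr rfl fun χ _ ↦ ?_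
        rw [sum_mul_sum]
        simp only [sum_mul, map_mul]
        exact sum_congr rfl fun m _ ↦ sum_congr rfl fun n _ ↦ by ring
    _ = ∑ m, ∑ n, ∑ χ : DirichletCharacter R N, χ⁻¹ n * χ (a * m) * (f m * g n) := by
        rw [sum_comm]
        exact sum_congr rfl fun m _ ↦ sum_comm
    _ = N.totient * ∑ m, f m * g (a * m) := by
        simp only [horth, sum_ite_eq', mem_univ, if_true, mul_sum]

end Orthogonality

theorem LFunction_zero_eq_neg_sum (hN : N ≠ 1) (χ : DirichletCharacter ℂ N) :
    χ.LFunction 0 = -∑ j, χ j * residueSawtooth j := by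
  rw [DirichletCharacter.LFunction, zmodLFunction_zero, χ.map_zero' hN, zero_div, sub_zero]

theorem LFunction_zero_inv (hN : N ≠ 1) (χ : DirichletCharacter ℂ N) :
    χ⁻¹.LFunction 0 = starRingEnd ℂ (χ.LFunction 0) := by
  simp_rw [LFunction_zero_eq_neg_sum hN, map_neg, map_sum, map_mul, conj_ofReal, starRingEnd_apply,
    MulChar.star_apply']

lemma LFunction_zero_of_even (hN : N ≠ 1) {χ : DirichletCharacter ℂ N} (hχ : χ.Even) :
    χ.LFunction 0 = 0 := by
  rw [DirichletCharacter.LFunction, ZMod.LFunction_apply_zero_of_even hχ.to_fun, χ.map_zero' hN,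
    neg_zero, zero_div]

theorem sum_LFunction_zero_mul_LFunction_inv_zero_mul (hN : N.Prime) (a : ℤ) :
    ∑ χ : DirichletCharacter ℂ N, χ.LFunction 0 * χ⁻¹.LFunction 0 * χ a =
      N.totient * dedekindSum a N := by
  have : Fact N.Prime := ⟨hN⟩
  have hunit (n : ZMod N) (hn : ¬IsUnit n) : (residueSawtooth n : ℂ) = 0 := by
    obtain rfl : n = 0 := by simpa using hn
    rw [residueSawtooth_zero, ofReal_zero]
  simp_rw [LFunction_zero_eq_neg_sum hN.ne_one, neg_mul_neg,
    sum_dirichletCharacter_sum_mul_sum_inv_mul_apply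
      (fun n : ZMod N ↦ (residueSawtooth n : ℂ)) hunit,
    dedekindSum_eq_sum_residueSawtooth]
  push_cast
  rfl

theorem gaussSum_mul_gaussSum_inv_of_isPrimitive {R : Type*} [CommRing R] [IsDomain R]
    {χ : DirichletCharacter R N} (hχ : χ.IsPrimitive) {ψ : AddChar (ZMod N) R}
    (hψ : ψ.IsPrimitive) : gaussSum χ ψ * gaussSum χ⁻¹ ψ⁻¹ = N :=
  calc gaussSum χ ψ * gaussSum χ⁻¹ ψ⁻¹ = ∑ a, gaussSum χ (ψ.mulShift a) * ψ⁻¹ a := by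
        rw [mul_comm, gaussSum, sum_mul]
        refine sum_congr rfl fun a _ ↦ ?_
        rw [gaussSum_mulShift_of_isPrimitive ψ hχ, mul_right_comm]
    _ = ∑ b, χ b * ∑ a, ψ (a * (b - 1)) := by
        simp_rw [gaussSum, sum_mul, mul_sum]
        rw [sum_comm]
        refine sum_congr rfl fun b _ ↦ sum_congr rfl fun a _ ↦ ?_
        rw [AddChar.mulShift_apply, AddChar.inv_apply, mul_assoc, ← AddChar.map_add_eq_mul,
          mul_sub_one, sub_eq_add_neg]
    _ = N := by simp [AddChar.sum_mulShift _ hψ, sub_eq_zero, ZMod.card]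

theorem norm_rootNumber_of_isPrimitive {χ : DirichletCharacter ℂ N} (hχ : χ.IsPrimitive) :
    ‖χ.rootNumber‖ = 1 := by
  have hgauss : ‖gaussSum χ (ZMod.stdAddChar (N := N))‖ = √N := by
    have h := gaussSum_mul_gaussSum_inv_of_isPrimitive hχ (ZMod.isPrimitive_stdAddChar N)
    rw [← star_gaussSum_eq, star_def, mul_conj'] at h
    rw [← Real.sqrt_sq (norm_nonneg _)]
    exact congrArg Real.sqrt (mod_cast h)
  rw [rootNumber, norm_div, norm_div, hgauss, norm_pow, norm_I, one_pow, div_one,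
    norm_natCast_cpow_of_pos (NeZero.pos N), Real.sqrt_eq_rpow]
  simp [NeZero.ne N]

theorem LFunction_one_of_isPrimitive_of_odd {χ : DirichletCharacter ℂ N}
    (hχ : χ.IsPrimitive) (hodd : χ.Odd) :
    χ.LFunction 1 = π * (N ^ (-(1 / 2) : ℂ) * χ.rootNumber * χ⁻¹.LFunction 0) := by
  have hN := level_ne_one_of_odd hodd
  have hodd_inv : χ⁻¹.Odd := by
    rw [DirichletCharacter.Odd, ← MulChar.star_eq_inv, MulChar.star_apply, hodd, star_neg, star_one]
  have hΓ : Gammaℝ (1 + 1) = (π : ℂ)⁻¹ := by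
    rw [Gammaℝ_def]
    norm_num [cpow_neg_one]
  have h₀ : χ⁻¹.LFunction 0 = completedLFunction χ⁻¹ 0 := by
    rw [LFunction_eq_completed_div_gammaFactor _ _ (.inr hN), hodd_inv.gammaFactor_def, zero_add,
      Gammaℝ_one, div_one]
  have hfe := hχ.completedLFunction_one_sub 0
  rw [sub_zero, zero_sub] at hfe
  rw [LFunction_eq_completed_div_gammaFactor _ _ (.inl one_ne_zero), hodd.gammaFactor_def, hΓ,
    div_inv_eq_mul, mul_comm, h₀, hfe]

theorem norm_LFunction_one_sq_of_isPrimitive_of_odd {χ : DirichletCharacter ℂ N}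
    (hχ : χ.IsPrimitive) (hodd : χ.Odd) :
    (‖χ.LFunction 1‖ ^ 2 : ℂ) = π ^ 2 / N * (χ.LFunction 0 * χ⁻¹.LFunction 0) := by
  have hN := level_ne_one_of_odd hodd
  have hNpow : ‖(N : ℂ) ^ (-(1 / 2) : ℂ)‖ ^ 2 = (N : ℝ)⁻¹ := by
    rw [norm_natCast_cpow_of_pos (NeZero.pos N), ← Real.rpow_mul_natCast N.cast_nonneg]
    norm_num [Real.rpow_neg_one]
  have hnorm : ‖χ.LFunction 1‖ ^ 2 = π ^ 2 / N * ‖χ.LFunction 0‖ ^ 2 := by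
    rw [LFunction_one_of_isPrimitive_of_odd hχ hodd, LFunction_zero_inv hN, norm_mul, norm_mul,
      norm_mul, norm_rootNumber_of_isPrimitive hχ, RCLike.norm_conj, mul_one, mul_pow, mul_pow,
      hNpow, norm_real, Real.norm_eq_abs, sq_abs, ← mul_assoc, div_eq_mul_inv]
  rw [LFunction_zero_inv hN, mul_conj']
  exact_mod_cast hnorm

open scoped Classical in
theorem sum_odd_norm_LFunction_one_sq_mul (hN : N.Prime) (a : ℤ) :
    ∑ χ : DirichletCharacter ℂ N with χ.Odd, (‖χ.LFunction 1‖ ^ 2 : ℂ) * χ a =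
      π ^ 2 / N * (N.totient * dedekindSum a N) := by
  let f (χ : DirichletCharacter ℂ N) : ℂ := χ.LFunction 0 * χ⁻¹.LFunction 0 * χ a
  have hodd {χ : DirichletCharacter ℂ N} (hf : f χ ≠ 0) : χ.Odd := by
    refine χ.even_or_odd.resolve_left fun heven ↦ hf ?_
    simp only [f, LFunction_zero_of_even hN.ne_one heven, zero_mul]
  calc ∑ χ : DirichletCharacter ℂ N with χ.Odd, (‖χ.LFunction 1‖ ^ 2 : ℂ) * χ a
      = ∑ χ with χ.Odd, π ^ 2 / N * f χ := by
        refine sum_congr rfl fun χ hχ ↦ ?_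
        have hχ' : χ.Odd := (mem_filter.1 hχ).2
        rw [norm_LFunction_one_sq_of_isPrimitive_of_odd
          (isPrimitive_of_prime_of_ne_one hN (ne_one_of_odd hχ')) hχ', mul_assoc]
    _ = π ^ 2 / N * ∑ χ, f χ := by rw [← mul_sum, sum_filter_of_ne fun _ _ ↦ hodd]
    _ = π ^ 2 / N * (N.totient * dedekindSum a N) := by
        rw [sum_LFunction_zero_mul_LFunction_inv_zero_mul hN]

end DirichletCharacters

open scoped Classical in
/-- Corollary 7, equation (1.4): moments of Dirichlet `L`-functions at `0` and `1`
and Dedekind sums. -/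
theorem moments_eq_dedekind_sum (q : ℕ) (hq : q.Prime) (a : ℤ)
    (hco : IsCoprime a (q : ℤ)) :
    haveI : NeZero q := ⟨hq.ne_zero⟩
    ((1 / (Nat.totient q : ℂ)) *
        (∑ χ : DirichletCharacter ℂ q, if χ = 1 then 0 else
          χ.LFunction 0 *
            DirichletCharacter.LFunction (χ.ringHomComp (starRingEnd ℂ)) 0 *
            χ (a : ZMod q))
      = (dedekindSum a q : ℂ)) ∧
    ((1 / (π^2 : ℂ)) * ((q : ℂ) / (Nat.totient q : ℂ)) *
        (∑ χ : DirichletCharacter ℂ q,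
          if χ ≠ 1 ∧ χ (-1 : ZMod q) = -1 then
            (‖χ.LFunction 1‖^2 : ℂ) * χ (a : ZMod q)
          else 0)
      = (dedekindSum a q : ℂ)) := by
  have : NeZero q := ⟨hq.ne_zero⟩
  have hφ : (q.totient : ℂ) ≠ 0 := Nat.cast_ne_zero.2 (Nat.totient_pos.2 hq.pos).ne'
  have hq₀ : (q : ℂ) ≠ 0 := Nat.cast_ne_zero.2 hq.ne_zero
  have hπ : (π : ℂ) ≠ 0 := ofReal_ne_zero.2 pi_ne_zero
  constructor
  · rw [one_div, inv_mul_eq_iff_eq_mul₀ hφ, ← sum_LFunction_zero_mul_LFunction_inv_zero_mul hq]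
    refine sum_congr rfl fun χ _ ↦ ?_
    split_ifs with hχ
    · have heven : χ.Even := hχ ▸ MulChar.one_apply isUnit_one.neg
      rw [LFunction_zero_of_even hq.ne_one heven, zero_mul, zero_mul]
    · exact congrArg (χ.LFunction 0 * DirichletCharacter.LFunction · 0 * χ a) χ.star_eq_inv
  · have hodd (χ : DirichletCharacter ℂ q) : χ ≠ 1 ∧ χ (-1) = -1 ↔ χ.Odd :=
      ⟨And.right, fun h ↦ ⟨ne_one_of_odd h, h⟩⟩
    rw [← sum_filter, filter_congr fun χ _ ↦ hodd χ, sum_odd_norm_LFunction_one_sq_mul hq]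
    field_simp
end

section
/- Let q be a prime and a an integer coprime to q. Then (q/φ(q)) Σ*_{χ mod q, χ(−1)=−1} L(1, conj χ)·L(0, χ)·χ(a mod q) = (π/2)·c_0(a/q), where Σ* runs over the primitive (equivalently, nontrivial) Dirichlet characters modulo q with χ(−1) = −1. -/
open Complex Real Finset

/-- The cotangent sum `c_0(h/k) = -∑_{m=1}^{k-1} (m/k) cot(πmh/k)`. -/
noncomputable def cotSum (h : ℤ) (k : ℕ) : ℝ :=
  -∑ m ∈ Finset.Icc 1 (k-1), ((m : ℝ)/k) * Real.cot (π * m * h / k)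

/-!
Both `L`-values of an odd character are finite sums: the cotangent series gives
`L(1, χ) = (π / 2N) ∑ χ(j) cot(πj/N)`, and the functional equation turns this into
`L(0, χ) = -(1/N) ∑ χ(j) j`, the discrete Fourier transform of the cotangent being a sawtooth.
Inserting both sums into the moment, the sum over `χ` becomes character inversion applied to the
cotangent. It may be extended from the odd characters to all of them because the cotangent, being
odd, is orthogonal to the even ones.
-/

section HurwitzZetaOdd

open Filter Topology HurwitzZeta

lemma rpow_le_rpow_add_rpow {t p q r : ℝ} (ht : 0 < t) (hpq : p ≤ q) (hqr : q ≤ r) :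
    t ^ q ≤ t ^ p + t ^ r := by
  rcases le_total t 1 with h | h
  · exact (rpow_le_rpow_of_exponent_ge ht h hpq).trans (le_add_of_nonneg_right (by positivity))
  · exact (rpow_le_rpow_of_exponent_le h hqr).trans (le_add_of_nonneg_left (by positivity))

lemma abs_rpow_neg_sub_rpow_neg_le {c x y s : ℝ} (hc : 0 < c) (hx : c ≤ x) (hy : c ≤ y)
    (hs : 0 ≤ s) : |x ^ (-s) - y ^ (-s)| ≤ s * c ^ (-s - 1) * |x - y| := by
  refine (convex_Ici c).norm_image_sub_le_of_norm_hasDerivWithin_le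
    (f := fun z : ℝ ↦ z ^ (-s)) (f' := fun z ↦ -s * z ^ (-s - 1)) (fun z hz ↦ ?_) (fun z hz ↦ ?_)
    hy hx
  · exact (hasDerivAt_rpow_const (.inl (hc.trans_le hz).ne')).hasDerivWithinAt
  · have hz₀ : 0 < z := hc.trans_le hz
    rw [norm_mul, norm_neg, norm_of_nonneg hs, norm_of_nonneg (by positivity)]
    gcongr ?_ * ?_
    exact rpow_le_rpow_of_nonpos hc hz (by linarith)

/-- The `n`-th term of the Dirichlet series of `hurwitzZetaOdd a` at a real point `s`. The two
powers are kept together because the series of each diverges at `s = 1`. -/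
noncomputable def hurwitzOddTerm (a s : ℝ) (n : ℕ) : ℝ :=
  ((n + a) ^ (-s) - (n + 1 - a) ^ (-s)) / 2

lemma hasSum_hurwitzOddTerm {a s : ℝ} (ha : a ∈ Set.Icc 0 1) (hs : 1 < s) :
    HasSum (fun n ↦ (hurwitzOddTerm a s n : ℂ)) (hurwitzZetaOdd a s) := by
  refine (hasSum_nat_hurwitzZetaOdd_of_mem_Icc ha (s := s) (by simpa using hs)).congr_fun
    fun n ↦ ?_
  have h₁ : (0 : ℝ) ≤ n + a := add_nonneg n.cast_nonneg ha.1
  have h₂ : (0 : ℝ) ≤ n + 1 - a := by linarith [ha.2, n.cast_nonneg (α := ℝ)]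
  rw [hurwitzOddTerm, rpow_neg h₁, rpow_neg h₂]
  push_cast [ofReal_cpow h₁, ofReal_cpow h₂]
  simp only [one_div]

lemma abs_hurwitzOddTerm_le {a c s : ℝ} (hc : 0 < c) (hca : c ≤ a) (hca' : c ≤ 1 - a)
    (hs : s ∈ Set.Icc 1 2) (n : ℕ) :
    |hurwitzOddTerm a s n| ≤ (n + c) ^ (-3 : ℝ) + (n + c) ^ (-2 : ℝ) := by
  have hn : 0 < n + c := by positivity
  have hdist : |(n + a) - (n + 1 - a)| ≤ 1 := abs_le.2 ⟨by linarith, by linarith⟩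
  calc |hurwitzOddTerm a s n|
      = |(n + a) ^ (-s) - (n + 1 - a) ^ (-s)| / 2 := by rw [hurwitzOddTerm, abs_div, abs_two]
    _ ≤ s * (n + c) ^ (-s - 1) * |(n + a) - (n + 1 - a)| / 2 := by
        gcongr
        exact abs_rpow_neg_sub_rpow_neg_le hn (by linarith) (by linarith) (by linarith [hs.1])
    _ ≤ 2 * (n + c) ^ (-s - 1) * 1 / 2 := by gcongr; exact hs.2
    _ = (n + c) ^ (-s - 1) := by ring
    _ ≤ (n + c) ^ (-3 : ℝ) + (n + c) ^ (-2 : ℝ) :=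
        rpow_le_rpow_add_rpow hn (by linarith [hs.2]) (by linarith [hs.1])

lemma summable_natCast_add_rpow_neg {c p : ℝ} (hc : 0 ≤ c) (hp : 1 < p) :
    Summable fun n : ℕ ↦ (n + c) ^ (-p) := by
  refine ((summable_one_div_nat_add_rpow c p).2 hp).congr fun n ↦ ?_
  rw [abs_of_nonneg (by positivity), rpow_neg (by positivity), one_div]

lemma continuous_hurwitzOddTerm {a : ℝ} (ha : a ∈ Set.Ioo 0 1) (n : ℕ) :
    Continuous fun s ↦ hurwitzOddTerm a s n := by
  have h₁ : (n + a : ℝ) ≠ 0 := (add_pos_of_nonneg_of_pos n.cast_nonneg ha.1).ne'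
  have h₂ : (n + 1 - a : ℝ) ≠ 0 := by linarith [ha.2, n.cast_nonneg (α := ℝ)]
  unfold hurwitzOddTerm
  exact (((continuous_const_rpow h₁).comp continuous_neg).sub
    ((continuous_const_rpow h₂).comp continuous_neg)).div_const 2

lemma hasSum_hurwitzOddTerm_one {a : ℝ} (ha : a ∈ Set.Ioo 0 1) :
    HasSum (fun n ↦ (hurwitzOddTerm a 1 n : ℂ)) (hurwitzZetaOdd a 1) := by
  set c := min a (1 - a)
  have hc : 0 < c := lt_min ha.1 (sub_pos.2 ha.2)
  have hbound {s : ℝ} (hs : s ∈ Set.Icc 1 2) (n : ℕ) :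
      ‖(hurwitzOddTerm a s n : ℂ)‖ ≤ (n + c) ^ (-3 : ℝ) + (n + c) ^ (-2 : ℝ) := by
    rw [norm_real]
    exact abs_hurwitzOddTerm_le hc (min_le_left ..) (min_le_right ..) hs n
  have hsummable : Summable fun n : ℕ ↦ (n + c) ^ (-3 : ℝ) + (n + c) ^ (-2 : ℝ) :=
    (summable_natCast_add_rpow_neg hc.le (by norm_num)).add
      (summable_natCast_add_rpow_neg hc.le (by norm_num))
  have hseries : Tendsto (fun s : ℝ ↦ ∑' n, (hurwitzOddTerm a s n : ℂ)) (𝓝[>] 1)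
      (𝓝 (∑' n, (hurwitzOddTerm a 1 n : ℂ))) := by
    refine tendsto_tsum_of_dominated_convergence hsummable (fun n ↦ ?_) ?_
    · exact (continuous_ofReal.comp (continuous_hurwitzOddTerm ha n)).continuousWithinAt
    · filter_upwards [Ioc_mem_nhdsGT one_lt_two] with s hs n
      exact hbound (Set.Ioc_subset_Icc_self hs) n
  have hzeta : Tendsto (fun s : ℝ ↦ ∑' n, (hurwitzOddTerm a s n : ℂ)) (𝓝[>] 1)
      (𝓝 (hurwitzZetaOdd a (1 : ℝ))) := by
    have hcont : Continuous fun s : ℝ ↦ hurwitzZetaOdd a s :=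
      (differentiable_hurwitzZetaOdd a).continuous.comp continuous_ofReal
    refine (hcont.tendsto 1).mono_left nhdsWithin_le_nhds |>.congr' ?_
    filter_upwards [self_mem_nhdsWithin] with s hs
    exact (hasSum_hurwitzOddTerm (Set.Ioo_subset_Icc_self ha) hs).tsum_eq.symm
  rw [← ofReal_one, tendsto_nhds_unique hzeta hseries]
  exact (hsummable.of_norm_bounded (hbound ⟨le_rfl, one_le_two⟩)).hasSum

lemma tendsto_sum_range_one_div_sub_one_div_cot {x : ℂ} (hx : x ∈ integerComplement) :
    Tendsto (fun N ↦ ∑ n ∈ range N, (1 / (n + x) - 1 / (n + 1 - x))) atTop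
      (𝓝 (π * Complex.cot (π * x))) := by
  have hboundary : Tendsto (fun N : ℕ ↦ 1 / x - 1 / (N + x)) atTop (𝓝 (1 / x - 0)) := by
    refine tendsto_const_nhds.sub ?_
    simp only [one_div]
    exact tendsto_inv₀_cobounded.comp
      ((tendsto_add_const_cobounded x).comp tendsto_natCast_atTop_cobounded)
  have h := (tendsto_logDeriv_euler_cot_sub hx).add hboundary
  rw [sub_zero, sub_add_cancel] at h
  refine h.congr fun N ↦ ?_
  have htelescope := sum_range_sub' (fun n : ℕ ↦ 1 / (n + x)) N
  rw [Nat.cast_zero, zero_add] at htelescope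
  rw [← htelescope, ← sum_add_distrib]
  refine sum_congr rfl fun n _ ↦ ?_
  rw [cotTerm, ← neg_sub (n + 1 : ℂ) x, add_comm x, one_div_neg_eq_neg_one_div]
  push_cast
  ring

theorem hurwitzZetaOdd_one {a : ℝ} (ha : a ∈ Set.Ioo 0 1) :
    hurwitzZetaOdd a 1 = π / 2 * Real.cot (π * a) := by
  have ha' : (a : ℂ) ∈ integerComplement := by
    rintro ⟨m, hm⟩
    obtain rfl : (m : ℝ) = a := by exact_mod_cast hm
    have h₀ : 0 < m := by exact_mod_cast ha.1
    have h₁ : m < 1 := by exact_mod_cast ha.2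
    omega
  have hcot := (tendsto_sum_range_one_div_sub_one_div_cot ha').div_const 2
  rw [tendsto_nhds_unique (hasSum_hurwitzOddTerm_one ha).tendsto_sum_nat (hcot.congr fun N ↦ ?_)]
  · push_cast
    ring
  · rw [sum_div]
    refine sum_congr rfl fun n _ ↦ ?_
    simp only [hurwitzOddTerm, rpow_neg_one]
    push_cast
    simp only [one_div]

end HurwitzZetaOdd

section Cotangent

open ZMod

variable {N : ℕ} [NeZero N]

/-- The function `cot(πk/N)` of `k : ZMod N`, written as `i (ζ + 1) / (ζ - 1)` with
`ζ = exp(2πik/N)` so that it visibly depends on `k` modulo `N` only. At `k = 0` it is `0`, through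
division by zero, as is `Real.cot 0`. -/
noncomputable def cotZMod (k : ZMod N) : ℂ :=
  I * (stdAddChar k + 1) / (stdAddChar k - 1)

lemma cotZMod_intCast (m : ℤ) : cotZMod (m : ZMod N) = Real.cot (π * m / N) := by
  have hζ : stdAddChar (m : ZMod N) = cexp (2 * I * ((π * m / N : ℝ) : ℂ)) := by
    rw [stdAddChar_coe]
    push_cast
    ring_nf
  rw [ofReal_cot, Complex.cot_eq_exp_ratio, ← hζ, cotZMod, mul_comm I (1 - _), ← div_div, div_I,
    ← neg_sub, div_neg]
  ring

lemma cotZMod_odd : (cotZMod (N := N)).Odd := by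
  intro k
  obtain ⟨m, rfl⟩ := intCast_surjective k
  rw [← Int.cast_neg, cotZMod_intCast, cotZMod_intCast, ofReal_cot, ofReal_cot]
  push_cast
  rw [mul_neg, neg_div, Complex.cot, Complex.cot, Complex.cos_neg, Complex.sin_neg, div_neg]

lemma one_sub_stdAddChar_neg_mul_cotZMod (k : ZMod N) :
    (1 - stdAddChar (-k)) * cotZMod k = I * (1 + stdAddChar (-k)) - if k = 0 then 2 * I else 0 := by
  split_ifs with hk
  · simp only [hk, neg_zero, AddChar.map_zero_eq_one]
    ring
  · have hne : stdAddChar k - 1 ≠ (0 : ℂ) := by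
      rw [sub_ne_zero, ← AddChar.map_zero_eq_one (stdAddChar (N := N))]
      exact injective_stdAddChar.ne hk
    have hinv : stdAddChar (-k) * stdAddChar k = (1 : ℂ) := by
      rw [← AddChar.map_add_eq_mul, neg_add_cancel, AddChar.map_zero_eq_one]
    rw [cotZMod]
    field_simp
    linear_combination -2 * I * hinv

lemma sum_stdAddChar_neg_mul (j : ZMod N) :
    ∑ k, stdAddChar (-(k * j)) = if j = 0 then (N : ℂ) else 0 := by
  have h := AddChar.sum_mulShift (-j) (isPrimitive_stdAddChar N)
  simpa only [mul_neg, neg_eq_zero, ZMod.card, Nat.cast_ite, Nat.cast_zero] using h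

lemma dft_cotZMod_sub (j : ZMod N) :
    𝓕 cotZMod j - 𝓕 cotZMod (j + 1) =
      I * ((if j = 0 then (N : ℂ) else 0) + (if j + 1 = 0 then (N : ℂ) else 0) - 2) := by
  have hterm (k : ZMod N) :
      stdAddChar (-(k * j)) * cotZMod k - stdAddChar (-(k * (j + 1))) * cotZMod k =
        I * stdAddChar (-(k * j)) + I * stdAddChar (-(k * (j + 1))) -
          if k = 0 then 2 * I else 0 := by
    have hchar : stdAddChar (-(k * (j + 1))) = stdAddChar (-(k * j)) * (stdAddChar (-k) : ℂ) := by
      rw [← AddChar.map_add_eq_mul]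
      ring_nf
    have h := one_sub_stdAddChar_neg_mul_cotZMod k
    rw [hchar]
    split_ifs at h ⊢ with hk
    · simp only [hk, zero_mul, neg_zero, AddChar.map_zero_eq_one]
      ring
    · linear_combination stdAddChar (-(k * j)) * h
  simp only [dft_apply, smul_eq_mul]
  rw [← sum_sub_distrib, sum_congr rfl fun k _ ↦ hterm k, sum_sub_distrib, sum_add_distrib,
    ← mul_sum, ← mul_sum, sum_stdAddChar_neg_mul, sum_stdAddChar_neg_mul, Fintype.sum_ite_eq']
  ring

lemma dft_cotZMod_natCast {j : ℕ} (hj : 0 < j) (hjN : j < N) :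
    𝓕 cotZMod (j : ZMod N) = I * (2 * j - N) := by
  have hne {i : ℕ} (hi : 0 < i) (hiN : i < N) : (i : ZMod N) ≠ 0 := by
    rw [Ne, natCast_eq_zero_iff]
    exact Nat.not_dvd_of_pos_of_lt hi hiN
  induction j, hj using Nat.le_induction with
  | base =>
    have hstep := dft_cotZMod_sub (0 : ZMod N)
    have hzero : 𝓕 cotZMod (0 : ZMod N) = 0 := by rw [dft_apply_zero, cotZMod_odd.sum_eq_zero]
    have h₁ : (1 : ZMod N) ≠ 0 := by exact_mod_cast hne one_pos hjN
    rw [hzero, zero_add, if_pos rfl, if_neg h₁] at hstep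
    push_cast
    linear_combination -hstep
  | succ j hj ih =>
    have hstep := dft_cotZMod_sub (j : ZMod N)
    rw [ih (by omega), if_neg (hne hj (by omega)),
      if_neg (by exact_mod_cast hne j.succ_pos hjN)] at hstep
    push_cast
    linear_combination -hstep

lemma dft_cotZMod {j : ZMod N} (hj : j ≠ 0) : 𝓕 cotZMod j = I * (2 * j.val - N) := by
  have h := dft_cotZMod_natCast (Nat.pos_of_ne_zero ((val_ne_zero j).2 hj)) (val_lt j)
  rwa [natCast_zmod_val] at h

lemma sum_dft_mul (Φ Ψ : ZMod N → ℂ) : ∑ j, 𝓕 Φ j * Ψ j = ∑ j, Φ j * 𝓕 Ψ j := by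
  simp only [dft_apply, smul_eq_mul, sum_mul, mul_sum]
  rw [sum_comm]
  refine sum_congr rfl fun j _ ↦ sum_congr rfl fun k _ ↦ ?_
  rw [mul_comm j k]
  ring

end Cotangent

section LFunction

open ZMod

variable {N : ℕ} [NeZero N] {Φ : ZMod N → ℂ}

theorem LFunction_one_of_odd (hΦ : Φ.Odd) :
    LFunction Φ 1 = π / (2 * N) * ∑ j, Φ j * cotZMod j := by
  have hN : (0 : ℝ) < N := Nat.cast_pos.2 (NeZero.pos N)
  rw [LFunction_def_odd hΦ, mul_sum, mul_sum]
  refine sum_congr rfl fun j _ ↦ ?_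
  rcases eq_or_ne j 0 with rfl | hj
  · simp only [hΦ.map_zero, zero_mul, mul_zero]
  have hmem : (j.val / N : ℝ) ∈ Set.Ioo 0 1 :=
    ⟨div_pos (Nat.cast_pos.2 (Nat.pos_of_ne_zero ((val_ne_zero j).2 hj))) hN,
      (div_lt_one hN).2 (Nat.cast_lt.2 (val_lt j))⟩
  have hcot : cotZMod j = Real.cot (π * (j.val / N)) := by
    simpa [mul_div_assoc] using cotZMod_intCast (N := N) j.val
  rw [toAddCircle_apply, hurwitzZetaOdd_one hmem, hcot, cpow_neg_one]
  ring

lemma Gammaℝ_two : Gammaℝ 2 = (π : ℂ)⁻¹ := by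
  rw [Gammaℝ_def, neg_div, div_self two_ne_zero, cpow_neg_one, Complex.Gamma_one, mul_one]

lemma LFunction_zero_eq_LFunction_dft_one_of_odd (hΦ : Φ.Odd) :
    LFunction Φ 0 = I / π * LFunction (𝓕 Φ) 1 := by
  have hΛ := completedLFunction_one_sub_odd hΦ 1
  rw [sub_self, cpow_zero, one_mul] at hΛ
  rw [LFunction_eq_completed_div_gammaFactor_odd hΦ,
    LFunction_eq_completed_div_gammaFactor_odd (dft_odd_iff.2 hΦ), zero_add, one_add_one_eq_two,
    Gammaℝ_one, Gammaℝ_two, hΛ]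
  have hπ : (π : ℂ) ≠ 0 := ofReal_ne_zero.2 pi_ne_zero
  field_simp

theorem LFunction_zero_of_odd (hΦ : Φ.Odd) :
    LFunction Φ 0 = -(∑ j, Φ j * j.val) / N := by
  have hN : (N : ℂ) ≠ 0 := NeZero.ne _
  have hπ : (π : ℂ) ≠ 0 := ofReal_ne_zero.2 pi_ne_zero
  have hsaw : ∑ j, Φ j * 𝓕 cotZMod j = 2 * I * ∑ j, Φ j * j.val := by
    calc ∑ j, Φ j * 𝓕 cotZMod j = ∑ j, (2 * I * (Φ j * j.val) - I * N * Φ j) := by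
          refine sum_congr rfl fun j _ ↦ ?_
          rcases eq_or_ne j 0 with rfl | hj
          · simp only [hΦ.map_zero, zero_mul, mul_zero, sub_zero]
          · rw [dft_cotZMod hj]
            ring
      _ = 2 * I * ∑ j, Φ j * j.val := by
          rw [sum_sub_distrib, ← mul_sum, ← mul_sum, hΦ.sum_eq_zero, mul_zero, sub_zero]
  rw [LFunction_zero_eq_LFunction_dft_one_of_odd hΦ, LFunction_one_of_odd (dft_odd_iff.2 hΦ),
    sum_dft_mul, hsaw]
  field_simp
  rw [I_sq, neg_one_mul]

end LFunction

section Characters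

lemma inv_mulChar_neg_one {M R : Type*} [CommRing M] [CommMonoidWithZero R] (χ : MulChar M R) :
    χ⁻¹ (-1) = χ (-1) := by
  rw [MulChar.inv_apply, ← Units.val_one, ← Units.val_neg, Ring.inverse_unit, inv_neg, inv_one]

lemma ne_one_and_map_neg_one_eq_iff_odd {N : ℕ} {R : Type*} [CommRing R] [NeZero (2 : R)]
    {χ : DirichletCharacter R N} : χ ≠ 1 ∧ χ (-1) = -1 ↔ χ.Odd := by
  refine and_iff_right_of_imp ?_
  rintro h rfl
  have h_one : (1 : R) = -1 := (MulChar.one_apply isUnit_one.neg).symm.trans h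
  rw [eq_neg_iff_add_eq_zero, one_add_one_eq_two] at h_one
  exact two_ne_zero h_one

variable {N : ℕ} [NeZero N] {R : Type*} [CommRing R] [IsDomain R]
  [HasEnoughRootsOfUnity R (Monoid.exponent (ZMod N)ˣ)]

lemma sum_char_mul_inv_char {b : ZMod N} (hb : IsUnit b) (m : ZMod N) :
    ∑ χ : DirichletCharacter R N, χ b * χ⁻¹ m = if m = b then (N.totient : R) else 0 := by
  by_cases hm : IsUnit m
  · rw [← DirichletCharacter.sum_char_inv_mul_char_eq R hm b]
    refine sum_congr rfl fun χ _ ↦ ?_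
    obtain ⟨u, rfl⟩ := hm
    rw [MulChar.inv_apply, Ring.inverse_unit, ZMod.inv_coe_unit, mul_comm]
  · have hmb : m ≠ b := fun h ↦ hm (h ▸ hb)
    simp only [MulChar.map_nonunit _ hm, mul_zero, sum_const_zero, if_neg hmb]

theorem sum_char_mul_sum_inv_char_mul {b : ZMod N} (hb : IsUnit b) (g : ZMod N → R) :
    ∑ χ : DirichletCharacter R N, χ b * ∑ m, χ⁻¹ m * g m = N.totient * g b := by
  simp only [mul_sum, ← mul_assoc]
  rw [sum_comm]
  simp only [← sum_mul, sum_char_mul_inv_char hb, ite_mul, zero_mul, Fintype.sum_ite_eq']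

open scoped Classical in
theorem sum_odd_char_mul_sum_inv_char_mul [IsAddTorsionFree R] {b : ZMod N} (hb : IsUnit b)
    {g : ZMod N → R} (hg : g.Odd) :
    ∑ χ : DirichletCharacter R N with χ.Odd, χ b * ∑ m, χ⁻¹ m * g m = N.totient * g b := by
  rw [← sum_char_mul_sum_inv_char_mul hb g]
  refine sum_subset (subset_univ _) fun χ _ hχ ↦ ?_
  have heven : χ⁻¹.Even := by
    rw [DirichletCharacter.Even, inv_mulChar_neg_one]
    exact χ.even_or_odd.resolve_right fun h ↦ hχ (mem_filter.2 ⟨mem_univ χ, h⟩)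
  have hsum : ∑ m, χ⁻¹ m * g m = 0 := (heven.to_fun.mul_odd hg).sum_eq_zero
  rw [hsum, mul_zero]

end Characters

section Moment

variable {N : ℕ} [NeZero N]

lemma LFunction_conj_one_mul_LFunction_zero_of_odd {χ : DirichletCharacter ℂ N} (hχ : χ.Odd) :
    DirichletCharacter.LFunction (χ.ringHomComp (starRingEnd ℂ)) 1 * χ.LFunction 0 =
      -(π / (2 * N ^ 2)) * ∑ n : ZMod N, n.val * (χ n * ∑ m, χ⁻¹ m * cotZMod m) := by
  have hconj : χ.ringHomComp (starRingEnd ℂ) = χ⁻¹ := MulChar.star_eq_inv χ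
  have hinv : χ⁻¹.Odd := (inv_mulChar_neg_one χ).trans hχ
  rw [hconj, DirichletCharacter.LFunction, DirichletCharacter.LFunction,
    LFunction_one_of_odd hinv.to_fun, LFunction_zero_of_odd hχ.to_fun]
  simp only [← mul_assoc, ← sum_mul, mul_comm (_ : ℂ) (χ _)]
  ring

open scoped Classical in
lemma sum_odd_LFunction_conj_one_mul_LFunction_zero_mul {a : ZMod N} (ha : IsUnit a) :
    ∑ χ : DirichletCharacter ℂ N with χ.Odd,
        DirichletCharacter.LFunction (χ.ringHomComp (starRingEnd ℂ)) 1 * χ.LFunction 0 * χ a =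
      -(π * N.totient / (2 * N ^ 2)) * ∑ n : ZMod N with IsUnit n, n.val * cotZMod (n * a) := by
  calc _ = ∑ χ : DirichletCharacter ℂ N with χ.Odd, ∑ n : ZMod N with IsUnit n,
        -(π / (2 * N ^ 2)) * (n.val * (χ (n * a) * ∑ m, χ⁻¹ m * cotZMod m)) := by
        refine sum_congr rfl fun χ hχ ↦ ?_
        rw [LFunction_conj_one_mul_LFunction_zero_of_odd (mem_filter.1 hχ).2, mul_sum, sum_mul,
          sum_filter]
        refine sum_congr rfl fun n _ ↦ ?_
        split_ifs with hn
        · rw [map_mul]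
          ring
        · rw [MulChar.map_nonunit χ hn]
          ring
    _ = ∑ n : ZMod N with IsUnit n,
        -(π / (2 * N ^ 2)) * (n.val * (N.totient * cotZMod (n * a))) := by
        rw [sum_comm]
        refine sum_congr rfl fun n hn ↦ ?_
        rw [← mul_sum, ← mul_sum,
          sum_odd_char_mul_sum_inv_char_mul ((mem_filter.1 hn).2.mul ha) cotZMod_odd]
    _ = _ := by
        rw [mul_sum]
        refine sum_congr rfl fun n _ ↦ ?_
        ring

/-- The cotangent sum `c_0(h/k)` restricted to the residues prime to `k`, which is what the moment
over all odd characters modulo `k` evaluates to when `k` need not be prime. -/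
noncomputable def coprimeCotSum (h : ℤ) (k : ℕ) : ℝ :=
  -∑ m ∈ Icc 1 (k - 1) with m.Coprime k, (m : ℝ) / k * Real.cot (π * m * h / k)

lemma coprimeCotSum_prime (h : ℤ) {p : ℕ} (hp : p.Prime) : coprimeCotSum h p = cotSum h p := by
  rw [coprimeCotSum, cotSum, filter_true_of_mem]
  intro m hm
  obtain ⟨hm₀, hmp⟩ := mem_Icc.1 hm
  exact (Nat.coprime_of_lt_prime (by omega) (by omega) hp).symm

lemma sum_zmod_eq_sum_range {M : Type*} [AddCommMonoid M] (f : ℕ → M) :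
    ∑ n : ZMod N, f n.val = ∑ m ∈ range N, f m := by
  obtain ⟨k, rfl⟩ := Nat.exists_eq_succ_of_ne_zero (NeZero.ne N)
  exact Fin.sum_univ_eq_sum_range f _

open scoped Classical in
lemma ofReal_coprimeCotSum (h : ℤ) :
    (coprimeCotSum h N : ℂ) =
      -(∑ n : ZMod N with IsUnit n, n.val * cotZMod (n * (h : ZMod N))) / N := by
  have hterm (n : ZMod N) : (if IsUnit n then n.val * cotZMod (n * (h : ZMod N)) else 0) =
      if n.val.Coprime N then (n.val * Real.cot (π * n.val * h / N) : ℂ) else 0 := by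
    have hcot : cotZMod (n * (h : ZMod N)) = Real.cot (π * n.val * h / N) := by
      simpa [mul_assoc] using cotZMod_intCast (N := N) (n.val * h)
    have hunit : IsUnit n ↔ n.val.Coprime N := by
      rw [← ZMod.isUnit_iff_coprime, ZMod.natCast_zmod_val]
    simp only [hcot, hunit]
  have hIcc : Icc 1 (N - 1) = Ico 1 N :=
    Icc_sub_one_right_eq_Ico_of_not_isMin (not_isMin_of_lt (NeZero.pos N)) 1
  rw [sum_filter, sum_congr rfl fun n _ ↦ hterm n, sum_zmod_eq_sum_range
    fun m ↦ if m.Coprime N then (m * Real.cot (π * m * h / N) : ℂ) else 0, range_eq_Ico,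
    sum_eq_sum_Ico_succ_bot (NeZero.pos N), zero_add, Nat.cast_zero, zero_mul, ite_self, zero_add,
    coprimeCotSum, hIcc, ← sum_filter, neg_div, sum_div]
  push_cast
  simp only [div_mul_eq_mul_div]

open scoped Classical in
theorem moment_eq_cotangent_sum_general {a : ℤ} (hco : IsCoprime a (N : ℤ)) :
    ((N : ℂ) / N.totient) *
        (∑ χ : DirichletCharacter ℂ N with χ.Odd,
          DirichletCharacter.LFunction (χ.ringHomComp (starRingEnd ℂ)) 1 *
            χ.LFunction 0 * χ (a : ZMod N))
      = (π / 2 : ℂ) * (coprimeCotSum a N : ℂ) := by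
  have ha : IsUnit (a : ZMod N) := (ZMod.coe_int_isUnit_iff_isCoprime a N).2 hco.symm
  have hN : (N : ℂ) ≠ 0 := NeZero.ne _
  have hφ : (N.totient : ℂ) ≠ 0 := Nat.cast_ne_zero.2 (Nat.totient_pos.2 (NeZero.pos N)).ne'
  rw [sum_odd_LFunction_conj_one_mul_LFunction_zero_mul ha, ofReal_coprimeCotSum]
  field_simp

end Moment

open scoped Classical in
/-- Corollary 7, equation (1.5): a moment of Dirichlet `L`-functions and the
cotangent sum `c_0`. -/
theorem moment_eq_cotangent_sum (q : ℕ) (hq : q.Prime) (a : ℤ)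
    (hco : IsCoprime a (q : ℤ)) :
    haveI : NeZero q := ⟨hq.ne_zero⟩
    ((q : ℂ) / (Nat.totient q : ℂ)) *
        (∑ χ : DirichletCharacter ℂ q,
          if χ ≠ 1 ∧ χ (-1 : ZMod q) = -1 then
            DirichletCharacter.LFunction (χ.ringHomComp (starRingEnd ℂ)) 1 *
              χ.LFunction 0 * χ (a : ZMod q)
          else 0)
      = (π/2 : ℂ) * (cotSum a q : ℂ) := by
  have : NeZero q := ⟨hq.ne_zero⟩
  simpa only [ne_one_and_map_neg_one_eq_iff_odd, sum_filter, coprimeCotSum_prime a hq] using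
    moment_eq_cotangent_sum_general hco
end

section
/- Let q be a positive integer, a an integer coprime to q, and s, z ∈ ℂ with 1 − Re(z) < Re(s) < Re(z). Then (1/q)·Σ_{ℓ=1}^{q} F(s−z, ℓ/q)·F(s+z, aℓ/q) = q^{z−s}·Γ(1−s+z)·(2π)^{s−1−z}·( e^{iπ(1−s+z)/2}·D(s+z, 2s−1; a/q) + e^{−iπ(1−s+z)/2}·D(s+z, 2s−1; −a/q) ), where both Estermann series on the right converge absolutely. -/
/-!
The functional equation `F(1 - w, x) = Γ(w) (2π)⁻ʷ (e^{πiw/2} ζ(w, x) + e^{-πiw/2} ζ(w, -x))` turns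
the factors `F(s - z, ℓ/q)`, for `w = 1 - s + z`, into Hurwitz zeta values. A combination
`∑ ℓ mod q, Φ(ℓ) ζ(w, ±ℓ/q)` is `q ^ w` times the Dirichlet series `∑ₘ Φ(±m) m⁻ʷ`. For
`Φ(ℓ) = F(u, aℓ/q)`, with `u = s + z`, both Dirichlet series converge absolutely, and expanding
`F(u, ±am/q)` and collecting the terms with given `mn` produces the divisor sums `σ_{u-w}`.
-/

open Complex Real Finset HurwitzZeta

/-- The `n`-th term of the Estermann series `D(u, α; x)`:
`e^{2πinx} σ_α(n) n^{-u}` (with value `0` at `n = 0`). -/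
noncomputable def estTerm (u α : ℂ) (x : ℝ) (n : ℕ) : ℂ :=
  Complex.exp (2 * π * Complex.I * n * x) * (∑ d ∈ n.divisors, (d:ℂ)^α) * (n:ℂ)^(-u)

open scoped LSeries.notation

lemma LSeries_term_mul (χ f : ℕ → ℂ) (s : ℂ) (n : ℕ) :
    LSeries.term (fun n ↦ χ n * f n) s n = χ n * LSeries.term f s n := by
  simp only [LSeries.term_def, mul_ite, mul_zero, mul_div_assoc]

lemma LSeries_term_cpow_mul (α : ℂ) (f : ℕ → ℂ) (s : ℂ) :
    LSeries.term (fun n ↦ (n : ℂ) ^ α * f n) s = LSeries.term f (s - α) := by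
  ext n
  rcases eq_or_ne n 0 with rfl | hn
  · simp only [LSeries.term_zero]
  · have hn' : (n : ℂ) ≠ 0 := Nat.cast_ne_zero.mpr hn
    rw [LSeries.term_of_ne_zero hn, LSeries.term_of_ne_zero hn, cpow_sub _ _ hn',
      div_div_eq_mul_div, mul_comm]

lemma LSeriesSummable_cpow_iff {α s : ℂ} :
    LSeriesSummable (fun n ↦ (n : ℂ) ^ α) s ↔ 1 < (s - α).re := by
  have term_eq := LSeries_term_cpow_mul α 1 s
  simp only [Pi.one_apply, mul_one] at term_eq
  rw [LSeriesSummable, term_eq]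
  exact LSeriesSummable_one_iff

lemma LSeriesHasSum_mul_convolution {χ f g : ℕ → ℂ} {s : ℂ} {C : ℝ} (hχ : ∀ n, ‖χ n‖ ≤ C)
    (hf : LSeriesSummable f s) (hg : LSeriesSummable g s) :
    LSeriesHasSum (fun n ↦ χ n * (f ⍟ g) n) s
      (LSeries (fun m ↦ f m * LSeries (fun n ↦ χ (m * n) * g n) s) s) := by
  let F (p : ℕ × ℕ) : ℂ := χ (p.1 * p.2) * (LSeries.term f s p.1 * LSeries.term g s p.2)
  have hF : Summable F :=
    .of_norm_bounded ((summable_mul_of_summable_norm hf.norm hg.norm).norm.mul_left C)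
      fun p ↦ by grw [norm_mul, hχ]
  have fiber (n : ℕ) : LSeries.term (fun n ↦ χ n * (f ⍟ g) n) s n =
      ∑' p : (fun p : ℕ × ℕ ↦ p.1 * p.2) ⁻¹' {n}, F p := by
    rw [LSeries_term_mul, LSeries.term_convolution', ← tsum_mul_left]
    exact tsum_congr fun p ↦ congrArg (χ · * _) p.2.symm
  have iterated : ∑' p, F p = LSeries (fun m ↦ f m * LSeries (fun n ↦ χ (m * n) * g n) s) s := by
    rw [hF.tsum_prod]
    refine tsum_congr fun m ↦ ?_
    simp_rw [mul_comm (f _), LSeries_term_mul _ f, LSeries, LSeries_term_mul _ g, ← tsum_mul_right]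
    exact tsum_congr fun n ↦ by ring
  rw [← iterated]
  exact (hF.hasSum.tsum_fiberwise _).congr_fun fiber

lemma estTerm_eq_LSeries_term (u α : ℂ) (x : ℝ) :
    estTerm u α x =
      LSeries.term (fun n ↦ cexp (2 * π * I * x * n) * ((fun d : ℕ ↦ (d : ℂ) ^ α) ⍟ 1) n) u := by
  ext n
  rcases eq_or_ne n 0 with rfl | hn
  · simp [estTerm]
  · have divisor_sum : ((fun d : ℕ ↦ (d : ℂ) ^ α) ⍟ 1) n = ∑ d ∈ n.divisors, (d : ℂ) ^ α := by
      simp only [LSeries.convolution_def, Pi.one_apply, mul_one]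
      exact Nat.sum_divisorsAntidiagonal fun d _ ↦ (d : ℂ) ^ α
    rw [LSeries.term_of_ne_zero hn, divisor_sum, estTerm, cpow_neg, div_eq_mul_inv,
      mul_right_comm _ (n : ℂ)]

lemma LSeries_exp_natCast_mul (x : ℝ) (m : ℕ) {u : ℂ} (hu : 1 < u.re) :
    LSeries (fun n ↦ cexp (2 * π * I * x * (m * n : ℕ))) u =
      expZeta ((m * x : ℝ) : UnitAddCircle) u := by
  rw [← (LSeriesHasSum_exp (m * x) hu).LSeries_eq]
  congr 1 with n
  push_cast
  ring_nf

lemma hasSum_estTerm {u α : ℂ} (hu : 1 < u.re) (hα : 1 < (u - α).re) (x : ℝ) :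
    HasSum (estTerm u α x) (LSeries (fun m ↦ expZeta ((m * x : ℝ) : UnitAddCircle) u) (u - α)) := by
  have norm_exp (n : ℕ) : ‖cexp (2 * π * I * x * n)‖ ≤ 1 := by
    rw [show 2 * π * I * x * n = ((2 * π * x * n : ℝ) : ℂ) * I by push_cast; ring,
      norm_exp_ofReal_mul_I]
  have h := LSeriesHasSum_mul_convolution norm_exp (LSeriesSummable_cpow_iff.mpr hα)
    (LSeriesSummable_one_iff.mpr hu)
  simp only [Pi.one_apply, mul_one, LSeries_exp_natCast_mul x _ hu] at h
  rwa [LSeriesHasSum, ← estTerm_eq_LSeries_term, LSeries, LSeries_term_cpow_mul] at h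

section ZMod

variable {q : ℕ} [NeZero q]

lemma sum_Ico_natCast_zmod {M : Type*} [AddCommMonoid M] (g : ZMod q → M) (n : ℕ) :
    ∑ l ∈ Ico n (n + q), g l = ∑ j, g j := by
  have cast_injOn : Set.InjOn (Nat.cast : ℕ → ZMod q) (Ico n (n + q)) := fun k hk l hl h ↦ by
    rw [coe_Ico, Set.mem_Ico] at hk hl
    exact ((ZMod.natCast_eq_natCast_iff ..).mp h).eq_of_abs_lt (by rw [abs_lt]; lia)
  have image_eq_univ : (Ico n (n + q)).image (Nat.cast : ℕ → ZMod q) = univ :=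
    eq_univ_of_card _ <| by
      rw [card_image_of_injOn cast_injOn, Nat.card_Ico, Nat.add_sub_cancel_left, ZMod.card]
  rw [← sum_image cast_injOn, image_eq_univ]

lemma toAddCircle_intCast_mul_natCast (c : ℤ) (m : ℕ) :
    ZMod.toAddCircle ((c : ZMod q) * (m : ZMod q)) = ((c * m / q : ℝ) : UnitAddCircle) := by
  simpa only [Int.cast_mul, Int.cast_natCast] using ZMod.toAddCircle_intCast (N := q) (c * m)

lemma sum_hurwitzZeta_mul (Φ : ZMod q → ℂ) (w : ℂ) :
    ∑ j, Φ j * hurwitzZeta (ZMod.toAddCircle j) w = q ^ w * ZMod.LFunction Φ w := by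
  have hq : (q : ℂ) ≠ 0 := NeZero.ne _
  rw [ZMod.LFunction, ← mul_assoc, ← cpow_add _ _ hq, add_neg_cancel, cpow_zero, one_mul]

lemma sum_expZeta_one_sub_mul (Φ : ZMod q → ℂ) {w : ℂ} (hw : ∀ n : ℕ, w ≠ 1 - n) :
    ∑ j, expZeta (ZMod.toAddCircle j) (1 - w) * Φ j =
      q ^ w * (2 * π) ^ (-w) * Gamma w *
        (cexp (π * I * w / 2) * ZMod.LFunction Φ w +
          cexp (-(π * I * w) / 2) * ZMod.LFunction (fun j ↦ Φ (-j)) w) := by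
  have reflected : ∑ j, Φ j * hurwitzZeta (-ZMod.toAddCircle j) w =
      q ^ w * ZMod.LFunction (fun j ↦ Φ (-j)) w := by
    rw [← sum_hurwitzZeta_mul, ← Equiv.sum_comp (Equiv.neg _)]
    simp only [Equiv.neg_apply, map_neg, neg_neg]
  calc ∑ j, expZeta (ZMod.toAddCircle j) (1 - w) * Φ j
    _ = (2 * π) ^ (-w) * Gamma w *
          (cexp (π * I * w / 2) * ∑ j, Φ j * hurwitzZeta (ZMod.toAddCircle j) w +
            cexp (-(π * I * w) / 2) * ∑ j, Φ j * hurwitzZeta (-ZMod.toAddCircle j) w) := by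
      simp only [expZeta_one_sub _ hw, mul_sum, ← sum_add_distrib]
      exact sum_congr rfl fun j _ ↦ by ring_nf
    _ = _ := by
      rw [sum_hurwitzZeta_mul, reflected]
      ring

lemma LFunction_expZeta_eq_tsum_estTerm (c : ℤ) {u α : ℂ} (hu : 1 < u.re)
    (hα : 1 < (u - α).re) :
    ZMod.LFunction (fun j ↦ expZeta (ZMod.toAddCircle ((c : ZMod q) * j)) u) (u - α) =
      ∑' n, estTerm u α (c / q) n := by
  rw [ZMod.LFunction_eq_LSeries _ hα, (hasSum_estTerm hu hα _).tsum_eq]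
  congr 1 with m
  rw [toAddCircle_intCast_mul_natCast, mul_div_assoc', mul_comm (m : ℝ)]

lemma sum_expZeta_mul_expZeta (a : ℤ) {u w : ℂ} (hu : 1 < u.re) (hw : 1 < w.re) :
    ∑ j, expZeta (ZMod.toAddCircle j) (1 - w) * expZeta (ZMod.toAddCircle ((a : ZMod q) * j)) u =
      q ^ w * (2 * π) ^ (-w) * Gamma w *
        (cexp (π * I * w / 2) * ∑' n, estTerm u (u - w) (a / q) n +
          cexp (-(π * I * w) / 2) * ∑' n, estTerm u (u - w) (-(a / q)) n) := by
  have hw' (n : ℕ) : w ≠ 1 - n := fun h ↦ by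
    rw [h, sub_re, one_re, natCast_re] at hw
    linarith [n.cast_nonneg (α := ℝ)]
  have hα : 1 < (u - (u - w)).re := by rwa [sub_sub_cancel]
  have pos := LFunction_expZeta_eq_tsum_estTerm (q := q) a hu hα
  have neg := LFunction_expZeta_eq_tsum_estTerm (q := q) (-a) hu hα
  simp only [Int.cast_neg, neg_mul, neg_div, sub_sub_cancel] at pos neg
  simp only [sum_expZeta_one_sub_mul _ hw', mul_neg, pos, neg]

lemma sum_Icc_expZeta_mul_expZeta (a : ℤ) (u v : ℂ) :
    ∑ ℓ ∈ Icc 1 q, expZeta ((ℓ / q : ℝ) : UnitAddCircle) v *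
        expZeta ((a * ℓ / q : ℝ) : UnitAddCircle) u =
      ∑ j, expZeta (ZMod.toAddCircle j) v * expZeta (ZMod.toAddCircle ((a : ZMod q) * j)) u := by
  rw [← sum_Ico_natCast_zmod _ 1, add_comm 1 q, Ico_add_one_right_eq_Icc]
  exact sum_congr rfl fun ℓ _ ↦ by
    rw [toAddCircle_intCast_mul_natCast, ZMod.toAddCircle_natCast]

end ZMod

theorem periodic_zeta_sum_eq_estermann_general (q : ℕ) (hq : 0 < q) (a : ℤ) (s z : ℂ)
    (h1 : 1 - z.re < s.re) (h2 : s.re < z.re) :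
    Summable (fun n : ℕ => ‖estTerm (s + z) (2*s - 1) ((a : ℝ)/q) n‖) ∧
    Summable (fun n : ℕ => ‖estTerm (s + z) (2*s - 1) (-((a : ℝ)/q)) n‖) ∧
    (1/(q : ℂ)) * (∑ ℓ ∈ Finset.Icc 1 q,
        expZeta (((ℓ : ℝ)/q : ℝ) : UnitAddCircle) (s - z) *
          expZeta (((a : ℝ) * ℓ / q : ℝ) : UnitAddCircle) (s + z)) =
      (q : ℂ) ^ (z - s) * Complex.Gamma (1 - s + z) * (2 * π : ℂ) ^ (s - 1 - z) *
        (Complex.exp (π * Complex.I * (1 - s + z)/2) *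
            (∑' n : ℕ, estTerm (s + z) (2*s - 1) ((a : ℝ)/q) n) +
          Complex.exp (-(π * Complex.I * (1 - s + z))/2) *
            (∑' n : ℕ, estTerm (s + z) (2*s - 1) (-((a : ℝ)/q)) n)) := by
  have : NeZero q := ⟨hq.ne'⟩
  have hq0 : (q : ℂ) ≠ 0 := NeZero.ne _
  have hu : 1 < (s + z).re := by rw [add_re]; linarith
  have hw : 1 < (1 - s + z).re := by rw [add_re, sub_re, one_re]; linarith
  have hα : 2 * s - 1 = s + z - (1 - s + z) := by ring
  have summable (x : ℝ) : Summable fun n ↦ ‖estTerm (s + z) (2 * s - 1) x n‖ :=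
    (hasSum_estTerm hu (by rwa [hα, sub_sub_cancel]) x).summable.norm
  refine ⟨summable _, summable _, ?_⟩
  rw [sum_Icc_expZeta_mul_expZeta, show s - z = 1 - (1 - s + z) by ring,
    sum_expZeta_mul_expZeta a hu hw, ← hα, show z - s = 1 - s + z - 1 by ring,
    cpow_sub _ _ hq0, cpow_one, show s - 1 - z = -(1 - s + z) by ring]
  ring

/-- Lemma 2 of the paper: the bilinear sum of periodic zeta functions in terms of the
Estermann function. -/
theorem periodic_zeta_sum_eq_estermann (q : ℕ) (hq : 0 < q) (a : ℤ)
    (hco : IsCoprime a (q : ℤ)) (s z : ℂ) (h1 : 1 - z.re < s.re) (h2 : s.re < z.re) :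
    Summable (fun n : ℕ => ‖estTerm (s + z) (2*s - 1) ((a : ℝ)/q) n‖) ∧
    Summable (fun n : ℕ => ‖estTerm (s + z) (2*s - 1) (-((a : ℝ)/q)) n‖) ∧
    (1/(q : ℂ)) * (∑ ℓ ∈ Finset.Icc 1 q,
        expZeta (((ℓ : ℝ)/q : ℝ) : UnitAddCircle) (s - z) *
          expZeta (((a : ℝ) * ℓ / q : ℝ) : UnitAddCircle) (s + z)) =
      (q : ℂ) ^ (z - s) * Complex.Gamma (1 - s + z) * (2 * π : ℂ) ^ (s - 1 - z) *
        (Complex.exp (π * Complex.I * (1 - s + z)/2) *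
            (∑' n : ℕ, estTerm (s + z) (2*s - 1) ((a : ℝ)/q) n) +
          Complex.exp (-(π * Complex.I * (1 - s + z))/2) *
            (∑' n : ℕ, estTerm (s + z) (2*s - 1) (-((a : ℝ)/q)) n)) :=
  periodic_zeta_sum_eq_estermann_general q hq a s z h1 h2
end

section
/- Let q be a positive integer, a an integer coprime to q, and s, z ∈ ℂ with 1 − Re(z) < Re(s) < Re(z). Then Σ_{r=1}^{q} Σ_{ℓ=1}^{q} e^{2πi·rℓa/q}·ζ_H(1−s+z, ℓ/q)·ζ_H(s+z, r/q) = q^{1+2z}·D(s+z, 2s−1; a/q), where all series involved converge absolutely (note Re(1−s+z) > 1 and Re(s+z) > 1). -/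
open Complex Real Finset

/-- The Hurwitz zeta series `ζ_H(w,x) = ∑_{n≥0} (n+x)^{-w}` (as a `tsum`). -/
noncomputable def hurwitzSeries (w : ℂ) (x : ℝ) : ℂ := ∑' n : ℕ, ((n : ℂ) + x) ^ (-w)

/-!
By absolute convergence the Dirichlet series of `Φ(n) σ_α(n)`, for `Φ` periodic modulo `q`, may be
summed over factorizations `n = c d`. Sorting these by the residue class `r` of `d` turns
`Φ(c d) = Φ(r c)` into a function of `c` alone, so that each class contributes a Dirichlet
convolution of two periodic sequences, whose L-series are combinations of Hurwitz zeta functions.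
The Estermann function is the case where `Φ` is the additive character `n ↦ e^{2πina/q}`.
-/

section ZMod

open HurwitzZeta (hurwitzZeta)
open ZMod (LFunction stdAddChar toAddCircle)
open scoped LSeries.notation

theorem summable_norm_natCast_add_cpow_neg {w : ℂ} (hw : 1 < w.re) {x : ℝ} (hx : 0 < x) :
    Summable fun n : ℕ ↦ ‖((n : ℂ) + x) ^ (-w)‖ := by
  refine ((Real.summable_one_div_nat_add_rpow x w.re).2 hw).congr fun n ↦ ?_
  have hpos : 0 < n + x := by positivity
  rw [← ofReal_natCast, ← ofReal_add, norm_cpow_eq_rpow_re_of_pos hpos, abs_of_pos hpos, neg_re,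
    Real.rpow_neg hpos.le, one_div]

theorem hurwitzSeries_eq_hurwitzZeta {w : ℂ} (hw : 1 < w.re) {x : ℝ} (hx : x ∈ Set.Icc 0 1) :
    hurwitzSeries w x = hurwitzZeta x w := by
  simp only [hurwitzSeries, cpow_neg, ← one_div,
    (HurwitzZeta.hasSum_hurwitzZeta_of_one_lt_re hx hw).tsum_eq]

variable {N : ℕ} [NeZero N]

theorem sum_Icc_one_natCast_zmod {M : Type*} [AddCommMonoid M] (f : ZMod N → M) :
    ∑ r ∈ Icc 1 N, f r = ∑ r, f r := by
  have hinj : Set.InjOn (Nat.cast : ℕ → ZMod N) (Icc 1 N) := by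
    intro r hr t ht hrt
    rw [coe_Icc, Set.mem_Icc] at hr ht
    refine ((ZMod.natCast_eq_natCast_iff r t N).1 hrt).eq_of_abs_lt ?_
    rw [abs_lt]
    omega
  have hsurj : Set.SurjOn (Nat.cast : ℕ → ZMod N) (Icc 1 N) (univ : Finset (ZMod N)) :=
    surjOn_of_injOn_of_card_le _ (fun _ _ ↦ mem_coe.2 (mem_univ _)) hinj (by simp [ZMod.card])
  exact sum_nbij _ (fun _ _ ↦ mem_univ _) hinj hsurj fun _ _ ↦ rfl

theorem hurwitzSeries_natCast_div {w : ℂ} (hw : 1 < w.re) {r : ℕ} (hr : r ≤ N) :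
    hurwitzSeries w (r / N) = hurwitzZeta (toAddCircle (r : ZMod N)) w := by
  have hmem : (r / N : ℝ) ∈ Set.Icc 0 1 :=
    ⟨by positivity, div_le_one_of_le₀ (by exact_mod_cast hr) (by positivity)⟩
  rw [hurwitzSeries_eq_hurwitzZeta hw hmem, ZMod.toAddCircle_natCast]

theorem zmod_LFunction_single (r : ZMod N) (s : ℂ) :
    LFunction (Pi.single r 1) s = N ^ (-s) * hurwitzZeta (toAddCircle r) s := by
  simp [LFunction, Pi.single_apply]

theorem LSeriesHasSum_zmod_LFunction (Φ : ZMod N → ℂ) {s : ℂ} (hs : 1 < s.re) :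
    LSeriesHasSum (Φ ·) s (LFunction Φ s) := by
  rw [ZMod.LFunction_eq_LSeries Φ hs]
  exact (ZMod.LSeriesSummable_of_one_lt_re Φ hs).LSeriesHasSum

theorem LSeries_term_natCast_cpow_mul (f : ℕ → ℂ) (α s : ℂ) (n : ℕ) :
    LSeries.term (fun m ↦ (m : ℂ) ^ α * f m) s n = LSeries.term f (s - α) n := by
  rcases eq_or_ne n 0 with rfl | hn
  · simp only [LSeries.term_zero]
  · have hn' : (n : ℂ) ≠ 0 := Nat.cast_ne_zero.2 hn
    rw [LSeries.term_of_ne_zero hn, LSeries.term_of_ne_zero hn, cpow_sub _ _ hn',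
      div_div_eq_mul_div, mul_comm]

theorem LSeriesHasSum_natCast_cpow_mul_iff {f : ℕ → ℂ} {α s a : ℂ} :
    LSeriesHasSum (fun n ↦ (n : ℂ) ^ α * f n) s a ↔ LSeriesHasSum f (s - α) a := by
  simp only [LSeriesHasSum, funext (LSeries_term_natCast_cpow_mul f α s)]

theorem zmod_mul_sum_divisors_cpow_eq_sum_convolution (Φ : ZMod N → ℂ) (α : ℂ) :
    (fun n : ℕ ↦ Φ n * ∑ d ∈ n.divisors, (d : ℂ) ^ α) =
      ∑ r : ZMod N, (fun c : ℕ ↦ (c : ℂ) ^ α * Φ (r * c)) ⍟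
        fun d : ℕ ↦ (Pi.single r 1 : ZMod N → ℂ) d := by
  ext n
  simp only [LSeries.convolution_def, Finset.sum_apply]
  rw [sum_comm, ← Nat.sum_divisorsAntidiagonal fun c _ ↦ (c : ℂ) ^ α, mul_sum]
  refine sum_congr rfl fun p hp ↦ ?_
  have hn : p.1 * p.2 = n := (Nat.mem_divisorsAntidiagonal.1 hp).1
  simp [Pi.single_apply, ← hn, mul_comm]

theorem LSeriesHasSum_zmod_mul_sum_divisors_cpow (Φ : ZMod N → ℂ) {s α : ℂ} (hs : 1 < s.re)
    (hsα : 1 < (s - α).re) :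
    LSeriesHasSum (fun n ↦ Φ n * ∑ d ∈ n.divisors, (d : ℂ) ^ α) s
      (N ^ (α - 2 * s) * ∑ r : ZMod N, ∑ l : ZMod N, Φ (r * l) *
        hurwitzZeta (toAddCircle l) (s - α) * hurwitzZeta (toAddCircle r) s) := by
  have hclass (r : ZMod N) :
      LSeriesHasSum ((fun c : ℕ ↦ (c : ℂ) ^ α * Φ (r * c)) ⍟
          fun d : ℕ ↦ (Pi.single r 1 : ZMod N → ℂ) d) s
        (LFunction (fun l ↦ Φ (r * l)) (s - α) * LFunction (Pi.single r 1) s) :=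
    (LSeriesHasSum_natCast_cpow_mul_iff.2
      (LSeriesHasSum_zmod_LFunction (fun l ↦ Φ (r * l)) hsα)).convolution
        (LSeriesHasSum_zmod_LFunction (Pi.single r 1) hs)
  have hpow : (N : ℂ) ^ (α - 2 * s) = N ^ (-(s - α)) * N ^ (-s) := by
    rw [← cpow_add _ _ (NeZero.ne (N : ℂ))]
    ring_nf
  rw [zmod_mul_sum_divisors_cpow_eq_sum_convolution]
  convert! LSeriesHasSum.sum fun r (_ : r ∈ univ) ↦ hclass r using 1
  rw [hpow, mul_sum]
  refine sum_congr rfl fun r _ ↦ ?_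
  rw [zmod_LFunction_single, LFunction, ← sum_mul]
  ring

theorem estTerm_intCast_div (u α : ℂ) (a : ℤ) :
    estTerm u α (a / N) = LSeries.term
      (fun n ↦ stdAddChar (a * n : ZMod N) * ∑ d ∈ n.divisors, (d : ℂ) ^ α) u := by
  ext n
  have hexp : stdAddChar (a * n : ZMod N) = exp (2 * π * I * n * (a / N : ℝ)) := by
    convert ZMod.stdAddChar_coe (N := N) (a * n) using 2 <;> push_cast <;> ring
  rw [LSeries.term_def₀ (by simp), estTerm, hexp]

theorem sum_exp_mul_hurwitzSeries_mul_hurwitzSeries (a : ℤ) {u v : ℂ} (hu : 1 < u.re)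
    (hv : 1 < v.re) :
    ∑ r ∈ Icc 1 N, ∑ l ∈ Icc 1 N,
        exp (2 * π * I * r * l * a / N) * hurwitzSeries u (l / N) * hurwitzSeries v (r / N) =
      ∑ r : ZMod N, ∑ l : ZMod N, stdAddChar ((a : ZMod N) * (r * l)) *
        hurwitzZeta (toAddCircle l) u * hurwitzZeta (toAddCircle r) v := by
  have hexp (r l : ℕ) :
      exp (2 * π * I * r * l * a / N) = stdAddChar (a * (r * l) : ZMod N) := by
    convert (ZMod.stdAddChar_coe (N := N) (a * (r * l))).symm using 2 <;> push_cast <;> ring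
  simp only [← sum_Icc_one_natCast_zmod]
  refine sum_congr rfl fun r hr ↦ sum_congr rfl fun l hl ↦ ?_
  rw [hexp, hurwitzSeries_natCast_div hu (mem_Icc.1 hl).2,
    hurwitzSeries_natCast_div hv (mem_Icc.1 hr).2]

end ZMod

theorem hurwitz_sum_eq_estermann_general {q : ℕ} (hq : 0 < q) (a : ℤ)
    {s z : ℂ} (h1 : 1 - z.re < s.re) (h2 : s.re < z.re) :
    (∀ x : ℝ, 0 < x →
      Summable (fun n : ℕ => ‖((n : ℂ) + x) ^ (-(1 - s + z))‖)) ∧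
    (∀ x : ℝ, 0 < x →
      Summable (fun n : ℕ => ‖((n : ℂ) + x) ^ (-(s + z))‖)) ∧
    Summable (fun n : ℕ => ‖estTerm (s + z) (2*s - 1) ((a : ℝ)/q) n‖) ∧
    (∑ r ∈ Finset.Icc 1 q, ∑ ℓ ∈ Finset.Icc 1 q,
        Complex.exp (2 * π * Complex.I * r * ℓ * a / q) *
          hurwitzSeries (1 - s + z) ((ℓ : ℝ)/q) * hurwitzSeries (s + z) ((r : ℝ)/q)) =
      (q : ℂ) ^ (1 + 2*z) * ∑' n : ℕ, estTerm (s + z) (2*s - 1) ((a : ℝ)/q) n := by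
  have : NeZero q := ⟨hq.ne'⟩
  have hu : 1 < (1 - s + z).re := by simp only [add_re, sub_re, one_re]; linarith
  have hv : 1 < (s + z).re := by rw [add_re]; linarith
  have hα : s + z - (2 * s - 1) = 1 - s + z := by ring
  have hD := LSeriesHasSum_zmod_mul_sum_divisors_cpow
    (fun j : ZMod q ↦ ZMod.stdAddChar ((a : ZMod q) * j)) hv (by rwa [hα])
  rw [LSeriesHasSum, ← estTerm_intCast_div, hα] at hD
  refine ⟨fun x ↦ summable_norm_natCast_add_cpow_neg hu,
    fun x ↦ summable_norm_natCast_add_cpow_neg hv, hD.summable.norm, ?_⟩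
  have hpow : (q : ℂ) ^ (1 + 2 * z) * q ^ (2 * s - 1 - 2 * (s + z)) = 1 := by
    rw [← cpow_add _ _ (NeZero.ne (q : ℂ)), ← cpow_zero (q : ℂ)]
    ring_nf
  rw [hD.tsum_eq, ← mul_assoc, hpow, one_mul, sum_exp_mul_hurwitzSeries_mul_hurwitzSeries a hu hv]

/-- The bilinear sum of Hurwitz zeta values equals `q^{1+2z} D(s+z, 2s-1; a/q)`. -/
theorem hurwitz_sum_eq_estermann (q : ℕ) (hq : 0 < q) (a : ℤ)
    (hco : IsCoprime a (q : ℤ)) (s z : ℂ) (h1 : 1 - z.re < s.re) (h2 : s.re < z.re) :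
    (∀ x : ℝ, 0 < x → x ≤ 1 →
      Summable (fun n : ℕ => ‖((n : ℂ) + x) ^ (-(1 - s + z))‖)) ∧
    (∀ x : ℝ, 0 < x → x ≤ 1 →
      Summable (fun n : ℕ => ‖((n : ℂ) + x) ^ (-(s + z))‖)) ∧
    Summable (fun n : ℕ => ‖estTerm (s + z) (2*s - 1) ((a : ℝ)/q) n‖) ∧
    (∑ r ∈ Finset.Icc 1 q, ∑ ℓ ∈ Finset.Icc 1 q,
        Complex.exp (2 * π * Complex.I * r * ℓ * a / q) *
          hurwitzSeries (1 - s + z) ((ℓ : ℝ)/q) * hurwitzSeries (s + z) ((r : ℝ)/q)) =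
      (q : ℂ) ^ (1 + 2*z) * ∑' n : ℕ, estTerm (s + z) (2*s - 1) ((a : ℝ)/q) n := by
  obtain ⟨hu, hv, hD⟩ := hurwitz_sum_eq_estermann_general hq a h1 h2
  exact ⟨fun x hx _ ↦ hu x hx, fun x hx _ ↦ hv x hx, hD⟩
end

section
/- Let s ∈ ℂ with |Re(s)| < 1/2 and s ≠ 0, let z ∈ ℂ with Im(z) > 0, and let δ satisfy |Re(s)| < δ < 1/2. Then the series over j below converges and S_0(s, z) = Σ_{j=0}^∞ ((−1)^j·Q_{2j}(s)/j!)·[ z^j·S_j(s, −1/z) − Σ_{ℓ=0}^j ((−1)^{j−ℓ}/(j−ℓ)!)·ζ(1/2+ℓ+s)·ζ(1/2+ℓ−s)·(z/(2πi))^ℓ − Γ(1/2+s−j)·ζ(1+2s)·(2πi/z)^{−1/2−s} − Γ(1/2−s−j)·ζ(1−2s)·(2πi/z)^{−1/2+s} ] + Z(s, z), where Z(s, z) := (1/2π)·∫_ℝ Γ(w)·(cos(πs)/sin(πw))·ζ(1/2+w−s)·ζ(1/2+w+s)·(−2πiz)^{−w} dt with w = 1/2 + δ + it (an absolutely convergent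 integral). -/
open Complex Real Finset MeasureTheory

/-- `S_j(s,z) = (2πi)^{-j} ∑_{n≥1} e^{2πinz} σ_{2s}(n) n^{-(s+1/2+j)}`. -/
noncomputable def Sfun (j : ℕ) (s z : ℂ) : ℂ :=
  (1/(2 * π * Complex.I)^j) *
    ∑' n : ℕ, Complex.exp (2 * π * Complex.I * n * z) *
      (∑ d ∈ n.divisors, (d:ℂ)^(2*s)) * (n:ℂ) ^ (-(s + 1/2 + j))

/-- `Q_{2j}(s) = ∏_{ℓ=0}^{j-1} ((ℓ+1/2)² - s²)`. -/
noncomputable def Q2 (j : ℕ) (s : ℂ) : ℂ :=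
  ∏ ℓ ∈ Finset.range j, (((ℓ:ℂ) + 1/2)^2 - s^2)

/-- `(2πi/z)^w := exp(w (log 2π + iπ/2 - Log z))`. -/
noncomputable def pow1 (z w : ℂ) : ℂ :=
  Complex.exp (w * ((Real.log (2*π) : ℂ) + π * Complex.I/2 - Complex.log z))

/-- `(-2πiz)^{-w} := exp(-w (log 2π + Log z - iπ/2))`. -/
noncomputable def pow2 (z w : ℂ) : ℂ :=
  Complex.exp (-w * ((Real.log (2*π) : ℂ) + Complex.log z - π * Complex.I/2))

/-- The integrand of `Z(s,z)` on the line `Re w = 1/2 + δ`, as a function of `t = Im w`. -/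
noncomputable def Zigrand (s z : ℂ) (δ : ℝ) (t : ℝ) : ℂ :=
  Complex.Gamma ((1/2 + δ : ℝ) + t * Complex.I) *
    (Complex.cos (π * s) / Complex.sin (π * ((1/2 + δ : ℝ) + t * Complex.I))) *
    riemannZeta (1/2 + ((1/2 + δ : ℝ) + t * Complex.I) - s) *
    riemannZeta (1/2 + ((1/2 + δ : ℝ) + t * Complex.I) + s) *
    pow2 z ((1/2 + δ : ℝ) + t * Complex.I)

/-!
By Mellin inversion, `z ^ j * S_j(s, -1/z)` and `S_0(s, z)` are integrals of
`Γ(w - j) e^{-wL} ζ(1/2 + w - s) ζ(1/2 + w + s)` along vertical lines to the right of all poles,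
with `e^L = 2πi/z` and `e^L = -2πiz` respectively. Moving the line for `S_j(s, -1/z)` to
`Re w = -c`, where `1/2 + |Re s| < c < 1`, picks up residues at `0, …, j` and at `1/2 ± s`: the
bracket in the theorem is the integral that remains. After `w ↦ -w` the sum over `j` can be carried
out under the integral sign, since `(-1) ^ j Q_{2j}(s) / j! * Γ(-w - j)` is `Γ(-w)` times the
coefficient of a Gauss hypergeometric series at `1`. Gauss's theorem and the functional equation of
`ζ` then turn the integrand into `1 - cos πs / sin πw` times the integrand for `S_0(s, z)`.
-/

open Filter Asymptotics Topology

section VerticalGrowth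

/-- The filter of neighbourhoods of `± i∞` inside the closed vertical strip `A ≤ Re w ≤ B`.
Bounds on vertical growth are stated as `f =O[stripEnds A B] fun w ↦ rexp (θ * |w.im|)`. -/
def stripEnds (A B : ℝ) : Filter ℂ :=
  comap (fun w ↦ |w.im|) atTop ⊓ 𝓟 (re ⁻¹' Set.Icc A B)

variable {A B C θ θ' : ℝ} {f g : ℂ → ℂ}

theorem tendsto_stripEnds_iff {α : Type*} {l : Filter α} {u : α → ℂ} :
    Tendsto u l (stripEnds A B) ↔
      Tendsto (fun x ↦ |(u x).im|) l atTop ∧ ∀ᶠ x in l, (u x).re ∈ Set.Icc A B := by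
  simp [stripEnds, tendsto_inf, tendsto_comap_iff, Function.comp_def]

theorem tendsto_abs_im_stripEnds : Tendsto (fun w ↦ |w.im|) (stripEnds A B) atTop :=
  (tendsto_stripEnds_iff.1 tendsto_id).1

theorem eventually_re_mem_stripEnds : ∀ᶠ w in stripEnds A B, w.re ∈ Set.Icc A B :=
  (tendsto_stripEnds_iff.1 tendsto_id).2

theorem stripEnds_le_sup : stripEnds A C ≤ stripEnds A B ⊔ stripEnds B C := by
  rw [stripEnds, stripEnds, stripEnds, ← inf_sup_left, sup_principal, ← Set.preimage_union]
  gcongr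
  exact Set.Icc_subset_Icc_union_Icc

theorem tendsto_add_const_stripEnds (a : ℂ) :
    Tendsto (· + a) (stripEnds A B) (stripEnds (A + a.re) (B + a.re)) := by
  refine tendsto_stripEnds_iff.2 ⟨?_, ?_⟩
  · refine tendsto_atTop_mono (fun w ↦ ?_)
      (tendsto_atTop_add_const_right _ (-|a.im|) tendsto_abs_im_stripEnds)
    have := abs_sub (w + a).im a.im
    simp only [add_im, add_sub_cancel_right] at this ⊢
    linarith
  · filter_upwards [eventually_re_mem_stripEnds] with w hw
    simpa using hw

theorem tendsto_const_sub_stripEnds (a : ℝ) :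
    Tendsto (fun w : ℂ ↦ a - w) (stripEnds A B) (stripEnds (a - B) (a - A)) := by
  refine tendsto_stripEnds_iff.2 ⟨by simpa using tendsto_abs_im_stripEnds (A := A) (B := B), ?_⟩
  filter_upwards [eventually_re_mem_stripEnds] with w hw
  rw [Set.mem_Icc] at hw
  simp only [sub_re, ofReal_re, Set.mem_Icc]
  constructor <;> linarith

theorem tendsto_verticalLine_stripEnds {c : ℝ} (hc : c ∈ Set.Icc A B) :
    Tendsto (fun t : ℝ ↦ (c + t * I : ℂ)) (cocompact ℝ) (stripEnds A B) := by
  refine tendsto_stripEnds_iff.2 ⟨?_, .of_forall fun t ↦ by simpa using hc⟩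
  simpa [← Real.norm_eq_abs, -cocompact_eq_atBot_atTop] using tendsto_norm_cocompact_atTop (E := ℝ)

theorem exp_isBigO_stripEnds (h : θ ≤ θ') :
    (fun w ↦ rexp (θ * |w.im|)) =O[stripEnds A B] fun w ↦ rexp (θ' * |w.im|) := by
  refine .of_norm_le fun w ↦ ?_
  rw [Real.norm_eq_abs, Real.abs_exp]
  gcongr

theorem isBigO_exp_mul (hf : f =O[stripEnds A B] fun w ↦ rexp (θ * |w.im|))
    (hg : g =O[stripEnds A B] fun w ↦ rexp (θ' * |w.im|)) :
    (fun w ↦ f w * g w) =O[stripEnds A B] fun w ↦ rexp ((θ + θ') * |w.im|) := by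
  simpa only [← Real.exp_add, ← add_mul] using hf.mul hg

theorem isBigO_exp_comp_add_const (a : ℂ)
    (hf : f =O[stripEnds (A + a.re) (B + a.re)] fun w ↦ rexp (θ * |w.im|)) :
    (fun w ↦ f (w + a)) =O[stripEnds A B] fun w ↦ rexp (θ * |w.im|) := by
  refine (hf.comp_tendsto (tendsto_add_const_stripEnds a)).trans
    (.of_bound (rexp (|θ| * |a.im|)) (.of_forall fun w ↦ ?_))
  have him : |(|(w + a).im| - |w.im|)| ≤ |a.im| := by
    simpa using abs_abs_sub_abs_le (w + a).im w.im
  have : θ * (|(w + a).im| - |w.im|) ≤ |θ| * |a.im| :=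
    (le_abs_self _).trans (by rw [abs_mul]; gcongr)
  simp only [Function.comp_apply, Real.norm_eq_abs, Real.abs_exp, ← Real.exp_add]
  gcongr
  linarith

theorem isBigO_exp_comp_const_sub (a : ℝ)
    (hf : f =O[stripEnds (a - B) (a - A)] fun w ↦ rexp (θ * |w.im|)) :
    (fun w ↦ f (a - w)) =O[stripEnds A B] fun w ↦ rexp (θ * |w.im|) := by
  simpa [Function.comp_def] using hf.comp_tendsto (tendsto_const_sub_stripEnds a)

theorem cexp_neg_mul_isBigO_stripEnds (L : ℂ) :
    (fun w ↦ cexp (-w * L)) =O[stripEnds A B] fun w ↦ rexp (|L.im| * |w.im|) := by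
  refine .of_bound (rexp (max |A| |B| * |L.re|)) ?_
  filter_upwards [eventually_re_mem_stripEnds] with w hw
  rw [Complex.norm_exp, Real.norm_eq_abs, Real.abs_exp, ← Real.exp_add]
  gcongr
  calc (-w * L).re = -(w.re * L.re) + w.im * L.im := by simp; ring
    _ ≤ |w.re| * |L.re| + |L.im| * |w.im| := by
        rw [← abs_mul, ← abs_mul, mul_comm L.im]
        exact add_le_add (neg_le_abs _) (le_abs_self _)
    _ ≤ max |A| |B| * |L.re| + |L.im| * |w.im| := by
        gcongr
        exact abs_le_max_abs_abs hw.1 hw.2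

end VerticalGrowth

section GammaIntegral

variable {a r : ℂ}

theorem norm_cpow_mul_cexp {t : ℝ} (ht : 0 < t) :
    ‖(t : ℂ) ^ (a - 1) * cexp (-(r * t))‖ = t ^ (a.re - 1) * rexp (-(r.re * t)) := by
  rw [norm_mul, norm_cpow_eq_rpow_re_of_pos ht, Complex.norm_exp]
  simp

theorem aestronglyMeasurable_cpow_mul_cexp :
    AEStronglyMeasurable (fun t : ℝ ↦ (t : ℂ) ^ (a - 1) * cexp (-(r * t)))
      (volume.restrict (Set.Ioi 0)) := by
  refine ContinuousOn.aestronglyMeasurable (fun t ht ↦ ContinuousAt.continuousWithinAt ?_)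
    measurableSet_Ioi
  exact (continuousAt_ofReal_cpow_const t _ (.inr ht.ne')).mul (by fun_prop)

theorem integrableOn_rpow_mul_exp_neg_mul {x c : ℝ} (hx : 0 < x) (hc : 0 < c) :
    IntegrableOn (fun t : ℝ ↦ t ^ (x - 1) * rexp (-(c * t))) (Set.Ioi 0) := by
  simpa using integrableOn_rpow_mul_exp_neg_mul_rpow (by linarith : -1 < x - 1) one_pos hc

theorem integrableOn_cpow_mul_cexp (ha : 0 < a.re) (hr : 0 < r.re) :
    IntegrableOn (fun t : ℝ ↦ (t : ℂ) ^ (a - 1) * cexp (-(r * t))) (Set.Ioi 0) := by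
  refine (integrableOn_rpow_mul_exp_neg_mul ha hr).mono' aestronglyMeasurable_cpow_mul_cexp ?_
  filter_upwards [ae_restrict_mem measurableSet_Ioi] with t ht
  rw [norm_cpow_mul_cexp ht]

theorem differentiableAt_integral_cpow_mul_cexp (ha : 0 < a.re) (hr : 0 < r.re) :
    DifferentiableAt ℂ (fun r ↦ ∫ t in Set.Ioi (0 : ℝ), (t : ℂ) ^ (a - 1) * cexp (-(r * t))) r := by
  refine (hasDerivAt_integral_of_dominated_loc_of_deriv_le
    (F := fun r t ↦ (t : ℂ) ^ (a - 1) * cexp (-(r * t)))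
    (F' := fun r t ↦ -((t : ℂ) ^ ((a + 1) - 1) * cexp (-(r * t))))
    (bound := fun t ↦ t ^ ((a + 1).re - 1) * rexp (-(r.re / 2 * t)))
    ((isOpen_lt continuous_const continuous_re).mem_nhds (half_lt_self hr))
    (.of_forall fun _ ↦ aestronglyMeasurable_cpow_mul_cexp) (integrableOn_cpow_mul_cexp ha hr)
    aestronglyMeasurable_cpow_mul_cexp.neg ?_
    (integrableOn_rpow_mul_exp_neg_mul (by simp; linarith) (half_pos hr)) ?_).2.differentiableAt
  · filter_upwards [ae_restrict_mem measurableSet_Ioi] with t ht x hx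
    have ht : 0 < t := ht
    rw [norm_neg, norm_cpow_mul_cexp ht]
    gcongr
  · filter_upwards [ae_restrict_mem measurableSet_Ioi] with t ht x _
    have ht : (t : ℂ) ≠ 0 := ofReal_ne_zero.2 (Set.mem_Ioi.1 ht).ne'
    refine ((((hasDerivAt_id' x).mul_const (t : ℂ)).neg.cexp.const_mul _)).congr_deriv ?_
    rw [show a + 1 - 1 = a - 1 + 1 by ring, cpow_add _ _ ht, cpow_one, Pi.neg_apply]
    ring

theorem eqOn_re_pos_of_eq_ofReal {E : Type*} [NormedAddCommGroup E] [NormedSpace ℂ E]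
    [CompleteSpace E] {f g : ℂ → E} (hf : DifferentiableOn ℂ f {r | 0 < r.re})
    (hg : DifferentiableOn ℂ g {r | 0 < r.re}) (h : ∀ x : ℝ, 0 < x → f x = g x) :
    Set.EqOn f g {r | 0 < r.re} := by
  have ho : IsOpen {r : ℂ | 0 < r.re} := isOpen_lt continuous_const continuous_re
  refine (hf.analyticOnNhd ho).eqOn_of_preconnected_of_frequently_eq (hg.analyticOnNhd ho)
    (convex_halfSpace_re_gt 0).isPreconnected (z₀ := 1) (by simp) ?_
  have hlim : Tendsto ((↑) : ℝ → ℂ) (𝓝[≠] 1) (𝓝[≠] 1) :=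
    tendsto_nhdsWithin_iff.2 ⟨(continuous_ofReal.tendsto' 1 1 (by simp)).mono_left
      nhdsWithin_le_nhds, by simpa using! self_mem_nhdsWithin⟩
  refine hlim.frequently (Eventually.frequently ?_)
  filter_upwards [nhdsWithin_le_nhds (lt_mem_nhds one_pos)] with x hx
  exact h x hx

theorem integral_cpow_mul_cexp_neg_mul_Ioi (ha : 0 < a.re) (hr : 0 < r.re) :
    ∫ t in Set.Ioi (0 : ℝ), (t : ℂ) ^ (a - 1) * cexp (-(r * t)) =
      (1 / r) ^ a * Complex.Gamma a := by
  refine eqOn_re_pos_of_eq_ofReal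
    (f := fun r ↦ ∫ t in Set.Ioi (0 : ℝ), (t : ℂ) ^ (a - 1) * cexp (-(r * t)))
    (g := fun r ↦ (1 / r) ^ a * Complex.Gamma a)
    (fun r hr ↦ (differentiableAt_integral_cpow_mul_cexp ha hr).differentiableWithinAt)
    (fun r (hr : 0 < r.re) ↦ ?_) (fun x hx ↦ integral_cpow_mul_exp_neg_mul_Ioi ha hx) hr
  have hr0 : r ≠ 0 := by rintro rfl; simp at hr
  refine (((differentiableAt_const _).div differentiableAt_id hr0).cpow_const
    (.inl ?_)).mul_const _ |>.differentiableWithinAt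
  simpa [inv_re] using div_pos hr (normSq_pos.2 hr0)

end GammaIntegral

section GammaGrowth

variable {φ : ℝ}

/- Rotating the ray of integration in Euler's integral through the angle `± φ`, with the sign of
`w.im`, gains the factor `exp (φ * |w.im|)`. -/
theorem norm_Gamma_le {w : ℂ} (hw : 0 < w.re) (h0 : 0 ≤ φ) (h1 : φ < π / 2) :
    ‖Complex.Gamma w‖ ≤ (1 / Real.cos φ) ^ w.re * Real.Gamma w.re * rexp (-φ * |w.im|) := by
  obtain ⟨ψ, hψ, hψw⟩ : ∃ ψ : ℝ, |ψ| = φ ∧ ψ * w.im = φ * |w.im| := by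
    rcases le_total 0 w.im with h | h
    · exact ⟨φ, abs_of_nonneg h0, by rw [abs_of_nonneg h]⟩
    · exact ⟨-φ, by rw [abs_neg, abs_of_nonneg h0], by rw [abs_of_nonpos h]; ring⟩
  have hcos : 0 < Real.cos φ := Real.cos_pos_of_mem_Ioo ⟨by linarith [Real.pi_pos], h1⟩
  have hre : (cexp (ψ * I)).re = Real.cos φ := by
    rw [exp_ofReal_mul_I_re, ← hψ, Real.cos_abs]
  have hpow : ‖((1 : ℂ) / cexp (ψ * I)) ^ w‖ = rexp (φ * |w.im|) := by
    have := abs_le.1 hψ.le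
    rw [one_div, ← Complex.exp_neg, cpow_def_of_ne_zero (Complex.exp_ne_zero _), log_exp
      (by simp; linarith [Real.pi_pos]) (by simp; linarith [Real.pi_pos]), Complex.norm_exp, ← hψw]
    simp
  have hint : ‖((1 : ℂ) / cexp (ψ * I)) ^ w * Complex.Gamma w‖
      ≤ (1 / Real.cos φ) ^ w.re * Real.Gamma w.re := by
    rw [← integral_cpow_mul_cexp_neg_mul_Ioi hw (hre ▸ hcos),
      ← Real.integral_rpow_mul_exp_neg_mul_Ioi hw hcos]
    refine (norm_integral_le_integral_norm _).trans_eq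
      (setIntegral_congr_fun measurableSet_Ioi fun t ht ↦ ?_)
    rw [norm_cpow_mul_cexp ht, hre]
  rw [norm_mul, hpow] at hint
  rwa [neg_mul, Real.exp_neg, ← div_eq_mul_inv, le_div_iff₀ (Real.exp_pos _), mul_comm]

theorem norm_Gamma_le_norm_Gamma_add_natCast (n : ℕ) {w : ℂ} (hw : 1 ≤ |w.im|) :
    ‖Complex.Gamma w‖ ≤ ‖Complex.Gamma (w + n)‖ := by
  induction n with
  | zero => simp
  | succ n ih =>
    have hwn : 1 ≤ ‖w + n‖ := hw.trans (by simpa using abs_im_le_norm (w + n))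
    rw [Nat.cast_succ, ← add_assoc, Gamma_add_one _ (norm_pos_iff.1 (by linarith)), norm_mul]
    exact ih.trans (le_mul_of_one_le_left (norm_nonneg _) hwn)

theorem Gamma_isBigO_stripEnds_of_pos {A : ℝ} (hA : 0 < A) (B : ℝ) (h0 : 0 ≤ φ)
    (h1 : φ < π / 2) :
    Complex.Gamma =O[stripEnds A B] fun w ↦ rexp (-φ * |w.im|) := by
  have hcos : 0 < Real.cos φ := Real.cos_pos_of_mem_Ioo ⟨by linarith [Real.pi_pos], h1⟩
  have hcont : ContinuousOn (fun x ↦ (1 / Real.cos φ) ^ x * Real.Gamma x) (Set.Icc A B) :=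
    (Real.continuous_const_rpow (by positivity)).continuousOn.mul fun x hx ↦
      (Real.differentiableAt_Gamma fun m ↦ by
        linarith [hx.1, (Nat.cast_nonneg m : (0 : ℝ) ≤ m)]).continuousAt.continuousWithinAt
  obtain ⟨C, hC⟩ := isCompact_Icc.exists_bound_of_continuousOn hcont
  refine .of_bound C ?_
  filter_upwards [eventually_re_mem_stripEnds] with w hw
  rw [Real.norm_eq_abs, Real.abs_exp]
  refine (norm_Gamma_le (hA.trans_le hw.1) h0 h1).trans ?_
  gcongr
  exact (le_abs_self _).trans (hC _ hw)

theorem Gamma_isBigO_stripEnds (A B : ℝ) (h0 : 0 ≤ φ) (h1 : φ < π / 2) :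
    Complex.Gamma =O[stripEnds A B] fun w ↦ rexp (-φ * |w.im|) := by
  obtain ⟨n, hn⟩ := exists_nat_gt (-A)
  have hshift := isBigO_exp_comp_add_const (A := A) (B := B) (n : ℂ)
    (Gamma_isBigO_stripEnds_of_pos (by simp; linarith) _ h0 h1)
  refine .trans (.of_bound 1 ?_) hshift
  filter_upwards [tendsto_abs_im_stripEnds.eventually_ge_atTop 1] with w hw
  simpa using norm_Gamma_le_norm_Gamma_add_natCast n hw

end GammaGrowth

section ZetaGrowth

/-- The fractional part on `(1, ∞)`, extended by `0`: its Mellin transform carries the integral in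
`ζ(u) = u / (u - 1) - u ∫₁^∞ {t} t^(-u-1) dt`. -/
noncomputable def fractTail : ℝ → ℂ :=
  (Set.Ioi 1).indicator fun t ↦ ((Int.fract t : ℝ) : ℂ)

theorem norm_ofReal_fract_le_one (t : ℝ) : ‖((Int.fract t : ℝ) : ℂ)‖ ≤ 1 := by
  rw [norm_real, Real.norm_of_nonneg (Int.fract_nonneg t)]
  exact (Int.fract_lt_one t).le

theorem norm_fractTail_le_one (t : ℝ) : ‖fractTail t‖ ≤ 1 :=
  (norm_indicator_le_norm_self _ _).trans (norm_ofReal_fract_le_one t)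

theorem measurable_fractTail : Measurable fractTail :=
  (measurable_ofReal.comp measurable_fract).indicator measurableSet_Ioi

theorem differentiableAt_mellin_fractTail {u : ℂ} (hu : u.re < 0) :
    DifferentiableAt ℂ (mellin fractTail) u := by
  refine mellin_differentiableAt_of_isBigO_rpow (a := 0) (b := u.re - 1) ?_
    (.of_bound 1 (.of_forall fun t ↦ by simpa using norm_fractTail_le_one t)) hu
    (.of_bound 1 ?_) (by linarith)
  · exact ((locallyIntegrable_const (1 : ℝ)).mono measurable_fractTail.aestronglyMeasurable
      (.of_forall fun t ↦ by simpa using norm_fractTail_le_one t)).locallyIntegrableOn _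
  · filter_upwards [nhdsWithin_le_nhds (eventually_lt_nhds one_pos)] with t ht
    rw [fractTail, Set.indicator_of_notMem (by simpa using ht.le), norm_zero]
    positivity

theorem mellin_fractTail_neg (u : ℂ) :
    mellin fractTail (-u) =
      ∫ t in Set.Ioi (1 : ℝ), ((Int.fract t : ℝ) : ℂ) * (t : ℂ) ^ (-(u + 1)) := by
  have h (t : ℝ) : (t : ℂ) ^ (-u - 1) • fractTail t =
      (Set.Ioi 1).indicator (fun t : ℝ ↦ ((Int.fract t : ℝ) : ℂ) * (t : ℂ) ^ (-(u + 1))) t := by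
    simp only [fractTail, Set.indicator_apply, neg_add' u]
    split_ifs <;> simp [mul_comm]
  simp_rw [mellin, h, setIntegral_indicator measurableSet_Ioi, Set.Ioi_inter_Ioi]
  simp

theorem norm_mellin_fractTail_neg_le {u : ℂ} (hu : 0 < u.re) :
    ‖mellin fractTail (-u)‖ ≤ 1 / u.re := by
  have hval : ∫ t in Set.Ioi (1 : ℝ), t ^ (-(u.re + 1)) = 1 / u.re := by
    rw [integral_Ioi_rpow_of_lt (by linarith) one_pos]
    simp
  rw [mellin_fractTail_neg, ← hval]
  refine norm_integral_le_of_norm_le (integrableOn_Ioi_rpow_of_lt (by linarith) one_pos) ?_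
  filter_upwards [ae_restrict_mem measurableSet_Ioi] with t ht
  rw [norm_mul, norm_cpow_eq_rpow_re_of_pos (one_pos.trans ht), neg_re, add_re, one_re]
  exact mul_le_of_le_one_left (rpow_nonneg (one_pos.trans ht).le _) (norm_ofReal_fract_le_one t)

theorem integral_floor_mul_cpow {u : ℂ} (hu : 1 < u.re) :
    ∫ t in Set.Ioi (1 : ℝ), (⌊t⌋₊ : ℂ) * (t : ℂ) ^ (-(u + 1)) =
      1 / (u - 1) - mellin fractTail (-u) := by
  have hpow : IntegrableOn (fun t : ℝ ↦ (t : ℂ) ^ (-u)) (Set.Ioi 1) :=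
    integrableOn_Ioi_cpow_of_lt (by simpa using hu) one_pos
  have hfract : IntegrableOn
      (fun t : ℝ ↦ ((Int.fract t : ℝ) : ℂ) * (t : ℂ) ^ (-(u + 1))) (Set.Ioi 1) :=
    Integrable.bdd_mul (c := 1)
      (integrableOn_Ioi_cpow_of_lt (by simp; linarith) one_pos)
      (measurable_ofReal.comp measurable_fract).aestronglyMeasurable
      (.of_forall norm_ofReal_fract_le_one)
  have hval : ∫ t in Set.Ioi (1 : ℝ), (t : ℂ) ^ (-u) = 1 / (u - 1) := by
    rw [integral_Ioi_cpow_of_lt (by simpa using hu) one_pos, ofReal_one, one_cpow,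
      ← neg_div_neg_eq]
    ring
  rw [mellin_fractTail_neg, ← hval, ← integral_sub hpow hfract]
  refine setIntegral_congr_fun measurableSet_Ioi fun t ht ↦ ?_
  have ht : 0 < t := one_pos.trans ht
  have hfloor : (⌊t⌋₊ : ℂ) = t - (Int.fract t : ℝ) := by
    rw [← ofReal_natCast, natCast_floor_eq_intCast_floor ht.le, ← ofReal_sub, Int.self_sub_fract]
  rw [hfloor, sub_mul, show -u = 1 + -(u + 1) by ring, cpow_add _ _ (ofReal_ne_zero.2 ht.ne'),
    cpow_one]

theorem riemannZeta_eq_sub_mellin_fractTail_of_one_lt_re {u : ℂ} (hu : 1 < u.re) :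
    riemannZeta u = u / (u - 1) - u * mellin fractTail (-u) := by
  rw [← LSeries_one_eq_riemannZeta hu, LSeries_eq_mul_integral 1 zero_le_one hu
    (LSeriesSummable_one_iff.2 hu) (.of_bound 1 (.of_forall fun n ↦ by simp))]
  simp only [Pi.one_apply, sum_const, Nat.card_Icc, add_tsub_cancel_right, nsmul_eq_mul, mul_one]
  rw [integral_floor_mul_cpow hu]
  ring

/- `riemannZeta₁ u` is the entire completion of `(u - 1) ζ(u)`; working with it lets the identity
principle apply on the whole half-plane. -/
theorem riemannZeta₁_eq_sub_mellin_fractTail {u : ℂ} (hu : 0 < u.re) :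
    riemannZeta₁ u = u - (u - 1) * (u * mellin fractTail (-u)) := by
  have ho : IsOpen {u : ℂ | 0 < u.re} := isOpen_lt continuous_const continuous_re
  have hdiff : DifferentiableOn ℂ (fun u ↦ u - (u - 1) * (u * mellin fractTail (-u)))
      {u | 0 < u.re} := fun u hu ↦ by
    have := (differentiableAt_mellin_fractTail (u := -u) (by simpa using hu)).comp u
      differentiableAt_id.neg
    simp only [Function.comp_def] at this
    exact DifferentiableAt.differentiableWithinAt (by fun_prop)
  refine (differentiable_riemannZeta₁.differentiableOn.analyticOnNhd
    ho).eqOn_of_preconnected_of_eventuallyEq (hdiff.analyticOnNhd ho)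
    (convex_halfSpace_re_gt 0).isPreconnected (z₀ := 2) (by simp) ?_ hu
  filter_upwards [(isOpen_lt continuous_const continuous_re).mem_nhds
    (show (1 : ℝ) < (2 : ℂ).re by simp)] with w (hw : 1 < w.re)
  have hw1 : w - 1 ≠ 0 := sub_ne_zero.2 (by rintro rfl; simp at hw)
  have hζ := riemannZeta_eq_inv_sub_mul (sub_ne_zero.1 hw1)
  rw [riemannZeta_eq_sub_mellin_fractTail_of_one_lt_re hw] at hζ
  field_simp at hζ
  linear_combination -hζ

theorem norm_riemannZeta_le {u : ℂ} (hu : 1 / 2 ≤ u.re) (him : 1 ≤ |u.im|) :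
    ‖riemannZeta u‖ ≤ 3 * ‖u‖ := by
  have hu1 : 1 ≤ ‖u - 1‖ := him.trans (by simpa using abs_im_le_norm (u - 1))
  have hu0 : u - 1 ≠ 0 := norm_pos_iff.1 (by linarith)
  have hζ : riemannZeta u = u / (u - 1) - u * mellin fractTail (-u) := by
    rw [riemannZeta_eq_inv_sub_mul (sub_ne_zero.1 hu0),
      riemannZeta₁_eq_sub_mellin_fractTail (by linarith)]
    field_simp
  have hmellin : ‖mellin fractTail (-u)‖ ≤ 2 := by
    refine (norm_mellin_fractTail_neg_le (by linarith)).trans ?_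
    rw [div_le_iff₀ (by linarith)]
    linarith
  calc ‖riemannZeta u‖ ≤ ‖u‖ / ‖u - 1‖ + ‖u‖ * ‖mellin fractTail (-u)‖ := by
        rw [hζ, ← norm_div, ← norm_mul]
        exact norm_sub_le _ _
    _ ≤ ‖u‖ + ‖u‖ * 2 := by
        gcongr
        exact div_le_self (norm_nonneg _) hu1
    _ = 3 * ‖u‖ := by ring

variable {ε : ℝ}

theorem id_isBigO_stripEnds (A B : ℝ) (hε : 0 < ε) :
    (fun w : ℂ ↦ w) =O[stripEnds A B] fun w ↦ rexp (ε * |w.im|) := by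
  have him : (fun w : ℂ ↦ |w.im|) =O[stripEnds A B] fun w ↦ rexp (ε * |w.im|) := by
    simpa [Function.comp_def] using
      ((isLittleO_rpow_exp_pos_mul_atTop 1 hε).comp_tendsto tendsto_abs_im_stripEnds).isBigO
  refine .trans (.of_bound (max |A| |B| + 1) ?_) him
  filter_upwards [eventually_re_mem_stripEnds, tendsto_abs_im_stripEnds.eventually_ge_atTop 1]
    with w hre him
  rw [norm_of_nonneg (abs_nonneg _)]
  have := abs_le_max_abs_abs hre.1 hre.2
  have := norm_le_abs_re_add_abs_im w
  nlinarith [le_max_left |A| |B|, abs_nonneg A]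

theorem riemannZeta_isBigO_stripEnds_right (B : ℝ) (hε : 0 < ε) :
    riemannZeta =O[stripEnds (1 / 2) B] fun w ↦ rexp (ε * |w.im|) := by
  refine .trans (.of_bound 3 ?_) (id_isBigO_stripEnds (1 / 2) B hε)
  filter_upwards [eventually_re_mem_stripEnds, tendsto_abs_im_stripEnds.eventually_ge_atTop 1]
    with w hre him
  exact norm_riemannZeta_le hre.1 him

theorem norm_cos_le_exp_abs_im (u : ℂ) : ‖Complex.cos u‖ ≤ rexp |u.im| := by
  have h₁ : ‖cexp (u * I)‖ ≤ rexp |u.im| := by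
    rw [Complex.norm_exp]
    gcongr
    simpa using neg_le_abs u.im
  have h₂ : ‖cexp (-u * I)‖ ≤ rexp |u.im| := by
    rw [Complex.norm_exp]
    gcongr
    simpa using le_abs_self u.im
  rw [Complex.cos, norm_div, Complex.norm_ofNat]
  linarith [norm_add_le (cexp (u * I)) (cexp (-u * I))]

theorem cos_isBigO_stripEnds (A B : ℝ) :
    (fun w ↦ Complex.cos (π * w / 2)) =O[stripEnds A B] fun w ↦ rexp (π / 2 * |w.im|) := by
  refine .of_norm_le fun w ↦ (norm_cos_le_exp_abs_im _).trans_eq ?_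
  rw [mul_div_right_comm, ← ofReal_ofNat, ← ofReal_div, im_ofReal_mul, abs_mul,
    abs_of_pos (by positivity)]

theorem riemannZeta_isBigO_stripEnds_left (A : ℝ) (hε : 0 < ε) (hε1 : ε < 1) :
    riemannZeta =O[stripEnds A (1 / 2)] fun w ↦ rexp (ε * |w.im|) := by
  have hprod := ((((isBigO_exp_mul
    (cexp_neg_mul_isBigO_stripEnds (A := 1 / 2) (B := 1 - A) (Real.log (2 * π) : ℝ))
    (Gamma_isBigO_stripEnds _ _ (φ := π / 2 - ε / 2) (by linarith [Real.pi_gt_three])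
      (by linarith)))).const_mul_left 2))
  have hprod := isBigO_exp_mul (isBigO_exp_mul hprod (cos_isBigO_stripEnds _ _))
    (riemannZeta_isBigO_stripEnds_right _ (half_pos hε))
  rw [ofReal_im, abs_zero, show 0 + -(π / 2 - ε / 2) + π / 2 + ε / 2 = ε by ring] at hprod
  refine (isBigO_exp_comp_const_sub (B := 1 / 2) 1 (by norm_num; exact hprod)).congr' ?_ .rfl
  filter_upwards [tendsto_abs_im_stripEnds.eventually_ge_atTop 1] with w him
  have hne (x : ℝ) : 1 - w ≠ x := fun h ↦ by
    have := congr_arg Complex.im h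
    simp only [sub_im, one_im, ofReal_im] at this
    rw [show w.im = 0 by linarith] at him
    simp at him
    linarith
  have hfe := riemannZeta_one_sub (s := 1 - w) (fun n ↦ by simpa using hne (-n))
    (by simpa using hne 1)
  rw [sub_sub_cancel] at hfe
  have hpow : (2 * π : ℂ) ^ (-(1 - w)) = cexp (-(1 - w) * (Real.log (2 * π) : ℝ)) := by
    rw [← ofReal_ofNat, ← ofReal_mul, cpow_def_of_ne_zero (by simp [Real.pi_ne_zero]),
      ofReal_log (by positivity), mul_comm]
  rw [hfe, hpow, ofReal_one]
  ring

theorem riemannZeta_isBigO_stripEnds (A B : ℝ) (hε : 0 < ε) :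
    riemannZeta =O[stripEnds A B] fun w ↦ rexp (ε * |w.im|) := by
  have hδ : 0 < min ε (1 / 2) := by positivity
  have hδ1 : min ε (1 / 2) < 1 := (min_le_right _ _).trans_lt (by norm_num)
  exact ((((riemannZeta_isBigO_stripEnds_left A hδ hδ1).sup
    (riemannZeta_isBigO_stripEnds_right B hδ)).mono stripEnds_le_sup)).trans
    (exp_isBigO_stripEnds (min_le_left _ _))

end ZetaGrowth

section ResidueTheorem

/-- The integral of `f` around the rectangle `[a, b] × [c, d]`, counterclockwise. -/
noncomputable def rectIntegral (f : ℂ → ℂ) (a b c d : ℝ) : ℂ :=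
  (∫ x in a..b, f (x + c * I)) - (∫ x in a..b, f (x + d * I)) +
    I * (∫ y in c..d, f (b + y * I)) - I * ∫ y in c..d, f (a + y * I)

/-- The four sides of the rectangle `[a, b] × [c, d]`. -/
def rectBoundary (a b c d : ℝ) : Set ℂ :=
  {w | w.re ∈ Set.uIcc a b ∧ (w.im = c ∨ w.im = d)} ∪
    {w | w.im ∈ Set.uIcc c d ∧ (w.re = a ∨ w.re = b)}

/-- The residue of `f` at `p`, where `f` is assumed to have at most a simple pole. -/
noncomputable def residue (f : ℂ → ℂ) (p : ℂ) : ℂ :=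
  limUnder (𝓝[≠] p) fun w ↦ (w - p) * f w

variable {f g : ℂ → ℂ} {a b c d : ℝ} {p : ℂ}

theorem intervalIntegrable_sides_of_continuousOn (hf : ContinuousOn f (rectBoundary a b c d)) :
    (IntervalIntegrable (fun x : ℝ ↦ f (x + c * I)) volume a b ∧
      IntervalIntegrable (fun x : ℝ ↦ f (x + d * I)) volume a b) ∧
    IntervalIntegrable (fun y : ℝ ↦ f (b + y * I)) volume c d ∧
      IntervalIntegrable (fun y : ℝ ↦ f (a + y * I)) volume c d := by
  refine ⟨⟨?_, ?_⟩, ?_, ?_⟩ <;>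
    exact (hf.comp (by fun_prop) fun x hx ↦ by simp [rectBoundary, hx]).intervalIntegrable

theorem rectIntegral_add (hf : ContinuousOn f (rectBoundary a b c d))
    (hg : ContinuousOn g (rectBoundary a b c d)) :
    rectIntegral (fun w ↦ f w + g w) a b c d =
      rectIntegral f a b c d + rectIntegral g a b c d := by
  obtain ⟨⟨hf₁, hf₂⟩, hf₃, hf₄⟩ := intervalIntegrable_sides_of_continuousOn hf
  obtain ⟨⟨hg₁, hg₂⟩, hg₃, hg₄⟩ := intervalIntegrable_sides_of_continuousOn hg
  simp only [rectIntegral, intervalIntegral.integral_add hf₁ hg₁,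
    intervalIntegral.integral_add hf₂ hg₂, intervalIntegral.integral_add hf₃ hg₃,
    intervalIntegral.integral_add hf₄ hg₄]
  ring

theorem rectIntegral_const_mul (r : ℂ) :
    rectIntegral (fun w ↦ r * f w) a b c d = r * rectIntegral f a b c d := by
  simp only [rectIntegral, intervalIntegral.integral_const_mul]
  ring

theorem rectIntegral_sum {ι : Type*} (s : Finset ι) {f : ι → ℂ → ℂ}
    (hf : ∀ i ∈ s, ContinuousOn (f i) (rectBoundary a b c d)) :
    rectIntegral (fun w ↦ ∑ i ∈ s, f i w) a b c d = ∑ i ∈ s, rectIntegral (f i) a b c d := by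
  classical
  induction s using Finset.induction_on with
  | empty => simp [rectIntegral]
  | insert i s hi ih =>
    simp only [Finset.forall_mem_insert] at hf
    simp only [Finset.sum_insert hi]
    rw [rectIntegral_add hf.1 (continuousOn_finsetSum _ hf.2), ih hf.2]

theorem rectIntegral_congr (h : Set.EqOn f g (rectBoundary a b c d)) :
    rectIntegral f a b c d = rectIntegral g a b c d := by
  have hbot : ∫ x in a..b, f (x + c * I) = ∫ x in a..b, g (x + c * I) :=
    intervalIntegral.integral_congr fun x hx ↦ h (by simp [rectBoundary, hx])
  have htop : ∫ x in a..b, f (x + d * I) = ∫ x in a..b, g (x + d * I) :=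
    intervalIntegral.integral_congr fun x hx ↦ h (by simp [rectBoundary, hx])
  have hright : ∫ y in c..d, f (b + y * I) = ∫ y in c..d, g (b + y * I) :=
    intervalIntegral.integral_congr fun y hy ↦ h (by simp [rectBoundary, hy])
  have hleft : ∫ y in c..d, f (a + y * I) = ∫ y in c..d, g (a + y * I) :=
    intervalIntegral.integral_congr fun y hy ↦ h (by simp [rectBoundary, hy])
  rw [rectIntegral, hbot, htop, hright, hleft, rectIntegral]

theorem rectIntegral_eq_zero (hf : ∀ w, w.re ∈ Set.uIcc a b → w.im ∈ Set.uIcc c d →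
    DifferentiableAt ℂ f w) : rectIntegral f a b c d = 0 := by
  simpa [rectIntegral] using integral_boundary_rect_eq_zero_of_differentiableOn f ⟨a, c⟩ ⟨b, d⟩
    fun w hw ↦ (hf w hw.1 hw.2).differentiableWithinAt

theorem integral_mul_inv_ofReal_mul_add {u v : ℂ} (h : ∀ t : ℝ, t * u + v ∈ slitPlane) :
    ∫ t in a..b, u * (t * u + v)⁻¹ = Complex.log (b * u + v) - Complex.log (a * u + v) := by
  refine intervalIntegral.integral_eq_sub_of_hasDerivAt
    (f := fun t : ℝ ↦ Complex.log (t * u + v)) (fun t _ ↦ ?_) (ContinuousOn.intervalIntegrable ?_)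
  · simpa [div_eq_mul_inv] using
      (((hasDerivAt_id t).ofReal_comp.mul_const u).add_const v).clog_real (h t)
  · exact continuousOn_const.mul
      (ContinuousOn.inv₀ (by fun_prop) fun t _ ↦ slitPlane_ne_zero (h t))

theorem log_sub_log_neg_of_im_pos {z : ℂ} (hz : 0 < z.im) :
    Complex.log z - Complex.log (-z) = π * I := by
  simp only [Complex.log, norm_neg, arg_neg_eq_arg_sub_pi_of_im_pos hz]
  push_cast
  ring

/- The primitives are branches of `log (w - p)`: the principal one on the bottom, right and top
sides, and `log (p - w)` on the left side, which the cut of the principal branch crosses. -/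
theorem rectIntegral_inv_sub (hpa : a < p.re) (hpb : p.re < b) (hpc : c < p.im) (hpd : p.im < d) :
    rectIntegral (fun w ↦ (w - p)⁻¹) a b c d = 2 * π * I := by
  have hhor {e : ℝ} (he : e ≠ p.im) : ∫ x in a..b, (x + e * I - p)⁻¹ =
      Complex.log (b + e * I - p) - Complex.log (a + e * I - p) := by
    simpa [add_sub_assoc] using integral_mul_inv_ofReal_mul_add (a := a) (b := b) (u := 1)
      (v := e * I - p) fun t ↦ by simp [mem_slitPlane_iff, sub_eq_zero, he]
  have hright : I * ∫ y in c..d, (b + y * I - p)⁻¹ =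
      Complex.log (b + d * I - p) - Complex.log (b + c * I - p) := by
    have heq (y : ℝ) : b + y * I - p = y * I + (b - p) := by ring
    simp only [← intervalIntegral.integral_const_mul, heq]
    exact integral_mul_inv_ofReal_mul_add fun t ↦ by simp [mem_slitPlane_iff, hpb]
  have hleft : I * ∫ y in c..d, (a + y * I - p)⁻¹ =
      Complex.log (-(a + d * I - p)) - Complex.log (-(a + c * I - p)) := by
    have heq (y : ℝ) : -(a + y * I - p) = y * -I + (p - a) := by ring
    have hinv (y : ℝ) : I * (a + y * I - p)⁻¹ = -I * (y * -I + (p - a))⁻¹ := by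
      rw [← heq, inv_neg, neg_mul_neg]
    simp only [← intervalIntegral.integral_const_mul, hinv, heq]
    exact integral_mul_inv_ofReal_mul_add fun t ↦ by simp [mem_slitPlane_iff, hpa]
  have hupper := log_sub_log_neg_of_im_pos (z := a + d * I - p) (by simpa)
  have hlower := log_sub_log_neg_of_im_pos (z := -(a + c * I - p)) (by simpa)
  rw [neg_neg] at hlower
  rw [rectIntegral, hhor hpc.ne, hhor hpd.ne', hright, hleft]
  linear_combination hupper + hlower

theorem tendsto_sub_mul_const_div_sub {q r : ℂ} :
    Tendsto (fun w ↦ (w - p) * (r / (w - q))) (𝓝[≠] p) (𝓝 (if q = p then r else 0)) := by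
  split_ifs with h
  · subst h
    refine tendsto_const_nhds.congr' ?_
    filter_upwards [self_mem_nhdsWithin] with w hw
    rw [mul_div_cancel₀ _ (sub_ne_zero.2 hw)]
  · have : ContinuousAt (fun w ↦ (w - p) * (r / (w - q))) p :=
      .mul (by fun_prop) (.div continuousAt_const (by fun_prop) (sub_ne_zero.2 (Ne.symm h)))
    simpa using this.tendsto.mono_left nhdsWithin_le_nhds

theorem differentiableAt_update_limUnder (hd : ∀ᶠ w in 𝓝[≠] p, DifferentiableAt ℂ f w)
    (h0 : Tendsto (fun w ↦ (w - p) * f w) (𝓝[≠] p) (𝓝 0)) :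
    DifferentiableAt ℂ (Function.update f p (limUnder (𝓝[≠] p) f)) p := by
  obtain ⟨s, hs, hds⟩ := (eventually_nhdsWithin_iff.1 hd).exists_mem
  refine (differentiableOn_update_limUnder_of_isLittleO hs
    (fun w hw ↦ (hds w hw.1 hw.2).differentiableWithinAt) ?_).differentiableAt hs
  have hp : Tendsto (fun w ↦ (w - p) * f p) (𝓝[≠] p) (𝓝 0) :=
    (Continuous.tendsto' (by fun_prop) _ _ (by simp)).mono_left nhdsWithin_le_nhds
  refine (isLittleO_iff_tendsto' ?_).2 ?_
  · filter_upwards [self_mem_nhdsWithin] with w hw h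
    exact absurd (inv_eq_zero.1 h) (sub_ne_zero.2 hw)
  · refine (by simpa using h0.sub hp : Tendsto _ _ (𝓝 (0 : ℂ))).congr fun w ↦ ?_
    rw [div_inv_eq_mul]
    ring

theorem tendsto_residue (h : ∃ r, Tendsto (fun w ↦ (w - p) * f w) (𝓝[≠] p) (𝓝 r)) :
    Tendsto (fun w ↦ (w - p) * f w) (𝓝[≠] p) (𝓝 (residue f p)) :=
  tendsto_nhds_limUnder h

theorem tendsto_sub_mul_sub_sum_residue {P : Finset ℂ} (hp : p ∈ P)
    (h : ∃ r, Tendsto (fun w ↦ (w - p) * f w) (𝓝[≠] p) (𝓝 r)) :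
    Tendsto (fun w ↦ (w - p) * (f w - ∑ q ∈ P, residue f q / (w - q))) (𝓝[≠] p) (𝓝 0) := by
  have hsum := tendsto_finsetSum P fun q _ ↦
    tendsto_sub_mul_const_div_sub (p := p) (q := q) (r := residue f q)
  simpa [mul_sub, Finset.mul_sum, hp] using (tendsto_residue h).sub hsum

/- Riemann's removable singularity theorem, applied to `f` minus its principal parts. -/
theorem exists_differentiableAt_eq_sub_sum_residue {P : Finset ℂ} {U : Set ℂ}
    (hPU : ∀ p ∈ P, U ∈ 𝓝 p) (hf : ∀ w ∈ U, w ∉ P → DifferentiableAt ℂ f w)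
    (hres : ∀ p ∈ P, ∃ r, Tendsto (fun w ↦ (w - p) * f w) (𝓝[≠] p) (𝓝 r)) :
    ∃ g : ℂ → ℂ, (∀ w ∈ U, DifferentiableAt ℂ g w) ∧
      ∀ w ∉ P, g w = f w - ∑ p ∈ P, residue f p / (w - p) := by
  classical
  set h : ℂ → ℂ := fun w ↦ f w - ∑ p ∈ P, residue f p / (w - p)
  have hh : ∀ w ∈ U, w ∉ P → DifferentiableAt ℂ h w := fun w hw hwP ↦
    (hf w hw hwP).sub <| .fun_sum fun p hp ↦ .div (by fun_prop) (by fun_prop) <|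
      sub_ne_zero.2 fun hwp ↦ hwP (hwp ▸ hp)
  have hoff (p : ℂ) : ∀ᶠ w in 𝓝[≠] p, w ∉ P := by
    have : ∀ᶠ w in 𝓝 p, w ∉ P.erase p :=
      (P.erase p).finite_toSet.isClosed.isOpen_compl.mem_nhds (by simp)
    filter_upwards [this.filter_mono nhdsWithin_le_nhds, self_mem_nhdsWithin] with w hw hwp
    exact fun hwP ↦ hw (mem_erase.2 ⟨hwp, hwP⟩)
  set g : ℂ → ℂ := fun w ↦ if w ∈ P then limUnder (𝓝[≠] w) h else h w
  refine ⟨g, fun p hpU ↦ ?_, fun w hw ↦ if_neg hw⟩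
  by_cases hp : p ∈ P
  · have hd : ∀ᶠ w in 𝓝[≠] p, DifferentiableAt ℂ h w := by
      filter_upwards [hoff p, nhdsWithin_le_nhds (hPU p hp)] with w hwP hwU
      exact hh w hwU hwP
    refine (differentiableAt_update_limUnder hd (tendsto_sub_mul_sub_sum_residue hp (hres p hp))
      ).congr_of_eventuallyEq ?_
    filter_upwards [eventually_nhdsWithin_iff.1 (hoff p)] with w hw
    by_cases hwp : w = p
    · simp [g, hwp, hp]
    · simp [g, hwp, hw hwp]
  · refine (hh p hpU hp).congr_of_eventuallyEq ?_
    filter_upwards [P.finite_toSet.isClosed.isOpen_compl.mem_nhds hp] with w hw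
    exact if_neg hw

theorem rectIntegral_eq_sum_residue {P : Finset ℂ}
    (hP : ∀ p ∈ P, (a < p.re ∧ p.re < b) ∧ c < p.im ∧ p.im < d)
    (hf : ∀ w, w.re ∈ Set.uIcc a b → w.im ∈ Set.uIcc c d → w ∉ P → DifferentiableAt ℂ f w)
    (hres : ∀ p ∈ P, ∃ r, Tendsto (fun w ↦ (w - p) * f w) (𝓝[≠] p) (𝓝 r)) :
    rectIntegral f a b c d = 2 * π * I * ∑ p ∈ P, residue f p := by
  have hPU : ∀ p ∈ P, re ⁻¹' Set.uIcc a b ∩ im ⁻¹' Set.uIcc c d ∈ 𝓝 p := fun p hp ↦ by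
    obtain ⟨⟨ha, hb⟩, hc, hd⟩ := hP p hp
    exact inter_mem
      (continuous_re.continuousAt (mem_of_superset (Icc_mem_nhds ha hb) Set.Icc_subset_uIcc))
      (continuous_im.continuousAt (mem_of_superset (Icc_mem_nhds hc hd) Set.Icc_subset_uIcc))
  obtain ⟨g, hg, hgf⟩ :=
    exists_differentiableAt_eq_sub_sum_residue hPU (fun w hw ↦ hf w hw.1 hw.2) hres
  have hboundary : ∀ w ∈ rectBoundary a b c d, w ∉ P := fun w hw hwP ↦ by
    obtain ⟨⟨ha, hb⟩, hc, hd⟩ := hP w hwP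
    rcases hw with ⟨-, h | h⟩ | ⟨-, h | h⟩ <;> linarith
  have hsub : rectBoundary a b c d ⊆ re ⁻¹' Set.uIcc a b ∩ im ⁻¹' Set.uIcc c d := by
    rintro w (⟨h, h' | h'⟩ | ⟨h, h' | h'⟩) <;> simp [h, h']
  have hinv : ∀ p ∈ P, ContinuousOn (fun w ↦ residue f p * (w - p)⁻¹) (rectBoundary a b c d) :=
    fun p hp ↦ continuousOn_const.mul <| ContinuousOn.inv₀ (by fun_prop) fun w hw ↦
      sub_ne_zero.2 fun h ↦ hboundary w hw (h ▸ hp)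
  calc rectIntegral f a b c d
      = rectIntegral (fun w ↦ g w + ∑ p ∈ P, residue f p * (w - p)⁻¹) a b c d :=
        rectIntegral_congr fun w hw ↦ by simp [hgf w (hboundary w hw), div_eq_mul_inv]
    _ = ∑ p ∈ P, residue f p * rectIntegral (fun w ↦ (w - p)⁻¹) a b c d := by
        rw [rectIntegral_add (fun w hw ↦ (hg w (hsub hw)).continuousAt.continuousWithinAt)
          (continuousOn_finsetSum _ hinv), rectIntegral_sum _ hinv,
          rectIntegral_eq_zero fun w hre him ↦ hg w ⟨hre, him⟩, zero_add]
        simp only [rectIntegral_const_mul]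
    _ = 2 * π * I * ∑ p ∈ P, residue f p := by
        rw [Finset.mul_sum]
        refine Finset.sum_congr rfl fun p hp ↦ ?_
        obtain ⟨⟨ha, hb⟩, hc, hd⟩ := hP p hp
        rw [rectIntegral_inv_sub ha hb hc hd, mul_comm]

end ResidueTheorem

section VerticalLines

variable {A B c η : ℝ} {f : ℂ → ℂ}

theorem eventually_stripEnds_iff {p : ℂ → Prop} :
    (∀ᶠ w in stripEnds A B, p w) ↔
      ∀ᶠ r in atTop, ∀ w : ℂ, |w.im| = r → w.re ∈ Set.Icc A B → p w := by
  simp only [stripEnds, eventually_inf_principal, eventually_comap, Set.mem_preimage]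

theorem tendsto_intervalIntegral_of_tendsto_stripEnds (hAB : A ≤ B)
    (hf : Tendsto f (stripEnds A B) (𝓝 0)) {u : ℝ → ℝ} (hu : ∀ᶠ T in atTop, |u T| = T) :
    Tendsto (fun T ↦ ∫ x in A..B, f (x + u T * I)) atTop (𝓝 0) := by
  rw [Metric.tendsto_nhds]
  intro ε hε
  have hδ : 0 < ε / (B - A + 1) := by
    have := sub_nonneg.2 hAB
    positivity
  have hsmall := eventually_stripEnds_iff.1 (Metric.tendsto_nhds.1 hf _ hδ)
  filter_upwards [hu, hsmall] with T hT h
  have hle : ‖∫ x in A..B, f (x + u T * I)‖ ≤ ε / (B - A + 1) * |B - A| :=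
    intervalIntegral.norm_integral_le_of_norm_le_const fun x hx ↦ by
      rw [Set.uIoc_of_le hAB] at hx
      simpa using (h (x + u T * I) (by simpa using hT) (by simpa using ⟨hx.1.le, hx.2⟩)).le
  rw [dist_zero_right]
  refine hle.trans_lt ?_
  rw [abs_of_nonneg (sub_nonneg.2 hAB), div_mul_eq_mul_div, div_lt_iff₀ (by linarith)]
  nlinarith

/-- The vertical line integral `(2πi)⁻¹ ∫ f(w) dw` over `Re w = c`, oriented upwards. Like any
Bochner integral it is `0` when `f` is not integrable on the line. -/
noncomputable def verticalIntegral (f : ℂ → ℂ) (c : ℝ) : ℂ :=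
  1 / (2 * π) * ∫ t : ℝ, f (c + t * I)

theorem verticalIntegral_sub_eq_sum_residue (hAB : A < B) {P : Finset ℂ}
    (hP : ∀ p ∈ P, A < p.re ∧ p.re < B)
    (hf : ∀ w : ℂ, w.re ∈ Set.Icc A B → w ∉ P → DifferentiableAt ℂ f w)
    (hres : ∀ p ∈ P, ∃ r, Tendsto (fun w ↦ (w - p) * f w) (𝓝[≠] p) (𝓝 r))
    (hlim : Tendsto f (stripEnds A B) (𝓝 0))
    (hA : VerticalIntegrable f A) (hB : VerticalIntegrable f B) :
    verticalIntegral f B - verticalIntegral f A = ∑ p ∈ P, residue f p := by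
  have hrect : ∀ᶠ T in atTop, rectIntegral f A B (-T) T = 2 * π * I * ∑ p ∈ P, residue f p := by
    have hT : ∀ᶠ T : ℝ in atTop, ∀ p ∈ P, |p.im| < T :=
      P.eventually_all.2 fun p _ ↦ eventually_gt_atTop _
    filter_upwards [hT] with T hT
    refine rectIntegral_eq_sum_residue (fun p hp ↦ ⟨hP p hp, abs_lt.1 (hT p hp)⟩)
      (fun w hre _ ↦ hf w ?_) hres
    rwa [Set.uIcc_of_le hAB.le] at hre
  have hbot : Tendsto (fun T : ℝ ↦ ∫ x in A..B, f (x + (-T : ℝ) * I)) atTop (𝓝 0) :=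
    tendsto_intervalIntegral_of_tendsto_stripEnds hAB.le hlim <|
      (eventually_ge_atTop 0).mono fun T hT ↦ by rw [abs_neg, abs_of_nonneg hT]
  have htop : Tendsto (fun T : ℝ ↦ ∫ x in A..B, f (x + T * I)) atTop (𝓝 0) :=
    tendsto_intervalIntegral_of_tendsto_stripEnds hAB.le hlim <|
      (eventually_ge_atTop 0).mono fun T hT ↦ abs_of_nonneg hT
  have hvert := ((hbot.sub htop).add
    ((intervalIntegral_tendsto_integral hB tendsto_neg_atTop_atBot tendsto_id).const_mul I)).sub
    ((intervalIntegral_tendsto_integral hA tendsto_neg_atTop_atBot tendsto_id).const_mul I)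
  have key := tendsto_nhds_unique (hvert.congr' hrect) tendsto_const_nhds
  have hπ : (π : ℂ) ≠ 0 := ofReal_ne_zero.2 Real.pi_ne_zero
  refine mul_left_cancel₀ two_pi_I_ne_zero ?_
  rw [← key, verticalIntegral, verticalIntegral]
  field_simp
  ring

theorem integrable_exp_neg_mul_abs (hη : 0 < η) : Integrable fun t : ℝ ↦ rexp (-η * |t|) := by
  rw [← integrableOn_univ, ← Set.Iic_union_Ioi (a := (0 : ℝ)), integrableOn_union]
  constructor
  · refine (integrableOn_exp_mul_Iic hη 0).congr_fun (fun t ht ↦ ?_) measurableSet_Iic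
    simp [abs_of_nonpos ht.out]
  · refine (integrableOn_exp_mul_Ioi (neg_lt_zero.2 hη) 0).congr_fun (fun t ht ↦ ?_)
      measurableSet_Ioi
    simp [abs_of_pos ht.out]

theorem verticalIntegrable_of_isBigO (hη : 0 < η)
    (hO : f =O[stripEnds A B] fun w ↦ rexp (-η * |w.im|)) (hc : c ∈ Set.Icc A B)
    (hd : ∀ w : ℂ, w.re = c → DifferentiableAt ℂ f w) : VerticalIntegrable f c := by
  have hcont : Continuous fun t : ℝ ↦ f (c + t * I) := continuous_iff_continuousAt.2 fun t ↦
    ContinuousAt.comp' (hd _ (by simp)).continuousAt (by fun_prop)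
  refine hcont.locallyIntegrable.integrable_of_isBigO_cocompact
    (hO.comp_tendsto (tendsto_verticalLine_stripEnds hc)) ?_
  simpa [Function.comp_def] using (integrable_exp_neg_mul_abs hη).integrableAtFilter _

theorem tendsto_zero_of_isBigO_exp_neg (hη : 0 < η)
    (hO : f =O[stripEnds A B] fun w ↦ rexp (-η * |w.im|)) : Tendsto f (stripEnds A B) (𝓝 0) :=
  hO.trans_tendsto <| Real.tendsto_exp_atBot.comp <|
    tendsto_abs_im_stripEnds.const_mul_atTop_of_neg (neg_lt_zero.2 hη)

end VerticalLines

section MellinInversion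

variable {L w : ℂ} {c : ℝ}

theorem cexp_re_pos (hL : |L.im| < π / 2) : 0 < (cexp L).re := by
  rw [Complex.exp_re]
  exact mul_pos (Real.exp_pos _) (Real.cos_pos_of_mem_Ioo (abs_lt.1 hL))

theorem ne_neg_natCast_of_re_pos (hw : 0 < w.re) (m : ℕ) : w ≠ -m := by
  rintro rfl
  simp only [neg_re, natCast_re, Left.neg_pos_iff] at hw
  exact hw.not_ge m.cast_nonneg

theorem mellin_cexp_neg_cexp_mul (hL : |L.im| < π / 2) (hw : 0 < w.re) :
    mellin (fun x : ℝ ↦ cexp (-(cexp L * x))) w = Complex.Gamma w * cexp (-w * L) := by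
  have hπ := Real.pi_pos
  obtain ⟨hL₁, hL₂⟩ := abs_lt.1 hL
  simp only [mellin, smul_eq_mul]
  rw [integral_cpow_mul_cexp_neg_mul_Ioi hw (cexp_re_pos hL), one_div, ← Complex.exp_neg,
    cpow_def_of_ne_zero (Complex.exp_ne_zero _), Complex.log_exp (by simp; linarith)
    (by simp; linarith), mul_comm]
  ring_nf

theorem verticalIntegrable_Gamma_mul_cexp (hL : |L.im| < π / 2) (hc : 0 < c) :
    VerticalIntegrable (fun w ↦ Complex.Gamma w * cexp (-w * L)) c := by
  obtain ⟨φ, hLφ, hφ⟩ := exists_between hL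
  have hO := isBigO_exp_mul (Gamma_isBigO_stripEnds c c ((abs_nonneg _).trans hLφ.le) hφ)
    (cexp_neg_mul_isBigO_stripEnds L)
  rw [← sub_neg_eq_add, ← neg_add', ← sub_eq_add_neg] at hO
  refine verticalIntegrable_of_isBigO (sub_pos.2 hLφ) hO ⟨le_rfl, le_rfl⟩ fun w hw ↦ ?_
  exact (differentiableAt_Gamma w (ne_neg_natCast_of_re_pos (by rwa [hw]))).mul (by fun_prop)

theorem verticalIntegral_Gamma_mul_cexp (hL : |L.im| < π / 2) (hc : 0 < c) :
    verticalIntegral (fun w ↦ Complex.Gamma w * cexp (-w * L)) c = cexp (-cexp L) := by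
  have hmellin (t : ℝ) : mellin (fun x : ℝ ↦ cexp (-(cexp L * x))) (c + t * I) =
      Complex.Gamma (c + t * I) * cexp (-(c + t * I) * L) :=
    mellin_cexp_neg_cexp_mul hL (by simpa using hc)
  have h := mellinInv_mellin_eq c (fun x : ℝ ↦ cexp (-(cexp L * x))) one_pos
    (by simpa [MellinConvergent] using integrableOn_cpow_mul_cexp (by simpa) (cexp_re_pos hL))
    (by simpa [VerticalIntegrable, hmellin] using verticalIntegrable_Gamma_mul_cexp hL hc)
    (by fun_prop)
  simpa [mellinInv, verticalIntegral, hmellin, real_smul] using h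

theorem norm_term_add_mul_I (b : ℕ → ℂ) (c t : ℝ) (n : ℕ) :
    ‖LSeries.term b (c + t * I) n‖ = ‖LSeries.term b c n‖ := by
  simp [LSeries.norm_term_eq]

theorem continuous_term_add_mul_I (b : ℕ → ℂ) (c : ℝ) (n : ℕ) :
    Continuous fun t : ℝ ↦ LSeries.term b (c + t * I) n := by
  rcases eq_or_ne n 0 with rfl | hn
  · simpa only [LSeries.term_zero] using continuous_const
  · have hn₀ : (n : ℂ) ≠ 0 := Nat.cast_ne_zero.2 hn
    simp only [LSeries.term_of_ne_zero hn]
    exact continuous_const.div (.const_cpow (by fun_prop) (.inl hn₀))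
      fun t ↦ by simp [cpow_eq_zero_iff, hn₀]

theorem verticalIntegral_Gamma_mul_cexp_mul_term (hL : |L.im| < π / 2) (hc : 0 < c) {b : ℕ → ℂ}
    (hb : b 0 = 0) (n : ℕ) :
    verticalIntegral (fun w ↦ Complex.Gamma w * cexp (-w * L) * LSeries.term b w n) c =
      cexp (-(n * cexp L)) * b n := by
  rcases eq_or_ne n 0 with rfl | hn
  · simp [hb, verticalIntegral]
  · have hn₀ : (n : ℂ) ≠ 0 := Nat.cast_ne_zero.2 hn
    have hexp : cexp (L + Real.log n) = n * cexp L := by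
      rw [Complex.exp_add, ← ofReal_exp, Real.exp_log (by positivity), mul_comm, ofReal_natCast]
    have h := verticalIntegral_Gamma_mul_cexp (L := L + Real.log n)
      (by rwa [add_im, ofReal_im, add_zero]) hc
    rw [← hexp, ← h, verticalIntegral, verticalIntegral, mul_assoc, ← integral_mul_const]
    congr 3 with t
    rw [LSeries.term_of_ne_zero hn, mul_add, Complex.exp_add, natCast_log,
      neg_mul _ (Complex.log n), Complex.exp_neg, mul_comm _ (Complex.log n),
      ← cpow_def_of_ne_zero hn₀]
    ring

theorem hasSum_cexp_neg_mul_verticalIntegral (hL : |L.im| < π / 2) (hc : 0 < c) {b : ℕ → ℂ}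
    (hb₀ : b 0 = 0) (hb : LSeriesSummable b c) :
    HasSum (fun n : ℕ ↦ cexp (-(n * cexp L)) * b n)
      (verticalIntegral (fun w ↦ Complex.Gamma w * cexp (-w * L) * LSeries b w) c) := by
  have hG := verticalIntegrable_Gamma_mul_cexp hL hc
  have hint (n : ℕ) :
      VerticalIntegrable (fun w ↦ Complex.Gamma w * cexp (-w * L) * LSeries.term b w n) c :=
    hG.mul_bdd (continuous_term_add_mul_I b c n).aestronglyMeasurable
      (.of_forall fun t ↦ (norm_term_add_mul_I b c t n).le)
  have h := (hasSum_integral_of_summable_integral_norm hint ?_).mul_left (1 / (2 * π) : ℂ)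
  · simp only [tsum_mul_left] at h
    exact h.congr_fun fun n ↦ (verticalIntegral_Gamma_mul_cexp_mul_term hL hc hb₀ n).symm
  · simpa only [norm_mul, norm_term_add_mul_I, integral_mul_const] using hb.norm.mul_left _

end MellinInversion

section DirichletSeries

variable {s w : ℂ}

/-- The Dirichlet series `ζ(1/2 + w - s) ζ(1/2 + w + s)` of the divisor sums occurring in
`S_j(s, z)`. -/
noncomputable def zetaProd (s w : ℂ) : ℂ :=
  riemannZeta (1 / 2 + w - s) * riemannZeta (1 / 2 + w + s)

/-- The coefficient `σ_{2s}(n) n^{-(s + 1/2 + j)}` of the series `S_j(s, z)`. -/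
noncomputable def sigmaCoeff (s : ℂ) (j n : ℕ) : ℂ :=
  (∑ d ∈ n.divisors, (d : ℂ) ^ (2 * s)) * (n : ℂ) ^ (-(s + 1 / 2 + j))

theorem zetaProd_neg (s w : ℂ) : zetaProd (-s) w = zetaProd s w := by
  rw [zetaProd, zetaProd, mul_comm, sub_neg_eq_add, ← sub_eq_add_neg]

theorem sigmaCoeff_zero (s : ℂ) (j : ℕ) : sigmaCoeff s j 0 = 0 := by
  simp [sigmaCoeff]

theorem lseriesHasSum_natCast_cpow {a : ℂ} (h : 1 < (w - a).re) :
    LSeriesHasSum (fun n : ℕ ↦ (n : ℂ) ^ a) w (riemannZeta (w - a)) := by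
  have hterm : LSeries.term (fun n : ℕ ↦ (n : ℂ) ^ a) w = LSeries.term 1 (w - a) := by
    ext n
    rcases eq_or_ne n 0 with rfl | hn
    · simp
    · simp [LSeries.term_of_ne_zero hn, Complex.cpow_sub _ _ (Nat.cast_ne_zero.2 hn)]
  simpa only [LSeriesHasSum, hterm] using LSeriesHasSum_one h

theorem sigmaCoeff_eq_convolution (s : ℂ) (j : ℕ) :
    sigmaCoeff s j = LSeries.convolution (fun n : ℕ ↦ (n : ℂ) ^ (s - 1 / 2 - j))
      (fun n : ℕ ↦ (n : ℂ) ^ (-s - 1 / 2 - j)) := by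
  ext n
  rw [LSeries.convolution_def, sigmaCoeff, Finset.sum_mul]
  beta_reduce
  rw [Nat.sum_divisorsAntidiagonal
    (fun a b : ℕ ↦ (a : ℂ) ^ (s - 1 / 2 - j) * (b : ℂ) ^ (-s - 1 / 2 - j))]
  refine Finset.sum_congr rfl fun d hd ↦ ?_
  obtain ⟨⟨e, rfl⟩, hn⟩ := Nat.mem_divisors.1 hd
  have hd₀ : d ≠ 0 := left_ne_zero_of_mul hn
  rw [Nat.mul_div_cancel_left _ (Nat.pos_of_ne_zero hd₀), Nat.cast_mul, natCast_mul_natCast_cpow,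
    ← mul_assoc, ← Complex.cpow_add _ _ (Nat.cast_ne_zero.2 hd₀)]
  congr 2 <;> ring

theorem lseriesHasSum_sigmaCoeff (j : ℕ) (hw : 1 / 2 + |s.re| < w.re) :
    LSeriesHasSum (sigmaCoeff s j) w (zetaProd s (w + j)) := by
  have : (0 : ℝ) ≤ j := j.cast_nonneg
  have h := (lseriesHasSum_natCast_cpow (a := s - 1 / 2 - j) (w := w)
    (by simp; linarith [le_abs_self s.re])).convolution
      (lseriesHasSum_natCast_cpow (a := -s - 1 / 2 - j) (w := w)
        (by simp; linarith [neg_abs_le s.re]))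
  rw [sigmaCoeff_eq_convolution, zetaProd]
  convert h using 3 <;> ring

end DirichletSeries

section Residues

variable {f g : ℂ → ℂ} {p q r : ℂ}

theorem tendsto_sub_mul_comp_add_const {a : ℂ}
    (h : Tendsto (fun w ↦ (w - q) * f w) (𝓝[≠] q) (𝓝 r)) (hq : p + a = q) :
    Tendsto (fun w ↦ (w - p) * f (w + a)) (𝓝[≠] p) (𝓝 r) := by
  subst hq
  have hadd : Tendsto (fun w ↦ w + a) (𝓝[≠] p) (𝓝[≠] (p + a)) :=
    ((Homeomorph.addRight a).map_punctured_nhds_eq p).le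
  refine (h.comp hadd).congr fun w ↦ ?_
  simp only [Function.comp_apply, add_sub_add_right_eq_sub]

theorem tendsto_sub_mul_mul_of_continuousAt
    (h : Tendsto (fun w ↦ (w - p) * f w) (𝓝[≠] p) (𝓝 r)) (hg : ContinuousAt g p) :
    Tendsto (fun w ↦ (w - p) * (f w * g w)) (𝓝[≠] p) (𝓝 (r * g p)) := by
  simpa only [mul_assoc] using h.mul (hg.tendsto.mono_left nhdsWithin_le_nhds)

theorem tendsto_sub_mul_Gamma (n : ℕ) :
    Tendsto (fun w : ℂ ↦ (w - -n) * Complex.Gamma w) (𝓝[≠] (-n : ℂ))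
      (𝓝 ((-1) ^ n / n.factorial)) := by
  induction n with
  | zero => simpa using tendsto_self_mul_Gamma_nhds_zero
  | succ n ih =>
    have h₀ : (-(n + 1 : ℕ) : ℂ) ≠ 0 := neg_ne_zero.2 (Nat.cast_ne_zero.2 n.succ_ne_zero)
    have hshift := tendsto_sub_mul_comp_add_const (p := -(n + 1 : ℕ)) (a := 1) ih
      (by push_cast; ring)
    have h := tendsto_sub_mul_mul_of_continuousAt hshift (continuousAt_inv₀ h₀)
    have hlim : (-1 : ℂ) ^ n / n.factorial * (-(n + 1 : ℕ) : ℂ)⁻¹ =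
        (-1) ^ (n + 1) / (n + 1).factorial := by
      rw [Nat.factorial_succ, pow_succ, Nat.cast_mul, inv_neg, div_eq_mul_inv, div_eq_mul_inv,
        mul_inv]
      ring
    rw [hlim] at h
    refine h.congr' ?_
    filter_upwards [nhdsWithin_le_nhds (isOpen_ne.mem_nhds h₀)] with w hw
    rw [Complex.Gamma_add_one w hw, mul_comm w, mul_inv_cancel_right₀ hw]

end Residues

section BarnesIntegrand

variable {s L w p : ℂ} {c : ℝ} {j : ℕ}

/-- The Mellin–Barnes integrand `Γ(w - j) e^{-wL} ζ(1/2 + w - s) ζ(1/2 + w + s)`, whose integrals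
along vertical lines represent `S_j(s, z)` when `e^L` is `2πi/z` or `-2πiz`. -/
noncomputable def barnes (s L : ℂ) (j : ℕ) (w : ℂ) : ℂ :=
  Complex.Gamma (w - j) * cexp (-w * L) * zetaProd s w

/-- The poles of `barnes s L j` in the half-plane `Re w > -1`. -/
noncomputable def barnesPoles (s : ℂ) (j : ℕ) : Finset ℂ :=
  (range (j + 1)).image Nat.cast ∪ {1 / 2 + s, 1 / 2 - s}

theorem barnes_neg (s L : ℂ) (j : ℕ) : barnes (-s) L j = barnes s L j := by
  ext w
  rw [barnes, barnes, zetaProd_neg]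

theorem barnes_isBigO_stripEnds (s : ℂ) (j : ℕ) (A B : ℝ) (hL : |L.im| < π / 2) :
    ∃ η > 0, barnes s L j =O[stripEnds A B] fun w ↦ rexp (-η * |w.im|) := by
  obtain ⟨φ, hLφ, hφ⟩ := exists_between hL
  have hε : 0 < (φ - |L.im|) / 4 := by linarith
  have hΓ := isBigO_exp_comp_add_const (-j : ℂ)
    (Gamma_isBigO_stripEnds (A + (-j : ℂ).re) (B + (-j : ℂ).re) ((abs_nonneg _).trans hLφ.le) hφ)
  have hζ (a : ℂ) := isBigO_exp_comp_add_const a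
    (riemannZeta_isBigO_stripEnds (A + a.re) (B + a.re) hε)
  refine ⟨(φ - |L.im|) / 2, by linarith, ?_⟩
  convert isBigO_exp_mul (isBigO_exp_mul hΓ (cexp_neg_mul_isBigO_stripEnds L))
    (isBigO_exp_mul (hζ (1 / 2 - s)) (hζ (1 / 2 + s))) using 1
  · ext w
    simp only [barnes, zetaProd]
    ring_nf
  · ext w
    ring_nf

theorem differentiableAt_Gamma_sub_natCast (hw : ∀ m : ℕ, w - j ≠ -m) :
    DifferentiableAt ℂ (fun w ↦ Complex.Gamma (w - j)) w :=
  DifferentiableAt.comp w (differentiableAt_Gamma _ hw) (by fun_prop)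

theorem differentiableAt_riemannZeta_half_add_add (hw : w + s ≠ 1 / 2) :
    DifferentiableAt ℂ (fun w ↦ riemannZeta (1 / 2 + w + s)) w :=
  DifferentiableAt.comp (g := riemannZeta) w
    (differentiableAt_riemannZeta fun h ↦ hw (by linear_combination h)) (by fun_prop)

theorem differentiableAt_zetaProd (h₁ : w ≠ 1 / 2 + s) (h₂ : w ≠ 1 / 2 - s) :
    DifferentiableAt ℂ (zetaProd s) w := by
  refine .mul ?_ (differentiableAt_riemannZeta_half_add_add fun h ↦ h₂ (eq_sub_of_add_eq h))
  simpa only [← sub_eq_add_neg] using differentiableAt_riemannZeta_half_add_add (s := -s)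
    fun h ↦ h₁ (by rwa [← sub_eq_add_neg, sub_eq_iff_eq_add] at h)

theorem mem_barnesPoles :
    p ∈ barnesPoles s j ↔ (∃ ℓ ≤ j, (ℓ : ℂ) = p) ∨ p = 1 / 2 + s ∨ p = 1 / 2 - s := by
  simp only [barnesPoles, mem_union, mem_image, mem_range, Nat.lt_succ_iff, mem_insert,
    mem_singleton]

theorem differentiableAt_barnes (hre : -1 < w.re) (hw : w ∉ barnesPoles s j) :
    DifferentiableAt ℂ (barnes s L j) w := by
  simp only [mem_barnesPoles, not_or, not_exists, not_and] at hw
  obtain ⟨hw, h₁, h₂⟩ := hw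
  refine .mul (.mul (differentiableAt_Gamma_sub_natCast fun m hm ↦ ?_) (by fun_prop))
    (differentiableAt_zetaProd h₁ h₂)
  have hwm : w = (j : ℂ) - m := by linear_combination hm
  have hmj : m ≤ j := by
    rw [hwm, sub_re, natCast_re, natCast_re] at hre
    have : (m : ℝ) < (j + 1 : ℕ) := by push_cast; linarith
    exact Nat.lt_succ_iff.1 (Nat.cast_lt.1 this)
  exact hw (j - m) (Nat.sub_le j m) (by rw [hwm, Nat.cast_sub hmj])

theorem verticalIntegrable_barnes (hL : |L.im| < π / 2) (hc : -1 < c)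
    (hp : ∀ p ∈ barnesPoles s j, p.re ≠ c) : VerticalIntegrable (barnes s L j) c := by
  obtain ⟨η, hη, hO⟩ := barnes_isBigO_stripEnds s j c c hL
  refine verticalIntegrable_of_isBigO hη hO ⟨le_rfl, le_rfl⟩ fun w hw ↦ ?_
  exact differentiableAt_barnes (hw ▸ hc) fun h ↦ hp w h hw

theorem re_mem_Ioo_of_mem_barnesPoles (hc : 1 / 2 + |s.re| < c)
    (hp : p ∈ barnesPoles s j) : p.re ∈ Set.Ioo (-c) (c + j) := by
  have : (0 : ℝ) ≤ j := j.cast_nonneg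
  have hs' := abs_le.1 (le_refl |s.re|)
  rcases mem_barnesPoles.1 hp with ⟨ℓ, hℓ, rfl⟩ | rfl | rfl
  · have : (ℓ : ℝ) ≤ j := Nat.cast_le.2 hℓ
    have : (0 : ℝ) ≤ ℓ := ℓ.cast_nonneg
    rw [natCast_re]
    constructor <;> linarith
  · rw [add_re, show (1 / 2 : ℂ).re = 1 / 2 by norm_num]
    constructor <;> linarith
  · rw [sub_re, show (1 / 2 : ℂ).re = 1 / 2 by norm_num]
    constructor <;> linarith

theorem verticalIntegrable_barnes_add_natCast (hL : |L.im| < π / 2) (hc : 1 / 2 + |s.re| < c)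
    (j : ℕ) : VerticalIntegrable (barnes s L j) (c + j) := by
  refine verticalIntegrable_barnes hL ?_ fun p hp ↦ (re_mem_Ioo_of_mem_barnesPoles hc hp).2.ne
  have : (0 : ℝ) ≤ j := j.cast_nonneg
  linarith [abs_nonneg s.re]

theorem verticalIntegrable_barnes_neg (hL : |L.im| < π / 2) (hc : 1 / 2 + |s.re| < c)
    (hc₁ : c < 1) (j : ℕ) : VerticalIntegrable (barnes s L j) (-c) :=
  verticalIntegrable_barnes hL (neg_lt_neg hc₁) fun _ hp ↦
    (re_mem_Ioo_of_mem_barnesPoles hc hp).1.ne'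

theorem mem_integerComplement_of_re_mem_Ioo (hw : w.re ∈ Set.Ioo 0 1) :
    w ∈ integerComplement := by
  rintro ⟨k, rfl⟩
  rw [intCast_re] at hw
  obtain ⟨h₀, h₁⟩ := hw
  norm_cast at h₀ h₁
  lia

theorem half_add_mem_integerComplement (hs : |s.re| < 1 / 2) : 1 / 2 + s ∈ integerComplement := by
  obtain ⟨h₁, h₂⟩ := abs_lt.1 hs
  refine mem_integerComplement_of_re_mem_Ioo ⟨?_, ?_⟩ <;>
  · rw [add_re, show (1 / 2 : ℂ).re = 1 / 2 by norm_num]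
    linarith

theorem natCast_ne_half_add (hs : |s.re| < 1 / 2) (n : ℕ) : (n : ℂ) ≠ 1 / 2 + s :=
  fun h ↦ half_add_mem_integerComplement hs ⟨n, by rw [Int.cast_natCast, h]⟩

theorem natCast_ne_half_sub (hs : |s.re| < 1 / 2) (n : ℕ) : (n : ℂ) ≠ 1 / 2 - s := by
  simpa only [← sub_eq_add_neg] using natCast_ne_half_add (s := -s) (by rwa [neg_re, abs_neg]) n

theorem tendsto_sub_mul_barnes_natCast (hs : |s.re| < 1 / 2) (L : ℂ) {ℓ : ℕ} (hℓ : ℓ ≤ j) :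
    Tendsto (fun w ↦ (w - ℓ) * barnes s L j w) (𝓝[≠] (ℓ : ℂ))
      (𝓝 ((-1) ^ (j - ℓ) / (j - ℓ).factorial * (cexp (-ℓ * L) * zetaProd s ℓ))) := by
  have hΓ := tendsto_sub_mul_comp_add_const (p := (ℓ : ℂ)) (a := -j) (tendsto_sub_mul_Gamma (j - ℓ))
    (by rw [Nat.cast_sub hℓ]; ring)
  have hg : DifferentiableAt ℂ (fun w ↦ cexp (-w * L) * zetaProd s w) ℓ :=
    .mul (by fun_prop)
      (differentiableAt_zetaProd (natCast_ne_half_add hs ℓ) (natCast_ne_half_sub hs ℓ))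
  simpa only [barnes, mul_assoc, ← sub_eq_add_neg] using
    tendsto_sub_mul_mul_of_continuousAt hΓ hg.continuousAt

theorem tendsto_sub_mul_barnes_half_add (hs : |s.re| < 1 / 2) (hs₀ : s ≠ 0) (L : ℂ) (j : ℕ) :
    Tendsto (fun w ↦ (w - (1 / 2 + s)) * barnes s L j w) (𝓝[≠] (1 / 2 + s))
      (𝓝 (Complex.Gamma (1 / 2 + s - j) * cexp (-(1 / 2 + s) * L) * riemannZeta (1 + 2 * s))) := by
  have hζ := tendsto_sub_mul_comp_add_const (p := 1 / 2 + s) (a := 1 / 2 - s)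
    riemannZeta_residue_one (by ring)
  have hg : DifferentiableAt ℂ (fun w ↦ Complex.Gamma (w - j) * cexp (-w * L) *
      riemannZeta (1 / 2 + w + s)) (1 / 2 + s) := by
    refine .mul (.mul (differentiableAt_Gamma_sub_natCast fun m hm ↦ ?_) (by fun_prop))
      (differentiableAt_riemannZeta_half_add_add fun h ↦ hs₀ (by linear_combination h / 2))
    exact half_add_mem_integerComplement hs ⟨j - m, by push_cast; linear_combination -hm⟩
  convert tendsto_sub_mul_mul_of_continuousAt hζ hg.continuousAt using 2 with w
  · rw [barnes, zetaProd, show w + (1 / 2 - s) = 1 / 2 + w - s by ring]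
    ring
  · rw [one_mul]
    ring_nf

theorem tendsto_sub_mul_barnes_half_sub (hs : |s.re| < 1 / 2) (hs₀ : s ≠ 0) (L : ℂ) (j : ℕ) :
    Tendsto (fun w ↦ (w - (1 / 2 - s)) * barnes s L j w) (𝓝[≠] (1 / 2 - s))
      (𝓝 (Complex.Gamma (1 / 2 - s - j) * cexp (-(1 / 2 - s) * L) * riemannZeta (1 - 2 * s))) := by
  simpa only [barnes_neg, ← sub_eq_add_neg, mul_neg] using
    tendsto_sub_mul_barnes_half_add (s := -s) (by rwa [neg_re, abs_neg]) (neg_ne_zero.2 hs₀) L j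

theorem sum_residue_barnes (hs : |s.re| < 1 / 2) (hs₀ : s ≠ 0) (L : ℂ) (j : ℕ) :
    ∑ p ∈ barnesPoles s j, residue (barnes s L j) p =
      (∑ ℓ ∈ range (j + 1),
        (-1) ^ (j - ℓ) / (j - ℓ).factorial * (cexp (-ℓ * L) * zetaProd s ℓ)) +
      Complex.Gamma (1 / 2 + s - j) * cexp (-(1 / 2 + s) * L) * riemannZeta (1 + 2 * s) +
      Complex.Gamma (1 / 2 - s - j) * cexp (-(1 / 2 - s) * L) * riemannZeta (1 - 2 * s) := by
  have hdisj : Disjoint ((range (j + 1)).image Nat.cast) {1 / 2 + s, 1 / 2 - s} := by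
    simp only [disjoint_left, mem_image, mem_insert, mem_singleton, not_or]
    rintro _ ⟨ℓ, -, rfl⟩
    exact ⟨natCast_ne_half_add hs ℓ, natCast_ne_half_sub hs ℓ⟩
  have hne : 1 / 2 + s ≠ 1 / 2 - s := fun h ↦ hs₀ (by linear_combination h / 2)
  rw [barnesPoles, sum_union hdisj, sum_image Nat.cast_injective.injOn, sum_pair hne, residue,
    residue, (tendsto_sub_mul_barnes_half_add hs hs₀ L j).limUnder_eq,
    (tendsto_sub_mul_barnes_half_sub hs hs₀ L j).limUnder_eq, add_assoc]
  congr 1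
  refine sum_congr rfl fun ℓ hℓ ↦ ?_
  exact (tendsto_sub_mul_barnes_natCast hs L (mem_range_succ_iff.1 hℓ)).limUnder_eq

theorem verticalIntegral_barnes_sub (hs₀ : s ≠ 0) (hL : |L.im| < π / 2)
    (hc : 1 / 2 + |s.re| < c) (hc₁ : c < 1) (j : ℕ) :
    verticalIntegral (barnes s L j) (c + j) - verticalIntegral (barnes s L j) (-c) =
      (∑ ℓ ∈ range (j + 1),
        (-1) ^ (j - ℓ) / (j - ℓ).factorial * (cexp (-ℓ * L) * zetaProd s ℓ)) +
      Complex.Gamma (1 / 2 + s - j) * cexp (-(1 / 2 + s) * L) * riemannZeta (1 + 2 * s) +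
      Complex.Gamma (1 / 2 - s - j) * cexp (-(1 / 2 - s) * L) * riemannZeta (1 - 2 * s) := by
  have : (0 : ℝ) ≤ j := j.cast_nonneg
  have hc₀ : 0 < c := by linarith [abs_nonneg s.re]
  have hs : |s.re| < 1 / 2 := by linarith
  have hP (p : ℂ) (hp : p ∈ barnesPoles s j) := re_mem_Ioo_of_mem_barnesPoles hc hp
  obtain ⟨η, hη, hO⟩ := barnes_isBigO_stripEnds s j (-c) (c + j) hL
  rw [← sum_residue_barnes hs hs₀]
  refine verticalIntegral_sub_eq_sum_residue (by linarith) hP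
    (fun w hw ↦ differentiableAt_barnes (by linarith [hw.1])) (fun p hp ↦ ?_)
    (tendsto_zero_of_isBigO_exp_neg hη hO)
    (verticalIntegrable_barnes_neg hL hc hc₁ j) (verticalIntegrable_barnes_add_natCast hL hc j)
  rcases mem_barnesPoles.1 hp with ⟨ℓ, hℓ, rfl⟩ | rfl | rfl
  · exact ⟨_, tendsto_sub_mul_barnes_natCast hs L hℓ⟩
  · exact ⟨_, tendsto_sub_mul_barnes_half_add hs hs₀ L j⟩
  · exact ⟨_, tendsto_sub_mul_barnes_half_sub hs hs₀ L j⟩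

end BarnesIntegrand

section GaussTheorem

variable {a b c : ℂ}

theorem ascPochhammer_eval_eq_prod (x : ℂ) (n : ℕ) :
    (ascPochhammer ℂ n).eval x = ∏ k ∈ range n, (x + k) := by
  induction n with
  | zero => simp
  | succ n ih => rw [ascPochhammer_succ_eval, ih, prod_range_succ]

theorem ascPochhammer_eval_ne_zero (hc : ∀ m : ℕ, c ≠ -m) (n : ℕ) :
    (ascPochhammer ℂ n).eval c ≠ 0 := by
  rw [ne_eq, ascPochhammer_eval_eq_zero_iff]
  rintro ⟨k, -, hk⟩
  exact hc k (by rw [hk, neg_neg])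

theorem ascPochhammer_succ_eval_eq_mul_inv_GammaSeq (x : ℂ) {n : ℕ} (hn : n ≠ 0) :
    (ascPochhammer ℂ (n + 1)).eval x = (n : ℂ) ^ x * n.factorial * (GammaSeq x n)⁻¹ := by
  have hpow : (n : ℂ) ^ x ≠ 0 := by simp [cpow_eq_zero_iff, hn]
  have hfac : (n.factorial : ℂ) ≠ 0 := Nat.cast_ne_zero.2 n.factorial_ne_zero
  rw [Complex.GammaSeq, inv_div, ascPochhammer_eval_eq_prod,
    mul_div_cancel₀ _ (mul_ne_zero hpow hfac)]

theorem tendsto_inv_GammaSeq (x : ℂ) :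
    Tendsto (fun n ↦ (GammaSeq x n)⁻¹) atTop (𝓝 (Complex.Gamma x)⁻¹) := by
  by_cases hx : ∃ m : ℕ, x = -m
  · obtain ⟨m, rfl⟩ := hx
    rw [Complex.Gamma_neg_nat_eq_zero, inv_zero]
    refine tendsto_const_nhds.congr' ?_
    filter_upwards [eventually_ge_atTop m] with n hn
    rw [Complex.GammaSeq, prod_eq_zero (mem_range_succ_iff.2 hn) (neg_add_cancel _), div_zero,
      inv_zero]
  · exact (GammaSeq_tendsto_Gamma x).inv₀ (Complex.Gamma_ne_zero (not_exists.1 hx))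

theorem ordinaryHypergeometricCoefficient_succ_eq (a b c : ℂ) (n : ℕ) :
    ordinaryHypergeometricCoefficient a b c (n + 1) =
      ordinaryHypergeometricCoefficient a b c n * ((a + n) * (b + n) / ((n + 1) * (c + n))) := by
  simp only [ordinaryHypergeometricCoefficient, ascPochhammer_succ_eval, Nat.factorial_succ,
    Nat.cast_mul, Nat.cast_add_one, mul_inv, div_eq_mul_inv]
  ring

theorem succ_mul_ordinaryHypergeometricCoefficient_succ (a b c : ℂ) {n : ℕ} (hn : n ≠ 0) :
    (n + 1) * ordinaryHypergeometricCoefficient a b c (n + 1) =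
      (n : ℂ) ^ (a + b - c) * ((GammaSeq a n)⁻¹ * (GammaSeq b n)⁻¹ * GammaSeq c n) := by
  have hn₀ : (n : ℂ) ≠ 0 := Nat.cast_ne_zero.2 hn
  have hfac : (n.factorial : ℂ) ≠ 0 := Nat.cast_ne_zero.2 n.factorial_ne_zero
  have hn₁ : (n : ℂ) + 1 ≠ 0 := Nat.cast_add_one_ne_zero n
  have hpow : (n : ℂ) ^ c ≠ 0 := by simp [cpow_eq_zero_iff, hn]
  rw [ordinaryHypergeometricCoefficient, ascPochhammer_succ_eval_eq_mul_inv_GammaSeq a hn,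
    ascPochhammer_succ_eval_eq_mul_inv_GammaSeq b hn,
    ascPochhammer_succ_eval_eq_mul_inv_GammaSeq c hn, mul_inv, inv_inv, Nat.factorial_succ,
    Complex.cpow_sub _ _ hn₀, Complex.cpow_add _ _ hn₀]
  push_cast
  field_simp

theorem succ_mul_ordinaryHypergeometricCoefficient_succ_isBigO (a b c : ℂ) :
    (fun n : ℕ ↦ (n + 1) * ordinaryHypergeometricCoefficient a b c (n + 1)) =O[atTop]
      fun n : ℕ ↦ (n : ℝ) ^ (-(c - a - b).re) := by
  have hΓ := ((tendsto_inv_GammaSeq a).mul (tendsto_inv_GammaSeq b)).mul (GammaSeq_tendsto_Gamma c)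
  have hpow : (fun n : ℕ ↦ (n : ℂ) ^ (a + b - c)) =O[atTop]
      fun n : ℕ ↦ (n : ℝ) ^ (-(c - a - b).re) := by
    refine .of_bound' ?_
    filter_upwards [eventually_gt_atTop 0] with n hn
    rw [norm_natCast_cpow_of_pos hn, Real.norm_of_nonneg (by positivity)]
    simp only [sub_re, add_re, neg_sub]
    ring_nf
    rfl
  have h := hpow.mul (hΓ.isBigO_one ℝ)
  simp only [mul_one] at h
  refine h.congr' ?_ .rfl
  filter_upwards [eventually_ne_atTop 0] with n hn
  exact (succ_mul_ordinaryHypergeometricCoefficient_succ a b c hn).symm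

theorem tendsto_natCast_mul_ordinaryHypergeometricCoefficient (h : 0 < (c - a - b).re) :
    Tendsto (fun n : ℕ ↦ n * ordinaryHypergeometricCoefficient a b c n) atTop (𝓝 0) := by
  refine (tendsto_add_atTop_iff_nat 1).1 ?_
  simpa only [Nat.cast_add_one] using
    (succ_mul_ordinaryHypergeometricCoefficient_succ_isBigO a b c).trans_tendsto
      ((tendsto_rpow_neg_atTop h).comp tendsto_natCast_atTop_atTop)

theorem summable_norm_ordinaryHypergeometricCoefficient (h : 0 < (c - a - b).re) :
    Summable fun n ↦ ‖ordinaryHypergeometricCoefficient a b c n‖ := by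
  refine (summable_nat_add_iff 1).1 ?_
  have hinv : (fun n : ℕ ↦ ((n : ℂ) + 1)⁻¹) =O[atTop] fun n : ℕ ↦ (n : ℝ)⁻¹ := by
    refine .of_bound' ?_
    filter_upwards [eventually_gt_atTop 0] with n hn
    rw [norm_inv, norm_inv, ← Nat.cast_add_one, Complex.norm_natCast, Real.norm_natCast]
    gcongr
    exact n.le_succ
  have hO := (hinv.mul (succ_mul_ordinaryHypergeometricCoefficient_succ_isBigO a b c)).norm_left
  refine summable_of_isBigO_nat (Real.summable_nat_rpow.2 (by linarith : -1 - (c - a - b).re < -1))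
    (hO.congr' (.of_forall fun n ↦ ?_) ?_)
  · simp only [inv_mul_cancel_left₀ (Nat.cast_add_one_ne_zero (R := ℂ) n)]
  · filter_upwards [eventually_gt_atTop 0] with n hn
    rw [sub_eq_add_neg (-1 : ℝ), Real.rpow_add (Nat.cast_pos.2 hn), Real.rpow_neg_one]

theorem ordinaryHypergeometricCoefficient_add_one_mul (hc : ∀ m : ℕ, c ≠ -m) (n : ℕ) :
    ordinaryHypergeometricCoefficient a b (c + 1) n * (c + n) =
      ordinaryHypergeometricCoefficient a b c n * c := by
  have hshift : (ascPochhammer ℂ n).eval (c + 1) * c = (ascPochhammer ℂ n).eval c * (c + n) := by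
    rw [← ascPochhammer_succ_eval, ascPochhammer_succ_left]
    simp [mul_comm]
  have hc₁ : (ascPochhammer ℂ n).eval (c + 1) ≠ 0 := by
    refine ascPochhammer_eval_ne_zero (fun m h ↦ hc (m + 1) ?_) n
    push_cast
    linear_combination h
  have hc₀ := ascPochhammer_eval_ne_zero hc n
  rw [ordinaryHypergeometricCoefficient, ordinaryHypergeometricCoefficient]
  field_simp
  linear_combination
    (-(ascPochhammer ℂ n).eval a * (ascPochhammer ℂ n).eval b * (n.factorial : ℂ)⁻¹) * hshift

theorem ordinaryHypergeometricCoefficient_contiguous (hc : ∀ m : ℕ, c ≠ -m) (n : ℕ) :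
    c * (c - a - b) * ordinaryHypergeometricCoefficient a b c n -
        (c - a) * (c - b) * ordinaryHypergeometricCoefficient a b (c + 1) n =
      c * (n * ordinaryHypergeometricCoefficient a b c n) -
        c * ((n + 1 : ℕ) * ordinaryHypergeometricCoefficient a b c (n + 1)) := by
  have hcn : c + n ≠ 0 := fun h ↦ hc n (eq_neg_of_add_eq_zero_left h)
  have hn₁ : (n : ℂ) + 1 ≠ 0 := Nat.cast_add_one_ne_zero n
  rw [ordinaryHypergeometricCoefficient_succ_eq,
    eq_div_of_mul_eq hcn (ordinaryHypergeometricCoefficient_add_one_mul hc n)]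
  push_cast
  field_simp
  ring

theorem tsum_ordinaryHypergeometricCoefficient_add_one (hc : ∀ m : ℕ, c ≠ -m)
    (h : 0 < (c - a - b).re) :
    c * (c - a - b) * ∑' n, ordinaryHypergeometricCoefficient a b c n =
      (c - a) * (c - b) * ∑' n, ordinaryHypergeometricCoefficient a b (c + 1) n := by
  have h' : 0 < (c + 1 - a - b).re := by
    simp only [sub_re, add_re, one_re] at h ⊢
    linarith
  have hsum := (((summable_norm_ordinaryHypergeometricCoefficient h).of_norm.hasSum.mul_left
    (c * (c - a - b))).sub ((summable_norm_ordinaryHypergeometricCoefficient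
      h').of_norm.hasSum.mul_left ((c - a) * (c - b)))).tendsto_sum_nat
  simp only [ordinaryHypergeometricCoefficient_contiguous hc, sum_range_sub'] at hsum
  have hlim := ((tendsto_natCast_mul_ordinaryHypergeometricCoefficient h).const_mul c).const_sub
    (c * ((0 : ℕ) * ordinaryHypergeometricCoefficient a b c 0))
  rw [← sub_eq_zero, tendsto_nhds_unique hsum hlim, Nat.cast_zero, zero_mul, mul_zero, sub_zero]

theorem tsum_ordinaryHypergeometricCoefficient_add_natCast (hc : ∀ m : ℕ, c ≠ -m)
    (h : 0 < (c - a - b).re) (n : ℕ) :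
    (ascPochhammer ℂ n).eval c * (ascPochhammer ℂ n).eval (c - a - b) *
        ∑' k, ordinaryHypergeometricCoefficient a b c k =
      (ascPochhammer ℂ n).eval (c - a) * (ascPochhammer ℂ n).eval (c - b) *
        ∑' k, ordinaryHypergeometricCoefficient a b (c + n) k := by
  induction n with
  | zero => simp
  | succ n ih =>
    have hcn (m : ℕ) : c + n ≠ -m := fun hm ↦ hc (n + m) (by push_cast; linear_combination hm)
    have hre : 0 < (c + n - a - b).re := by
      simp only [sub_re, add_re, natCast_re] at h ⊢
      linarith [n.cast_nonneg (α := ℝ)]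
    have hstep := tsum_ordinaryHypergeometricCoefficient_add_one hcn hre
    simp only [ascPochhammer_succ_eval]
    push_cast
    rw [← add_assoc]
    linear_combination (c + n) * (c - a - b + n) * ih +
      (ascPochhammer ℂ n).eval (c - a) * (ascPochhammer ℂ n).eval (c - b) * hstep

theorem norm_ordinaryHypergeometricCoefficient_le {σ : ℝ} (hσ : 0 < σ) (hc : σ ≤ c.re) (n : ℕ) :
    ‖ordinaryHypergeometricCoefficient a b c n‖ ≤ ‖ordinaryHypergeometricCoefficient a b σ n‖ := by
  have hle : ‖(ascPochhammer ℂ n).eval (σ : ℂ)‖ ≤ ‖(ascPochhammer ℂ n).eval c‖ := by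
    simp only [ascPochhammer_eval_eq_prod, norm_prod]
    refine prod_le_prod (fun _ _ ↦ norm_nonneg _) fun k _ ↦ ?_
    calc ‖(σ + k : ℂ)‖ = σ + k := by
          rw [← ofReal_natCast, ← ofReal_add, Complex.norm_of_nonneg (by positivity)]
      _ ≤ (c + k).re := by simpa using hc
      _ ≤ ‖c + k‖ := re_le_norm _
  have hpos : 0 < ‖(ascPochhammer ℂ n).eval (σ : ℂ)‖ :=
    norm_pos_iff.2 <| ascPochhammer_eval_ne_zero (ne_neg_natCast_of_re_pos (by simpa)) n
  simp only [ordinaryHypergeometricCoefficient, norm_mul, norm_inv]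
  gcongr

theorem tendsto_ordinaryHypergeometricCoefficient_add_natCast (a b c : ℂ) (k : ℕ) :
    Tendsto (fun n : ℕ ↦ ordinaryHypergeometricCoefficient a b (c + n) k) atTop
      (𝓝 (if k = 0 then 1 else 0)) := by
  induction k with
  | zero => simp [ordinaryHypergeometricCoefficient]
  | succ k ih =>
    have hden : Tendsto (fun n : ℕ ↦ (c + n + k : ℂ)⁻¹) atTop (𝓝 0) := by
      refine tendsto_inv₀_cobounded.comp (tendsto_norm_atTop_iff_cobounded.1 ?_)
      refine tendsto_atTop_mono (fun n ↦ re_le_norm _) ?_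
      simpa [add_right_comm] using
        tendsto_atTop_add_const_left _ (c.re + k) tendsto_natCast_atTop_atTop
    have h := ih.mul (hden.const_mul ((a + k) * (b + k) / (k + 1)))
    simp only [mul_zero] at h
    simpa only [ordinaryHypergeometricCoefficient_succ_eq, Nat.add_eq_zero_iff, one_ne_zero,
      and_false, if_false, div_mul_eq_div_div, div_eq_mul_inv _ (c + _ + (k : ℂ))] using h

theorem tendsto_tsum_ordinaryHypergeometricCoefficient_add_natCast (a b c : ℂ) :
    Tendsto (fun n : ℕ ↦ ∑' k, ordinaryHypergeometricCoefficient a b (c + n) k) atTop (𝓝 1) := by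
  obtain ⟨σ, hσ⟩ := exists_gt (max 0 (a + b).re)
  obtain ⟨hσ₀, hσ⟩ := max_lt_iff.1 hσ
  have hre : Tendsto (fun n : ℕ ↦ (c + n).re) atTop atTop := by
    simpa only [add_re, natCast_re] using
      tendsto_atTop_add_const_left _ c.re tendsto_natCast_atTop_atTop
  rw [← tsum_ite_eq (0 : ℕ) fun _ ↦ (1 : ℂ)]
  refine tendsto_tsum_of_dominated_convergence
    (summable_norm_ordinaryHypergeometricCoefficient (a := a) (b := b) (c := σ) ?_)
    (tendsto_ordinaryHypergeometricCoefficient_add_natCast a b c) ?_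
  · simp only [sub_re, add_re, ofReal_re] at hσ ⊢
    linarith
  · filter_upwards [hre.eventually_ge_atTop σ] with n hn k
    exact norm_ordinaryHypergeometricCoefficient_le hσ₀ hn k

theorem tsum_ordinaryHypergeometricCoefficient_eq_GammaSeq_mul_tsum (hc : ∀ m : ℕ, c ≠ -m)
    (h : 0 < (c - a - b).re) {n : ℕ} (hn : n ≠ 0) :
    ∑' k, ordinaryHypergeometricCoefficient a b c k =
      Complex.GammaSeq c n * Complex.GammaSeq (c - a - b) n *
        ((Complex.GammaSeq (c - a) n)⁻¹ * (Complex.GammaSeq (c - b) n)⁻¹) *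
          ∑' k, ordinaryHypergeometricCoefficient a b (c + (n + 1 : ℕ)) k := by
  have hn₀ : (n : ℂ) ≠ 0 := Nat.cast_ne_zero.2 hn
  have hpow : (n : ℂ) ^ c * (n : ℂ) ^ (c - a - b) = (n : ℂ) ^ (c - a) * (n : ℂ) ^ (c - b) := by
    rw [← Complex.cpow_add _ _ hn₀, ← Complex.cpow_add _ _ hn₀]
    ring_nf
  have hc₀ := ascPochhammer_eval_ne_zero hc (n + 1)
  have hcab := ascPochhammer_eval_ne_zero (ne_neg_natCast_of_re_pos h) (n + 1)
  have hshift := tsum_ordinaryHypergeometricCoefficient_add_natCast hc h (n + 1)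
  simp only [ascPochhammer_succ_eval_eq_mul_inv_GammaSeq _ hn] at hc₀ hcab hshift
  simp only [ne_eq, mul_eq_zero, inv_eq_zero, not_or] at hc₀ hcab
  obtain ⟨⟨hnc, hfac⟩, hΓ⟩ := hc₀
  obtain ⟨⟨hncab, -⟩, hΓ'⟩ := hcab
  have hcancel : (Complex.GammaSeq c n)⁻¹ * (Complex.GammaSeq (c - a - b) n)⁻¹ *
        ∑' k, ordinaryHypergeometricCoefficient a b c k =
      (Complex.GammaSeq (c - a) n)⁻¹ * (Complex.GammaSeq (c - b) n)⁻¹ *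
        ∑' k, ordinaryHypergeometricCoefficient a b (c + (n + 1 : ℕ)) k := by
    refine mul_left_cancel₀
      (mul_ne_zero (mul_ne_zero hnc hncab) (mul_ne_zero hfac hfac)) ?_
    linear_combination hshift - (n.factorial : ℂ) ^ 2 * (Complex.GammaSeq (c - a) n)⁻¹ *
      (Complex.GammaSeq (c - b) n)⁻¹ *
        (∑' k, ordinaryHypergeometricCoefficient a b (c + (n + 1 : ℕ)) k) * hpow
  rw [mul_assoc _ (_ * _) (∑' _, _), ← hcancel]
  field_simp

theorem hasSum_ordinaryHypergeometricCoefficient (hc : ∀ m : ℕ, c ≠ -m)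
    (h : 0 < (c - a - b).re) :
    HasSum (ordinaryHypergeometricCoefficient a b c)
      (Complex.Gamma c * Complex.Gamma (c - a - b) /
        (Complex.Gamma (c - a) * Complex.Gamma (c - b))) := by
  refine (summable_norm_ordinaryHypergeometricCoefficient h).of_norm.hasSum_iff.2 ?_
  have hlim := ((((Complex.GammaSeq_tendsto_Gamma c).mul
    (Complex.GammaSeq_tendsto_Gamma (c - a - b))).mul
      ((tendsto_inv_GammaSeq (c - a)).mul (tendsto_inv_GammaSeq (c - b)))).mul
        ((tendsto_tsum_ordinaryHypergeometricCoefficient_add_natCast a b c).comp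
          (tendsto_add_atTop_nat 1)))
  rw [mul_one, ← mul_inv, ← div_eq_mul_inv] at hlim
  refine tendsto_nhds_unique (tendsto_const_nhds.congr' ?_) hlim
  filter_upwards [eventually_ne_atTop 0] with n hn
  exact tsum_ordinaryHypergeometricCoefficient_eq_GammaSeq_mul_tsum hc h hn

end GaussTheorem

section Reflection

variable {s L L' w : ℂ} {c : ℝ}

theorem Gamma_neg_sub_natCast_mul_ascPochhammer (hw : ∀ m : ℕ, 1 + w ≠ -m) (j : ℕ) :
    Complex.Gamma (-w - j) * ((-1) ^ j * (ascPochhammer ℂ j).eval (1 + w)) =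
      Complex.Gamma (-w) := by
  induction j with
  | zero => simp
  | succ j ih =>
    have hne : -w - (j + 1 : ℕ) ≠ 0 := fun h ↦ hw j (by push_cast at h; linear_combination -h)
    have hΓ := Complex.Gamma_add_one _ hne
    rw [show -w - (j + 1 : ℕ) + 1 = -w - j by push_cast; ring] at hΓ
    rw [← ih, hΓ, ascPochhammer_succ_eval]
    push_cast
    ring

theorem Q2_eq_ascPochhammer_mul (s : ℂ) (j : ℕ) :
    Q2 j s = (ascPochhammer ℂ j).eval (1 / 2 + s) * (ascPochhammer ℂ j).eval (1 / 2 - s) := by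
  rw [Q2, ascPochhammer_eval_eq_prod, ascPochhammer_eval_eq_prod, ← prod_mul_distrib]
  exact prod_congr rfl fun k _ ↦ by ring

theorem Q2_div_factorial_mul_barnes_neg (s L : ℂ) (hw : ∀ m : ℕ, 1 + w ≠ -m) (j : ℕ) :
    (-1) ^ j * Q2 j s / j.factorial * barnes s L j (-w) =
      ordinaryHypergeometricCoefficient (1 / 2 + s) (1 / 2 - s) (1 + w) j * barnes s L 0 (-w) := by
  have hasc := ascPochhammer_eval_ne_zero hw j
  rw [barnes, barnes, Nat.cast_zero, sub_zero, ← Gamma_neg_sub_natCast_mul_ascPochhammer hw j,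
    Q2_eq_ascPochhammer_mul, ordinaryHypergeometricCoefficient]
  field_simp

theorem riemannZeta_one_sub_of_one_lt_re (hw : 1 < w.re) :
    riemannZeta (1 - w) =
      2 * (2 * π) ^ (-w) * Complex.Gamma w * Complex.cos (π * w / 2) * riemannZeta w :=
  riemannZeta_one_sub (ne_neg_natCast_of_re_pos (by linarith)) (by rintro rfl; simp at hw)

theorem two_mul_cos_mul_cos_half (s w : ℂ) :
    2 * Complex.cos (π * (1 / 2 + w + s) / 2) * Complex.cos (π * (1 / 2 + w - s) / 2) =
      Complex.cos (π * s) - Complex.sin (π * w) := by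
  have hsin : Complex.sin (π * w) =
      -Complex.cos (π * (1 / 2 + w + s) / 2 + π * (1 / 2 + w - s) / 2) := by
    rw [← Complex.cos_pi_div_two_sub, ← Complex.cos_pi_sub]
    congr 1
    ring
  rw [hsin, show π * s = π * (1 / 2 + w + s) / 2 - π * (1 / 2 + w - s) / 2 by ring,
    Complex.cos_add, Complex.cos_sub]
  ring

theorem zetaProd_neg_right (hw : 1 / 2 + |s.re| < w.re) :
    zetaProd s (-w) = 2 * (2 * π) ^ (-(1 + 2 * w)) *
      (Complex.Gamma (1 / 2 + w - s) * Complex.Gamma (1 / 2 + w + s)) *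
        (Complex.cos (π * s) - Complex.sin (π * w)) * zetaProd s w := by
  have hadd := riemannZeta_one_sub_of_one_lt_re (w := 1 / 2 + w + s)
    (by simp; linarith [neg_abs_le s.re])
  have hsub := riemannZeta_one_sub_of_one_lt_re (w := 1 / 2 + w - s)
    (by simp; linarith [le_abs_self s.re])
  have hpow : (2 * π : ℂ) ^ (-(1 + 2 * w)) =
      (2 * π) ^ (-(1 / 2 + w + s)) * (2 * π) ^ (-(1 / 2 + w - s)) := by
    rw [← Complex.cpow_add _ _ (by simp [Real.pi_ne_zero])]
    ring_nf
  rw [zetaProd, zetaProd, show 1 / 2 + -w - s = 1 - (1 / 2 + w + s) by ring,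
    show 1 / 2 + -w + s = 1 - (1 / 2 + w - s) by ring, hadd, hsub, ← two_mul_cos_mul_cos_half, hpow]
  ring

theorem sin_pi_mul_le_norm_sin (hc₀ : 0 ≤ c) (hc₁ : c ≤ 1) (t : ℝ) :
    Real.sin (π * c) ≤ ‖Complex.sin (π * (c + t * I))‖ := by
  have hsin : 0 ≤ Real.sin (π * c) :=
    Real.sin_nonneg_of_nonneg_of_le_pi (by positivity) (by nlinarith [Real.pi_pos])
  have hre : (Complex.sin (π * (c + t * I))).re = Real.sin (π * c) * Real.cosh (π * t) := by
    rw [mul_add, ← mul_assoc, ← ofReal_mul, ← ofReal_mul, Complex.sin_add_mul_I]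
    simp [-ofReal_mul, Complex.sin_ofReal_re]
  calc Real.sin (π * c) ≤ Real.sin (π * c) * Real.cosh (π * t) :=
        le_mul_of_one_le_right hsin (Real.one_le_cosh _)
    _ ≤ _ := hre ▸ re_le_norm _

theorem tsum_ordinaryHypergeometricCoefficient_mul_Gamma
    (hw : 1 / 2 + |s.re| < w.re) :
    (∑' j, ordinaryHypergeometricCoefficient (1 / 2 + s) (1 / 2 - s) (1 + w) j) *
        (Complex.Gamma (1 / 2 + w - s) * Complex.Gamma (1 / 2 + w + s)) * Complex.Gamma (-w) =
      -(π / Complex.sin (π * w)) * Complex.Gamma w := by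
  have hw₀ : 0 < w.re := by linarith [abs_nonneg s.re]
  have hGauss := (hasSum_ordinaryHypergeometricCoefficient (a := 1 / 2 + s) (b := 1 / 2 - s)
    (c := 1 + w) (ne_neg_natCast_of_re_pos (by simp; linarith)) (by ring_nf; exact hw₀)).tsum_eq
  rw [show 1 + w - (1 / 2 + s) - (1 / 2 - s) = w by ring,
    show 1 + w - (1 / 2 + s) = 1 / 2 + w - s by ring,
    show 1 + w - (1 / 2 - s) = 1 / 2 + w + s by ring] at hGauss
  have hadd : Complex.Gamma (1 / 2 + w + s) ≠ 0 :=
    Complex.Gamma_ne_zero_of_re_pos (by simp; linarith [neg_abs_le s.re])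
  have hsub : Complex.Gamma (1 / 2 + w - s) ≠ 0 :=
    Complex.Gamma_ne_zero_of_re_pos (by simp; linarith [le_abs_self s.re])
  have hreflect : Complex.Gamma (-w) * Complex.Gamma (1 + w) = -(π / Complex.sin (π * w)) := by
    simpa [div_neg] using Complex.Gamma_mul_Gamma_one_sub (-w)
  rw [hGauss, div_mul_cancel₀ _ (mul_ne_zero hsub hadd), ← hreflect]
  ring

-- `L + L' = 2 log 2π` is what turns the factor `e^{wL}` into `e^{-wL'}`.
theorem tsum_ordinaryHypergeometricCoefficient_mul_barnes_neg
    (hLL' : L + L' = 2 * Complex.log (2 * π)) (hw : 1 / 2 + |s.re| < w.re) (hw₁ : w.re < 1) :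
    (∑' j, ordinaryHypergeometricCoefficient (1 / 2 + s) (1 / 2 - s) (1 + w) j) *
        barnes s L 0 (-w) =
      (1 - Complex.cos (π * s) / Complex.sin (π * w)) * barnes s L' 0 w := by
  have hw₀ : 0 < w.re := by linarith [abs_nonneg s.re]
  have h2π : (2 * π : ℂ) ≠ 0 := by simp [Real.pi_ne_zero]
  have hexp : (2 * π : ℂ) ^ (-(1 + 2 * w)) * cexp (w * L) =
      (2 * π : ℂ)⁻¹ * cexp (-w * L') := by
    rw [Complex.cpow_def_of_ne_zero h2π, ← Complex.exp_add, ← Complex.cpow_neg_one,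
      Complex.cpow_def_of_ne_zero h2π, ← Complex.exp_add]
    congr 1
    linear_combination w * hLL'
  have hsin := sin_pi_mul_ne_zero (mem_integerComplement_of_re_mem_Ioo ⟨hw₀, hw₁⟩)
  rw [barnes, barnes, zetaProd_neg_right hw, neg_neg, Nat.cast_zero, sub_zero, sub_zero]
  calc _ = -(π / Complex.sin (π * w)) * Complex.Gamma w * 2 *
        ((2 * π : ℂ) ^ (-(1 + 2 * w)) * cexp (w * L)) *
          (Complex.cos (π * s) - Complex.sin (π * w)) * zetaProd s w := by
        rw [← tsum_ordinaryHypergeometricCoefficient_mul_Gamma hw]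
        ring
    _ = _ := by
        rw [hexp]
        field_simp
        ring

theorem verticalIntegral_neg (f : ℂ → ℂ) (c : ℝ) :
    verticalIntegral f (-c) = verticalIntegral (fun w ↦ f (-w)) c := by
  rw [verticalIntegral, verticalIntegral, ← integral_neg_eq_self]
  simp only [ofReal_neg, neg_mul, neg_add]

theorem verticalIntegrable_barnes_comp_neg (hL : |L.im| < π / 2) (hc : 1 / 2 + |s.re| < c)
    (hc₁ : c < 1) (j : ℕ) : VerticalIntegrable (fun w ↦ barnes s L j (-w)) c := by
  simpa only [VerticalIntegrable, ofReal_neg, neg_mul, neg_add] using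
    (verticalIntegrable_barnes_neg hL hc hc₁ j).comp_neg

theorem summable_integral_norm_Q2_mul_barnes (hL : |L.im| < π / 2) (hc : 1 / 2 + |s.re| < c)
    (hc₁ : c < 1) :
    Summable fun j : ℕ ↦
      ∫ t : ℝ, ‖(-1) ^ j * Q2 j s / j.factorial * barnes s L j (-(c + t * I))‖ := by
  have hc₀ : 0 < c := by linarith [abs_nonneg s.re]
  have hint := verticalIntegrable_barnes_comp_neg hL hc hc₁
  have hsum : Summable fun j ↦
      ‖ordinaryHypergeometricCoefficient (1 / 2 + s) (1 / 2 - s) (1 + c : ℝ) j‖ :=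
    summable_norm_ordinaryHypergeometricCoefficient (by simp; linarith)
  refine (hsum.mul_right (∫ t : ℝ, ‖barnes s L 0 (-(c + t * I))‖)).of_nonneg_of_le
    (fun j ↦ integral_nonneg fun t ↦ norm_nonneg _) fun j ↦ ?_
  rw [← integral_const_mul]
  refine integral_mono ((hint j).const_mul _).norm ((hint 0).norm.const_mul _) fun t ↦ ?_
  have hne := ne_neg_natCast_of_re_pos (w := 1 + (c + t * I)) (by simp; linarith)
  beta_reduce
  rw [Q2_div_factorial_mul_barnes_neg s L hne, norm_mul]
  gcongr
  exact norm_ordinaryHypergeometricCoefficient_le (by linarith) (by simp) j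

theorem hasSum_Q2_mul_verticalIntegral_barnes (hL : |L.im| < π / 2)
    (hLL' : L + L' = 2 * Complex.log (2 * π)) (hc : 1 / 2 + |s.re| < c) (hc₁ : c < 1) :
    HasSum (fun j ↦ (-1) ^ j * Q2 j s / j.factorial * verticalIntegral (barnes s L j) (-c))
      (verticalIntegral
        (fun w ↦ (1 - Complex.cos (π * s) / Complex.sin (π * w)) * barnes s L' 0 w) c) := by
  have hc₀ : 0 < c := by linarith [abs_nonneg s.re]
  have htsum (t : ℝ) :
      ∑' j : ℕ, (-1) ^ j * Q2 j s / j.factorial * barnes s L j (-(c + t * I)) =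
        (1 - Complex.cos (π * s) / Complex.sin (π * (c + t * I))) * barnes s L' 0 (c + t * I) := by
    have hne := ne_neg_natCast_of_re_pos (w := 1 + (c + t * I)) (by simp; linarith)
    rw [← tsum_ordinaryHypergeometricCoefficient_mul_barnes_neg hLL' (by simpa using hc) (by simpa),
      ← tsum_mul_right]
    exact tsum_congr fun j ↦ Q2_div_factorial_mul_barnes_neg s L hne j
  have h := (hasSum_integral_of_summable_integral_norm
    (fun j ↦ (verticalIntegrable_barnes_comp_neg hL hc hc₁ j).const_mul _)
    (summable_integral_norm_Q2_mul_barnes hL hc hc₁)).mul_left (1 / (2 * π) : ℂ)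
  simp only [htsum, integral_const_mul] at h
  refine h.congr_fun fun j ↦ ?_
  rw [verticalIntegral_neg, verticalIntegral, mul_left_comm]

end Reflection

section UpperHalfPlane

variable {s z : ℂ} {c : ℝ}

theorem ne_zero_of_im_pos (hz : 0 < z.im) : z ≠ 0 := by
  rintro rfl
  simp at hz

theorem im_neg_one_div_pos (hz : 0 < z.im) : 0 < (-1 / z).im := by
  have := normSq_pos.2 (ne_zero_of_im_pos hz)
  rw [neg_div, one_div, neg_im, inv_im]
  field_simp
  linarith

theorem neg_two_pi_I_mul_neg_one_div (z : ℂ) : -(2 * π * I * (-1 / z)) = 2 * π * I / z := by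
  ring

theorem neg_two_pi_I_mul_ne_zero (hz : 0 < z.im) : -(2 * π * I * z) ≠ 0 :=
  neg_ne_zero.2 (mul_ne_zero two_pi_I_ne_zero (ne_zero_of_im_pos hz))

theorem abs_im_log_neg_two_pi_I_mul_lt (hz : 0 < z.im) :
    |(Complex.log (-(2 * π * I * z))).im| < π / 2 := by
  rw [Complex.log_im, Complex.abs_arg_lt_pi_div_two_iff]
  left
  simpa using mul_pos Real.two_pi_pos hz

theorem log_neg_two_pi_I_mul (hz : 0 < z.im) :
    Complex.log (-(2 * π * I * z)) = Real.log (2 * π) + Complex.log z - π * I / 2 := by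
  have hz₀ := ne_zero_of_im_pos hz
  have hI : Complex.log (-I * z) = Complex.log (-I) + Complex.log z := by
    refine Complex.log_mul (neg_ne_zero.2 I_ne_zero) hz₀ ?_
    rw [Complex.arg_neg_I]
    have := Complex.arg_nonneg_iff.2 hz.le
    have := Complex.arg_le_pi z
    constructor <;> linarith [Real.pi_pos]
  rw [show -(2 * π * I * z) = ((2 * π : ℝ) : ℂ) * (-I * z) by push_cast; ring,
    Complex.log_ofReal_mul Real.two_pi_pos (mul_ne_zero (neg_ne_zero.2 I_ne_zero) hz₀), hI,
    Complex.log_neg_I]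
  ring

theorem log_two_pi_I_div (hz : 0 < z.im) :
    Complex.log (2 * π * I / z) = Real.log (2 * π) + π * I / 2 - Complex.log z := by
  have hz₀ := ne_zero_of_im_pos hz
  have harg : Complex.arg z ≠ π := fun h ↦ hz.ne' (Complex.arg_eq_pi_iff.1 h).2
  have hI : Complex.log (I * z⁻¹) = Complex.log I - Complex.log z := by
    rw [sub_eq_add_neg, ← Complex.log_inv _ harg]
    refine Complex.log_mul I_ne_zero (inv_ne_zero hz₀) ?_
    rw [Complex.arg_I, Complex.arg_inv, if_neg harg]
    have := Complex.arg_nonneg_iff.2 hz.le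
    have := Complex.arg_le_pi z
    constructor <;> linarith [Real.pi_pos]
  rw [show 2 * π * I / z = ((2 * π : ℝ) : ℂ) * (I * z⁻¹) by push_cast; ring,
    Complex.log_ofReal_mul Real.two_pi_pos (mul_ne_zero I_ne_zero (inv_ne_zero hz₀)), hI,
    Complex.log_I]
  ring

theorem log_two_pi_I_div_add_log_neg_two_pi_I_mul (hz : 0 < z.im) :
    Complex.log (2 * π * I / z) + Complex.log (-(2 * π * I * z)) =
      2 * Complex.log (2 * π) := by
  rw [log_two_pi_I_div hz, log_neg_two_pi_I_mul hz, Complex.ofReal_log Real.two_pi_pos.le]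
  push_cast
  ring

theorem pow1_eq_cexp (hz : 0 < z.im) (w : ℂ) :
    pow1 z w = cexp (w * Complex.log (2 * π * I / z)) := by
  rw [pow1, log_two_pi_I_div hz]

theorem pow2_eq_cexp (hz : 0 < z.im) (w : ℂ) :
    pow2 z w = cexp (-w * Complex.log (-(2 * π * I * z))) := by
  rw [pow2, log_neg_two_pi_I_mul hz]

theorem Sfun_eq_verticalIntegral (j : ℕ) (hz : 0 < z.im) (hc : 1 / 2 + |s.re| < c) :
    Sfun j s z = 1 / (2 * π * I) ^ j * verticalIntegral (fun w ↦ Complex.Gamma w *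
      cexp (-w * Complex.log (-(2 * π * I * z))) * zetaProd s (w + j)) c := by
  have hL (w : ℂ) (hw : w.re = c) := lseriesHasSum_sigmaCoeff (s := s) j (hw ▸ hc)
  have h := hasSum_cexp_neg_mul_verticalIntegral (abs_im_log_neg_two_pi_I_mul_lt hz)
    (by linarith [abs_nonneg s.re]) (sigmaCoeff_zero s j) (hL c rfl).LSeriesSummable
  rw [Complex.exp_log (neg_two_pi_I_mul_ne_zero hz)] at h
  rw [Sfun]
  congr 1
  calc ∑' n : ℕ, cexp (2 * π * I * n * z) *
        (∑ d ∈ n.divisors, (d : ℂ) ^ (2 * s)) * (n : ℂ) ^ (-(s + 1 / 2 + j))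
      = ∑' n : ℕ, cexp (-(n * -(2 * π * I * z))) * sigmaCoeff s j n :=
        tsum_congr fun n ↦ by rw [sigmaCoeff, mul_assoc]; ring_nf
    _ = _ := h.tsum_eq
    _ = _ := by
        rw [verticalIntegral, verticalIntegral]
        congr 2 with t
        rw [(hL (c + t * I) (by simp)).LSeries_eq]

theorem verticalIntegral_barnes_add_natCast (s L : ℂ) (j : ℕ) (c : ℝ) :
    verticalIntegral (barnes s L j) (c + j) = cexp (-j * L) * verticalIntegral (fun w ↦
      Complex.Gamma w * cexp (-w * L) * zetaProd s (w + j)) c := by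
  rw [verticalIntegral, verticalIntegral, mul_left_comm, ← integral_const_mul (cexp _)]
  congr 2 with t
  rw [barnes, show ((c + j : ℝ) : ℂ) + t * I = c + t * I + j by push_cast; ring,
    add_sub_cancel_right, neg_add, add_mul, Complex.exp_add]
  ring

theorem cexp_neg_natCast_mul_log_two_pi_I_div (hz : z ≠ 0) (j : ℕ) :
    cexp (-j * Complex.log (2 * π * I / z)) = (z / (2 * π * I)) ^ j := by
  rw [neg_mul, ← mul_neg, Complex.exp_nat_mul, Complex.exp_neg,
    Complex.exp_log (div_ne_zero two_pi_I_ne_zero hz), inv_div]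

theorem pow_mul_Sfun_neg_one_div (j : ℕ) (hz : 0 < z.im) (hc : 1 / 2 + |s.re| < c) :
    z ^ j * Sfun j s (-1 / z) =
      verticalIntegral (barnes s (Complex.log (2 * π * I / z)) j) (c + j) := by
  rw [Sfun_eq_verticalIntegral j (im_neg_one_div_pos hz) hc, neg_two_pi_I_mul_neg_one_div,
    verticalIntegral_barnes_add_natCast,
    cexp_neg_natCast_mul_log_two_pi_I_div (ne_zero_of_im_pos hz), div_pow]
  ring

theorem Sfun_zero_eq_verticalIntegral (hz : 0 < z.im) (hc : 1 / 2 + |s.re| < c) :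
    Sfun 0 s z = verticalIntegral (barnes s (Complex.log (-(2 * π * I * z))) 0) c := by
  simpa [Sfun_eq_verticalIntegral 0 hz hc] using
    (verticalIntegral_barnes_add_natCast s (Complex.log (-(2 * π * I * z))) 0 c).symm

theorem verticalIntegral_barnes_neg (j : ℕ) (hs₀ : s ≠ 0) (hz : 0 < z.im)
    (hc : 1 / 2 + |s.re| < c) (hc₁ : c < 1) :
    verticalIntegral (barnes s (Complex.log (2 * π * I / z)) j) (-c) =
      z ^ j * Sfun j s (-1 / z)
        - (∑ ℓ ∈ range (j + 1), (-1) ^ (j - ℓ) / (j - ℓ).factorial *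
            riemannZeta (1 / 2 + ℓ + s) * riemannZeta (1 / 2 + ℓ - s) * (z / (2 * π * I)) ^ ℓ)
        - Complex.Gamma (1 / 2 + s - j) * riemannZeta (1 + 2 * s) * pow1 z (-(1 / 2) - s)
        - Complex.Gamma (1 / 2 - s - j) * riemannZeta (1 - 2 * s) * pow1 z (-(1 / 2) + s) := by
  have hL := abs_im_log_neg_two_pi_I_mul_lt (im_neg_one_div_pos hz)
  rw [neg_two_pi_I_mul_neg_one_div] at hL
  have hshift := verticalIntegral_barnes_sub hs₀ hL hc hc₁ j
  simp only [cexp_neg_natCast_mul_log_two_pi_I_div (ne_zero_of_im_pos hz), zetaProd] at hshift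
  rw [pow_mul_Sfun_neg_one_div j hz hc, pow1_eq_cexp hz, pow1_eq_cexp hz, sub_eq_add_neg (-(1 / 2)),
    ← neg_add, show -(1 / 2) + s = -(1 / 2 - s) by ring]
  have hsum : ∑ ℓ ∈ range (j + 1), (-1 : ℂ) ^ (j - ℓ) / (j - ℓ).factorial *
        riemannZeta (1 / 2 + ℓ + s) * riemannZeta (1 / 2 + ℓ - s) * (z / (2 * π * I)) ^ ℓ =
      ∑ ℓ ∈ range (j + 1), (-1 : ℂ) ^ (j - ℓ) / (j - ℓ).factorial *
        ((z / (2 * π * I)) ^ ℓ *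
          (riemannZeta (1 / 2 + ℓ - s) * riemannZeta (1 / 2 + ℓ + s))) :=
    sum_congr rfl fun ℓ _ ↦ by ring
  rw [hsum]
  linear_combination -hshift

theorem Zigrand_eq_mul_barnes (hz : 0 < z.im) (s : ℂ) (δ t : ℝ) :
    Zigrand s z δ t = Complex.cos (π * s) / Complex.sin (π * ((1 / 2 + δ : ℝ) + t * I)) *
      barnes s (Complex.log (-(2 * π * I * z))) 0 ((1 / 2 + δ : ℝ) + t * I) := by
  rw [Zigrand, barnes, zetaProd, pow2_eq_cexp hz, Nat.cast_zero, sub_zero]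
  ring

theorem integrable_Zigrand {δ : ℝ} (hz : 0 < z.im) (hδ : |s.re| < δ) (hδ₁ : δ < 1 / 2) :
    Integrable (Zigrand s z δ) := by
  have hδ₀ : 0 < δ := (abs_nonneg _).trans_lt hδ
  have hbarnes : VerticalIntegrable (barnes s (Complex.log (-(2 * π * I * z))) 0) (1 / 2 + δ) := by
    simpa using verticalIntegrable_barnes_add_natCast (abs_im_log_neg_two_pi_I_mul_lt hz)
      (add_lt_add_right hδ (1 / 2)) 0
  have hsin (t : ℝ) : Complex.sin (π * ((1 / 2 + δ : ℝ) + t * I)) ≠ 0 :=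
    sin_pi_mul_ne_zero (mem_integerComplement_of_re_mem_Ioo (by simp; constructor <;> linarith))
  have hcont : Continuous fun t : ℝ ↦
      Complex.cos (π * s) / Complex.sin (π * ((1 / 2 + δ : ℝ) + t * I)) :=
    .div (by fun_prop) (by fun_prop) hsin
  have hpos : 0 < Real.sin (π * (1 / 2 + δ)) := by
    refine Real.sin_pos_of_pos_of_lt_pi (by positivity) ?_
    nlinarith [Real.pi_pos]
  have hbound (t : ℝ) : ‖Complex.cos (π * s) / Complex.sin (π * ((1 / 2 + δ : ℝ) + t * I))‖ ≤
      ‖Complex.cos (π * s)‖ / Real.sin (π * (1 / 2 + δ)) := by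
    rw [norm_div]
    gcongr
    exact sin_pi_mul_le_norm_sin (by linarith) (by linarith) t
  exact (hbarnes.bdd_mul hcont.aestronglyMeasurable (.of_forall hbound)).congr
    (.of_forall fun t ↦ (Zigrand_eq_mul_barnes hz s δ t).symm)

theorem verticalIntegral_one_sub_cos_div_sin_mul_barnes {δ : ℝ} (hz : 0 < z.im)
    (hδ : |s.re| < δ) (hδ₁ : δ < 1 / 2) :
    verticalIntegral (fun w ↦ (1 - Complex.cos (π * s) / Complex.sin (π * w)) *
        barnes s (Complex.log (-(2 * π * I * z))) 0 w) (1 / 2 + δ) =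
      Sfun 0 s z - 1 / (2 * π) * ∫ t : ℝ, Zigrand s z δ t := by
  have hbarnes : VerticalIntegrable (barnes s (Complex.log (-(2 * π * I * z))) 0) (1 / 2 + δ) := by
    simpa using verticalIntegrable_barnes_add_natCast (abs_im_log_neg_two_pi_I_mul_lt hz)
      (add_lt_add_right hδ (1 / 2)) 0
  rw [Sfun_zero_eq_verticalIntegral hz (c := 1 / 2 + δ) (by linarith), verticalIntegral,
    verticalIntegral, ← mul_sub, ← integral_sub hbarnes (integrable_Zigrand hz hδ hδ₁)]
  simp only [Zigrand_eq_mul_barnes hz, sub_mul, one_mul]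

end UpperHalfPlane

/-- Lemma 3 of the paper: the exact reciprocity formula for `S_0(s,z)`. -/
theorem S_reciprocity (s z : ℂ) (hs : |s.re| < 1/2) (hs0 : s ≠ 0) (hz : 0 < z.im)
    (δ : ℝ) (hδ1 : |s.re| < δ) (hδ2 : δ < 1/2) :
    Integrable (Zigrand s z δ) ∧
    Summable (fun j : ℕ =>
      ((-1:ℂ))^j * Q2 j s / (Nat.factorial j : ℂ) *
        (z^j * Sfun j s (-1/z)
          - (∑ ℓ ∈ Finset.range (j+1),
              ((-1:ℂ))^(j-ℓ) / (Nat.factorial (j-ℓ) : ℂ) *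
                riemannZeta (1/2 + ℓ + s) * riemannZeta (1/2 + ℓ - s) *
                (z/(2 * π * Complex.I))^ℓ)
          - Complex.Gamma (1/2 + s - j) * riemannZeta (1 + 2*s) * pow1 z (-(1/2) - s)
          - Complex.Gamma (1/2 - s - j) * riemannZeta (1 - 2*s) * pow1 z (-(1/2) + s))) ∧
    Sfun 0 s z =
      (∑' j : ℕ,
        ((-1:ℂ))^j * Q2 j s / (Nat.factorial j : ℂ) *
          (z^j * Sfun j s (-1/z)
            - (∑ ℓ ∈ Finset.range (j+1),
                ((-1:ℂ))^(j-ℓ) / (Nat.factorial (j-ℓ) : ℂ) *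
                  riemannZeta (1/2 + ℓ + s) * riemannZeta (1/2 + ℓ - s) *
                  (z/(2 * π * Complex.I))^ℓ)
            - Complex.Gamma (1/2 + s - j) * riemannZeta (1 + 2*s) * pow1 z (-(1/2) - s)
            - Complex.Gamma (1/2 - s - j) * riemannZeta (1 - 2*s) * pow1 z (-(1/2) + s)))
      + (1/(2*π)) * ∫ t : ℝ, Zigrand s z δ t := by
  have hc : 1 / 2 + |s.re| < 1 / 2 + δ := by linarith
  have hc₁ : 1 / 2 + δ < 1 := by linarith
  have hL : |(Complex.log (2 * π * I / z)).im| < π / 2 := by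
    simpa only [neg_two_pi_I_mul_neg_one_div] using
      abs_im_log_neg_two_pi_I_mul_lt (im_neg_one_div_pos hz)
  have h := hasSum_Q2_mul_verticalIntegral_barnes hL
    (log_two_pi_I_div_add_log_neg_two_pi_I_mul hz) hc hc₁
  simp only [verticalIntegral_barnes_neg _ hs0 hz hc hc₁,
    verticalIntegral_one_sub_cos_div_sin_mul_barnes hz hδ1 hδ2] at h
  exact ⟨integrable_Zigrand hz hδ1 hδ2, h.summable, by rw [h.tsum_eq, sub_add_cancel]⟩
end
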